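/- arXiv:1507.03099 — 2 statements merged into one kernel-verified Lean document; each statement's English description precedes it below -/
import Mathlib

section
/- For every integer n ≥ 0, B_3(n) = ∑_{d | n+1, d ≡ 1 (mod 3)} ((n+1)/d)² − ∑_{d | n+1, d ≡ 2 (mod 3)} ((n+1)/d)², where both sums range over positive divisors d of n+1 in the indicated residue class modulo 3. -/
/-- The hook length of the cell `(i, j)` in a Young diagram `μ`:
arm length + leg length + 1. -/
def YoungDiagram.hookLength (μ : YoungDiagram) (i j : ℕ) : ℕ :=
  μ.rowLen i + μ.colLen j - i - j - 1

/-- A Young diagram (equivalently, a partition) is a 3-core if none of its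
hook numbers is divisible by 3. -/
def YoungDiagram.IsThreeCore (μ : YoungDiagram) : Prop :=
  ∀ c ∈ μ.cells, ¬ (3 ∣ μ.hookLength c.1 c.2)

/-- `a3 n` is the number of 3-core partitions of `n`. -/
noncomputable def a3 (n : ℕ) : ℕ :=
  Nat.card {μ : YoungDiagram // μ.card = n ∧ μ.IsThreeCore}

/-- `A3 n` is the number of partition pairs of `n` in which each partition is a 3-core. -/
noncomputable def A3 (n : ℕ) : ℕ :=
  Nat.card {p : YoungDiagram × YoungDiagram //
    p.1.card + p.2.card = n ∧ p.1.IsThreeCore ∧ p.2.IsThreeCore}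

/-- `B3 n` is the number of partition triples of `n` in which each partition is a 3-core. -/
noncomputable def B3 (n : ℕ) : ℕ :=
  Nat.card {p : YoungDiagram × YoungDiagram × YoungDiagram //
    p.1.card + p.2.1.card + p.2.2.card = n ∧
    p.1.IsThreeCore ∧ p.2.1.IsThreeCore ∧ p.2.2.IsThreeCore}

/-!
The beads of a Young diagram `μ` are the integers `μ.rowLen i - i - 1`, and a hook of length `h`
moves a bead down by `h` onto a gap. Hence `t`-cores are the bead sets of `t` flush runners, one for
each residue class, and they correspond to integer vectors of length `t` with sum `0`. For `t = 3`
the weight becomes the norm form of the Eisenstein integers, so 3-cores of `n` are the elements of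
norm `3 n + 1` congruent to `1` modulo `3`. Unique factorization counts them as
`charSum (3 n + 1) = ∑ χ(d)` over the divisors `d` of `3 n + 1`, with `χ` the quadratic character
modulo `3`.

Pairs and triples of 3-cores are then convolutions of `charSum`. They are evaluated with Liouville's
elementary method: the sum of a function over the solutions of `a x + b y = M` is compared with its
transform under `((a, x), (b, y)) ↦ ((a - b, x), (b, x + y))`, and only the diagonals `a = b` and
`x = y` survive. One choice of function shows that there are `σ(3 n + 2) / 3` pairs of 3-cores, and
a second one evaluates the convolution of this with `charSum`.
-/

namespace CoreTriples

local notation "χ" => quadraticChar (ZMod 3)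

open Finset

section Beads

/-- The `i`-th bead of the Maya diagram (beta-set) of `μ`, normalised so that the empty diagram has
the beads `-1, -2, -3, …`. -/
def bead (μ : YoungDiagram) (i : ℕ) : ℤ := μ.rowLen i - i - 1

/-- The Maya diagram of `μ`: the set of all its beads. -/
def beadSet (μ : YoungDiagram) : Set ℤ := Set.range (bead μ)

/-- `μ` is a `t`-core: none of its hook lengths is divisible by `t`. -/
def IsCore (t : ℕ) (μ : YoungDiagram) : Prop :=
  ∀ c ∈ μ.cells, ¬ t ∣ μ.hookLength c.1 c.2

variable {μ ν : YoungDiagram} {b : ℕ → ℤ} {N h i : ℕ}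

theorem bead_strictAnti (μ : YoungDiagram) : StrictAnti (bead μ) := by
  refine strictAnti_nat_of_succ_lt fun i ↦ ?_
  have := μ.rowLen_anti i (i + 1) i.le_succ
  simp only [bead]
  lia

theorem bead_eq_of_colLen_le (hN : μ.colLen 0 ≤ N) (hi : N ≤ i) : bead μ i = -i - 1 := by
  have hnot : (i, 0) ∉ μ := by
    rw [YoungDiagram.mem_iff_lt_colLen]
    lia
  rw [YoungDiagram.mem_iff_lt_rowLen] at hnot
  simp only [bead]
  lia

theorem mem_beadSet_of_lt {x : ℤ} (hN : μ.colLen 0 ≤ N) (hx : x < -N) : x ∈ beadSet μ :=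
  ⟨(-x - 1).toNat, by rw [bead_eq_of_colLen_le hN (by lia)]; lia⟩

theorem beadSet_bddAbove (μ : YoungDiagram) : BddAbove (beadSet μ) :=
  ⟨bead μ 0, by rintro _ ⟨i, rfl⟩; exact (bead_strictAnti μ).antitone i.zero_le⟩

theorem eq_of_bead_eq (hb : bead μ = bead ν) : μ = ν := by
  ext ⟨i, j⟩
  have hi : μ.rowLen i = ν.rowLen i := by
    have := congrFun hb i
    simp only [bead] at this
    lia
  rw [YoungDiagram.mem_cells, YoungDiagram.mem_cells, YoungDiagram.mem_iff_lt_rowLen,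
    YoungDiagram.mem_iff_lt_rowLen, hi]

theorem beadSet_injective : Function.Injective beadSet := by
  intro μ ν hμν
  have hneg : ∀ ξ : YoungDiagram, StrictMono fun i ↦ -bead ξ i := fun ξ i j hij ↦
    neg_lt_neg (bead_strictAnti ξ hij)
  have hrange : ∀ ξ : YoungDiagram, Set.range (fun i ↦ -bead ξ i) = -beadSet ξ := fun ξ ↦ by
    rw [beadSet, ← Set.image_neg_eq_neg, ← Set.range_comp, Function.comp_def]
  have := (StrictMono.range_inj (hneg μ) (hneg ν)).1 (by rw [hrange, hrange, hμν])
  exact eq_of_bead_eq (funext fun i ↦ neg_injective (congrFun this i))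

/-- The cell realising the hook of length `h` lies above the gap `bead μ i - h`: its leg ends at
the last row whose bead exceeds the gap. -/
theorem exists_hookLength_eq_of_notMem_beadSet (hgap : bead μ i - h ∉ beadSet μ) :
    ∃ j, (i, j) ∈ μ ∧ μ.hookLength i j = h := by
  obtain ⟨w, hw⟩ : ∃ w, w = bead μ i - h := ⟨_, rfl⟩
  rw [← hw] at hgap
  have hex : ∃ k, bead μ k < w :=
    ⟨μ.colLen 0 + w.natAbs, by rw [bead_eq_of_colLen_le le_rfl (by lia)]; lia⟩
  obtain ⟨k, hk, hmin⟩ : ∃ k, bead μ k < w ∧ ∀ m < k, w < bead μ m := by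
    classical
    refine ⟨Nat.find hex, Nat.find_spec hex, fun m hm ↦ ?_⟩
    exact lt_of_le_of_ne (not_lt.1 (Nat.find_min hex hm)) fun hm ↦ hgap ⟨m, hm.symm⟩
  have hik : i < k := by
    by_contra! hki
    have := (bead_strictAnti μ).antitone hki
    lia
  have hlast := hmin (k - 1) (by lia)
  simp only [bead] at hk hlast hw
  obtain ⟨j, hj⟩ : ∃ j : ℕ, (j : ℤ) = w + k := ⟨(w + k).toNat, by lia⟩
  have hmem : (k - 1, j) ∈ μ := YoungDiagram.mem_iff_lt_rowLen.2 (by lia)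
  have hnotMem : (k, j) ∉ μ := by rw [YoungDiagram.mem_iff_lt_rowLen]; lia
  rw [YoungDiagram.mem_iff_lt_colLen] at hmem hnotMem
  refine ⟨j, YoungDiagram.mem_iff_lt_colLen.2 (by lia), ?_⟩
  simp only [YoungDiagram.hookLength]
  lia

theorem bead_sub_hookLength_notMem_beadSet {j : ℕ} (hij : (i, j) ∈ μ) :
    bead μ i - μ.hookLength i j ∉ beadSet μ := by
  rintro ⟨k, hk⟩
  have hcol := YoungDiagram.mem_iff_lt_colLen.1 hij
  have hrow := YoungDiagram.mem_iff_lt_rowLen.1 hij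
  have hkj : k < μ.colLen j ↔ j < μ.rowLen k := by
    rw [← YoungDiagram.mem_iff_lt_colLen, YoungDiagram.mem_iff_lt_rowLen]
  simp only [bead, YoungDiagram.hookLength] at hk
  lia

theorem isCore_iff {t : ℕ} : IsCore t μ ↔ ∀ x ∈ beadSet μ, x - t ∈ beadSet μ := by
  constructor
  · rintro hμ _ ⟨i, rfl⟩
    by_contra hgap
    obtain ⟨j, hij, hook⟩ := exists_hookLength_eq_of_notMem_beadSet hgap
    exact hμ (i, j) hij (hook ▸ dvd_rfl)
  · rintro hclosed ⟨i, j⟩ hij ⟨m, hm⟩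
    have hiter : ∀ m : ℕ, bead μ i - t * m ∈ beadSet μ := by
      intro m
      induction m with
      | zero => exact ⟨i, by simp⟩
      | succ m ih => simpa [mul_add, sub_sub] using hclosed _ ih
    refine bead_sub_hookLength_notMem_beadSet hij ?_
    rw [show μ.hookLength i j = t * m from hm, Nat.cast_mul]
    exact hiter m

theorem card_eq_sum_rowLen (hN : μ.colLen 0 ≤ N) : μ.card = ∑ i ∈ range N, μ.rowLen i := by
  have hmaps : Set.MapsTo Prod.fst (μ.cells : Set (ℕ × ℕ)) (range N) := by
    rintro ⟨i, j⟩ hij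
    have := YoungDiagram.mem_iff_lt_colLen.1 (μ.up_left_mem le_rfl j.zero_le hij)
    simp only [coe_range, Set.mem_Iio]
    lia
  rw [YoungDiagram.card, card_eq_sum_card_fiberwise hmaps]
  exact sum_congr rfl fun i _ ↦ (μ.rowLen_eq_card).symm

theorem sum_range_two_mul_add_one (n : ℕ) : ∑ i ∈ range n, (2 * i + 1 : ℤ) = n ^ 2 := by
  induction n with
  | zero => simp
  | succ n ih => rw [sum_range_succ, ih]; push_cast; ring

theorem sum_two_mul_bead_add_one (hN : μ.colLen 0 ≤ N) :
    ∑ i ∈ range N, (2 * bead μ i + 1) = 2 * μ.card - N ^ 2 := by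
  rw [card_eq_sum_rowLen hN, ← sum_range_two_mul_add_one, Nat.cast_sum, mul_sum, ← sum_sub_distrib]
  exact sum_congr rfl fun i _ ↦ by rw [bead]; ring

theorem exists_bead_eq (hb : StrictAnti b) (hN : ∀ i, N ≤ i → b i = -i - 1) :
    ∃ μ, bead μ = b := by
  have hanti : Antitone fun i : ℕ ↦ b i + i + 1 := antitone_nat_of_succ_le fun i ↦ by
    have := hb i.lt_succ_self
    push_cast
    lia
  have hrow : ∀ {i j : ℕ}, j < b i + i + 1 → i < N := fun {i j} hj ↦ by
    by_contra! hi
    have := hN i hi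
    lia
  let μ : YoungDiagram :=
    { cells := (range N).sigma (fun i ↦ range (b i + i + 1).toNat) |>.map
        (Equiv.sigmaEquivProd ℕ ℕ).toEmbedding
      isLowerSet := by
        rintro ⟨i, j⟩ ⟨i', j'⟩ ⟨hi, hj⟩ hij
        have := hanti hi
        simp only [coe_map, Function.Embedding.coeFn_mk, Equiv.sigmaEquivProd_apply, coe_sigma,
          coe_range, Set.mem_image, Set.mem_sigma_iff, Set.mem_Iio, Int.lt_toNat, Prod.mk.injEq,
          Sigma.exists, exists_eq_right_right, exists_eq_right] at hi hj hij ⊢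
        lia }
  have hmem : ∀ {i j : ℕ}, (i, j) ∈ μ ↔ j < b i + i + 1 := fun {i j} ↦ by
    rw [← YoungDiagram.mem_cells]
    have := @hrow i j
    simp only [μ, mem_map_equiv, Equiv.sigmaEquivProd_symm_apply, mem_sigma, mem_range,
      Int.lt_toNat]
    lia
  refine ⟨μ, funext fun i ↦ ?_⟩
  have hnonneg : 0 ≤ b i + i + 1 := by
    have := hanti (le_max_left i N)
    have := hN _ (le_max_right i N)
    simp only at *
    lia
  have hlt : ∀ j, j < μ.rowLen i ↔ j < b i + i + 1 := fun j ↦ by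
    rw [← hmem, YoungDiagram.mem_iff_lt_rowLen]
  have := hlt (μ.rowLen i)
  have := hlt (b i + i + 1).toNat
  simp only [bead]
  lia

theorem exists_strictAnti_range_eq {S : Set ℤ} {F : Finset ℤ}
    (hF : ∀ x, x ∈ F ↔ x ∈ S ∧ -N ≤ x) (hcard : #F = N) (hS : ∀ x < -(N : ℤ), x ∈ S) :
    ∃ b : ℕ → ℤ, StrictAnti b ∧ (∀ i, N ≤ i → b i = -i - 1) ∧ Set.range b = S := by
  obtain ⟨e, he⟩ : ∃ e : Fin N ↪o ℤ, Set.range e = F :=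
    ⟨F.orderEmbOfFin hcard, F.range_orderEmbOfFin hcard⟩
  have hmem : ∀ k, e k ∈ S ∧ -N ≤ e k := fun k ↦ by
    rw [← hF, ← mem_coe, ← he]
    exact Set.mem_range_self k
  obtain ⟨b, hlt, hge⟩ : ∃ b : ℕ → ℤ, (∀ k, b (Fin.rev k) = e k) ∧ ∀ i, N ≤ i → b i = -i - 1 :=
    ⟨fun i ↦ if hi : i < N then e (Fin.rev ⟨i, hi⟩) else -i - 1,
      fun k ↦ (dif_pos (Fin.rev k).is_lt).trans (by rw [Fin.eta, Fin.rev_rev]),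
      fun i hi ↦ dif_neg hi.not_gt⟩
  have hrev : ∀ {i} (hi : i < N), b i = e (Fin.rev ⟨i, hi⟩) := fun hi ↦ by simp [← hlt]
  refine ⟨b, strictAnti_nat_of_succ_lt fun i ↦ ?_, hge, Set.ext fun x ↦ ⟨?_, fun hx ↦ ?_⟩⟩
  · rcases lt_or_ge i N with hi | hi
    · rcases lt_or_ge (i + 1) N with hi' | hi'
      · rw [hrev hi, hrev hi']
        exact e.strictMono (Fin.rev_lt_rev.2 (Fin.mk_lt_mk.2 i.lt_succ_self))
      · rw [hrev hi, hge _ hi']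
        have := (hmem (Fin.rev ⟨i, hi⟩)).2
        lia
    · rw [hge i hi, hge (i + 1) (by lia)]
      lia
  · rintro ⟨i, rfl⟩
    rcases lt_or_ge i N with hi | hi
    · exact hrev hi ▸ (hmem _).1
    · exact hS _ (by rw [hge i hi]; lia)
  · rcases lt_or_ge x (-N) with hxN | hxN
    · exact ⟨(-x - 1).toNat, by rw [hge _ (by lia)]; lia⟩
    · obtain ⟨k, rfl⟩ : x ∈ Set.range e := by rw [he]; exact (hF x).2 ⟨hx, hxN⟩
      exact ⟨_, hlt k⟩

theorem exists_beadSet_eq {S : Set ℤ} {F : Finset ℤ} (hF : ∀ x, x ∈ F ↔ x ∈ S ∧ -N ≤ x)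
    (hcard : #F = N) (hS : ∀ x < -(N : ℤ), x ∈ S) : ∃ μ, beadSet μ = S := by
  obtain ⟨b, hb, hge, hrange⟩ := exists_strictAnti_range_eq hF hcard hS
  obtain ⟨μ, rfl⟩ := exists_bead_eq hb hge
  exact ⟨μ, hrange⟩

end Beads

section Abacus

theorem exists_eq_Iio_of_isLowerSet {S : Set ℤ} (hS : IsLowerSet S) (hne : S.Nonempty)
    (hbdd : BddAbove S) : ∃ c, S = Set.Iio c := by
  refine ⟨sSup S + 1, Set.ext fun k ↦ ⟨fun hk ↦ ?_, fun hk ↦ ?_⟩⟩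
  · exact Int.lt_add_one_of_le (le_csSup hbdd hk)
  · exact hS (Int.le_of_lt_add_one hk) (Int.csSup_mem hne hbdd)

theorem sum_Ico_two_mul_add_one {a b : ℤ} (hab : a ≤ b) :
    ∑ k ∈ Ico a b, (2 * k + 1) = b ^ 2 - a ^ 2 := by
  induction b, hab using Int.leInduction with
  | base => simp
  | succ b hab ih =>
    rw [← insert_Ico_right_eq_Ico_add_one hab, sum_insert right_notMem_Ico, ih]
    ring

variable {t : ℕ}

theorem neg_mul_le_mul_add_iff {K k : ℤ} {r : Fin t} : -(t * K) ≤ k * t + r ↔ -K ≤ k := by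
  have hr : (r : ℤ) < t := mod_cast r.is_lt
  constructor
  · intro h
    by_contra! hk
    nlinarith
  · intro h
    nlinarith

variable [NeZero t] {μ : YoungDiagram} {c : Fin t → ℤ}

/-- The set of beads of a `t`-runner abacus whose runner `r` (the integers congruent to `r` modulo
`t`) is filled up to, and excluding, position `c r`. -/
def abacus (c : Fin t → ℤ) : Set ℤ :=
  {x | (Int.divModEquiv t x).1 < c (Int.divModEquiv t x).2}

theorem divModEquiv_mul_add (k : ℤ) (r : Fin t) : Int.divModEquiv t (k * t + r) = (k, r) :=
  (Int.divModEquiv t).apply_symm_apply (k, r)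

theorem mul_add_mem_abacus {k : ℤ} {r : Fin t} : k * t + r ∈ abacus c ↔ k < c r := by
  rw [abacus, Set.mem_ofPred_eq, divModEquiv_mul_add]

theorem exists_eq_mul_add (t : ℕ) [NeZero t] (x : ℤ) : ∃ (k : ℤ) (r : Fin t), x = k * t + r :=
  ⟨_, _, ((Int.divModEquiv t).symm_apply_apply x).symm⟩

theorem abacus_injective : Function.Injective (abacus : (Fin t → ℤ) → Set ℤ) := by
  intro c d hcd
  ext r
  refine eq_of_forall_lt_iff fun k ↦ ?_
  rw [← mul_add_mem_abacus, hcd, mul_add_mem_abacus]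

theorem exists_eq_abacus_iff {S : Set ℤ} (hbdd : BddAbove S) {L : ℤ} (hL : ∀ x < L, x ∈ S) :
    (∃ c : Fin t → ℤ, S = abacus c) ↔ ∀ x ∈ S, x - t ∈ S := by
  constructor
  · rintro ⟨c, rfl⟩ x hx
    obtain ⟨k, r, rfl⟩ := exists_eq_mul_add t x
    rw [mul_add_mem_abacus] at hx
    rw [show k * t + r - t = (k - 1) * t + r by ring, mul_add_mem_abacus]
    lia
  · intro hclosed
    have hrunner : ∀ r : Fin t, ∃ c, {k : ℤ | k * t + r ∈ S} = Set.Iio c := by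
      intro r
      have ht : (0 : ℤ) < t := mod_cast Nat.pos_of_neZero t
      refine exists_eq_Iio_of_isLowerSet ?_ ⟨-(L.natAbs + t), ?_⟩ ?_
      · refine isLowerSet_setOfPred.2 (antitone_int_of_succ_le fun k hk ↦ ?_)
        simpa [add_mul, add_sub_right_comm] using hclosed _ hk
      · refine hL _ ?_
        have := r.is_lt
        nlinarith [le_abs_self L, neg_abs_le L, Int.natCast_natAbs L]
      · obtain ⟨B, hB⟩ := hbdd
        refine ⟨B.natAbs, fun k hk ↦ ?_⟩
        have := hB hk
        nlinarith [le_abs_self B, neg_abs_le B, Int.natCast_natAbs B]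
    choose c hc using hrunner
    refine ⟨c, Set.ext fun x ↦ ?_⟩
    obtain ⟨k, r, rfl⟩ := exists_eq_mul_add t x
    rw [mul_add_mem_abacus]
    exact Set.ext_iff.1 (hc r) k

theorem isCore_iff_exists_beadSet_eq_abacus :
    IsCore t μ ↔ ∃ c : Fin t → ℤ, beadSet μ = abacus c := by
  rw [isCore_iff, exists_eq_abacus_iff (beadSet_bddAbove μ) fun _ ↦ mem_beadSet_of_lt le_rfl]

/-- The beads of `abacus c` in the window `[-t * K, ∞)`. -/
noncomputable def abacusWindow (c : Fin t → ℤ) (K : ℕ) : Finset ℤ :=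
  (univ.sigma fun r ↦ Ico (-K : ℤ) (c r)).map
    ((Equiv.sigmaEquivProd _ _).trans <|
      (Equiv.prodComm _ _).trans (Int.divModEquiv t).symm).toEmbedding

theorem sum_abacusWindow {M : Type*} [AddCommMonoid M] (c : Fin t → ℤ) (K : ℕ) (f : ℤ → M) :
    ∑ x ∈ abacusWindow c K, f x = ∑ r, ∑ k ∈ Ico (-K : ℤ) (c r), f (k * t + r) := by
  rw [abacusWindow, sum_map, sum_sigma]
  rfl

theorem mem_abacusWindow {K : ℕ} {x : ℤ} :
    x ∈ abacusWindow c K ↔ x ∈ abacus c ∧ -((t * K : ℕ) : ℤ) ≤ x := by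
  obtain ⟨k, r, rfl⟩ := exists_eq_mul_add t x
  rw [Nat.cast_mul, neg_mul_le_mul_add_iff, mul_add_mem_abacus, abacusWindow, mem_map_equiv,
    mem_sigma, Equiv.symm_trans_apply, Equiv.symm_trans_apply, Equiv.symm_symm,
    divModEquiv_mul_add]
  simp [and_comm]

theorem card_abacusWindow {K : ℕ} (hK : ∀ r, -K ≤ c r) :
    (#(abacusWindow c K) : ℤ) = ∑ r, c r + (t * K : ℕ) := by
  have hrunner : ∀ r, ∑ _k ∈ Ico (-K : ℤ) (c r), (1 : ℤ) = c r + K := fun r ↦ by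
    rw [sum_const, nsmul_one, Int.card_Ico_of_le _ _ (hK r), sub_neg_eq_add]
  rw [cast_card, sum_abacusWindow, sum_congr rfl fun r _ ↦ hrunner r, sum_add_distrib]
  simp

theorem sum_abacusWindow_two_mul_add_one {K : ℕ} (hK : ∀ r, -K ≤ c r) (hc : ∑ r, c r = 0) :
    ∑ x ∈ abacusWindow c K, (2 * x + 1) =
      ∑ r, (t * c r ^ 2 + 2 * r * c r) - ((t * K : ℕ) : ℤ) ^ 2 := by
  have hrunner : ∀ r, ∑ k ∈ Ico (-K : ℤ) (c r), (2 * (k * t + r) + 1) =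
      (t * c r ^ 2 + 2 * r * c r) + (1 - t) * c r + K * (2 * r + 1) - t * K * (K + 1) := by
    intro r
    have hterm : ∀ k : ℤ, 2 * (k * t + r) + 1 = t * (2 * k + 1) + (2 * r + 1 - t) := fun k ↦ by
      ring
    have hlen := Int.card_Ico_of_le (-K : ℤ) (c r) (hK r)
    simp only [hterm, sum_add_distrib, ← mul_sum, sum_Ico_two_mul_add_one (hK r), sum_const,
      nsmul_eq_mul, hlen]
    ring
  have hodd : ∑ r : Fin t, (2 * (r : ℤ) + 1) = t ^ 2 := by
    rw [← sum_range_two_mul_add_one, sum_range]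
  rw [sum_abacusWindow]
  simp only [hrunner, sum_sub_distrib, sum_add_distrib, ← mul_sum, hc, hodd, sum_const, card_univ,
    Fintype.card_fin, nsmul_eq_mul]
  push_cast
  ring

theorem abacusWindow_eq_image_bead {K : ℕ} (hμ : beadSet μ = abacus c)
    (hK : μ.colLen 0 ≤ t * K) : abacusWindow c K = (range (t * K)).image (bead μ) := by
  ext x
  rw [mem_abacusWindow, ← hμ, mem_image]
  constructor
  · rintro ⟨⟨i, rfl⟩, hi⟩
    refine ⟨i, mem_range.2 ?_, rfl⟩
    by_contra! hKi
    rw [bead_eq_of_colLen_le hK hKi] at hi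
    lia
  · rintro ⟨i, hi, rfl⟩
    refine ⟨⟨i, rfl⟩, ?_⟩
    have := mem_range.1 hi
    simp only [bead]
    lia

theorem neg_le_of_beadSet_eq_abacus {K : ℕ} (hμ : beadSet μ = abacus c)
    (hK : μ.colLen 0 ≤ t * K) (r : Fin t) : -K ≤ c r := by
  have hmem : (-K - 1 : ℤ) * t + r ∈ abacus c := by
    rw [← hμ]
    refine mem_beadSet_of_lt hK ?_
    rw [Nat.cast_mul, ← not_le, neg_mul_le_mul_add_iff]
    lia
  rw [mul_add_mem_abacus] at hmem
  lia

theorem colLen_le_mul (μ : YoungDiagram) : μ.colLen 0 ≤ t * μ.colLen 0 :=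
  Nat.le_mul_of_pos_left _ (Nat.pos_of_neZero t)

theorem sum_eq_zero_of_beadSet_eq_abacus (hμ : beadSet μ = abacus c) : ∑ r, c r = 0 := by
  have hK := colLen_le_mul (t := t) μ
  have hcard := card_abacusWindow (neg_le_of_beadSet_eq_abacus hμ hK)
  rw [abacusWindow_eq_image_bead hμ hK, card_image_of_injective _ (bead_strictAnti μ).injective,
    card_range] at hcard
  lia

theorem two_mul_card_of_beadSet_eq_abacus (hμ : beadSet μ = abacus c) :
    2 * (μ.card : ℤ) = ∑ r, (t * c r ^ 2 + 2 * r * c r) := by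
  have hK := colLen_le_mul (t := t) μ
  have hsum := sum_abacusWindow_two_mul_add_one (neg_le_of_beadSet_eq_abacus hμ hK)
    (sum_eq_zero_of_beadSet_eq_abacus hμ)
  rw [abacusWindow_eq_image_bead hμ hK, sum_image (bead_strictAnti μ).injective.injOn,
    sum_two_mul_bead_add_one hK] at hsum
  lia

theorem exists_beadSet_eq_abacus (hc : ∑ r, c r = 0) : ∃ μ, beadSet μ = abacus c := by
  let K := ∑ r, (c r).natAbs
  have hK : ∀ r, -K ≤ c r := fun r ↦ by
    have : (c r).natAbs ≤ K :=
      single_le_sum_of_canonicallyOrdered (f := fun r ↦ (c r).natAbs) (mem_univ r)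
    lia
  refine exists_beadSet_eq (N := t * K) (fun x ↦ mem_abacusWindow) ?_ fun x hx ↦ ?_
  · have := card_abacusWindow hK
    rw [hc] at this
    lia
  · obtain ⟨k, r, rfl⟩ := exists_eq_mul_add t x
    rw [Nat.cast_mul, ← not_le, neg_mul_le_mul_add_iff, not_le] at hx
    exact mul_add_mem_abacus.2 (hx.trans_le (hK r))

theorem card_isCore_eq (t : ℕ) [NeZero t] (n : ℕ) :
    Nat.card {μ : YoungDiagram // μ.card = n ∧ IsCore t μ} =
      Nat.card {c : Fin t → ℤ //
        ∑ r, c r = 0 ∧ ∑ r, (t * c r ^ 2 + 2 * r * c r) = 2 * (n : ℤ)} := by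
  have hex : ∀ μ : {μ : YoungDiagram // μ.card = n ∧ IsCore t μ},
      ∃ c : Fin t → ℤ, beadSet μ = abacus c := fun μ ↦
    isCore_iff_exists_beadSet_eq_abacus.1 μ.2.2
  choose c hc using hex
  refine Nat.card_congr (Equiv.ofBijective (fun μ ↦ ⟨c μ, sum_eq_zero_of_beadSet_eq_abacus (hc μ),
    by rw [← two_mul_card_of_beadSet_eq_abacus (hc μ), μ.2.1]⟩) ⟨fun μ ν hμν ↦ ?_, fun d ↦ ?_⟩)
  · refine Subtype.ext (beadSet_injective ?_)
    rw [hc, hc, (Subtype.mk.inj hμν :)]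
  · obtain ⟨d, hd, hn⟩ := d
    obtain ⟨μ, hμ⟩ := exists_beadSet_eq_abacus hd
    have hcard := two_mul_card_of_beadSet_eq_abacus hμ
    refine ⟨⟨μ, by lia, isCore_iff_exists_beadSet_eq_abacus.2 ⟨d, hμ⟩⟩, ?_⟩
    exact Subtype.ext (abacus_injective ((hc _).symm.trans hμ))

end Abacus

section Eisenstein

open QuadraticAlgebra

/-- The Eisenstein integers `ℤ[ω]`, where `ω = e ^ (π i / 3)` satisfies `ω ^ 2 = ω - 1`. -/
abbrev Eisenstein : Type := QuadraticAlgebra ℤ (-1) 1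

theorem norm_eq_sq_add_mul_add_sq (z : Eisenstein) :
    norm z = z.re ^ 2 + z.re * z.im + z.im ^ 2 := by
  rw [norm_def]
  ring

theorem four_mul_norm (z : Eisenstein) : 4 * norm z = (2 * z.re + z.im) ^ 2 + 3 * z.im ^ 2 := by
  rw [norm_eq_sq_add_mul_add_sq]
  ring

theorem norm_nonneg (z : Eisenstein) : 0 ≤ norm z := by
  nlinarith [four_mul_norm z, sq_nonneg (2 * z.re + z.im), sq_nonneg z.im]

theorem norm_eq_zero_iff {z : Eisenstein} : norm z = 0 ↔ z = 0 := by
  refine ⟨fun hz ↦ ?_, fun hz ↦ hz ▸ norm_zero⟩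
  have him : z.im = 0 := by nlinarith [four_mul_norm z, sq_nonneg (2 * z.re + z.im)]
  have hre : z.re = 0 := by nlinarith [four_mul_norm z]
  exact QuadraticAlgebra.ext hre him

theorem norm_pos {z : Eisenstein} (hz : z ≠ 0) : 0 < norm z :=
  (norm_nonneg z).lt_of_ne' (mt norm_eq_zero_iff.1 hz)

theorem exists_two_mul_abs_sub_mul_le (x : ℤ) {n : ℤ} (hn : 0 < n) :
    ∃ q, 2 * |x - q * n| ≤ n := by
  refine ⟨(2 * x + n) / (2 * n), ?_⟩
  have hmod := Int.emod_nonneg (2 * x + n) (by lia : 2 * n ≠ 0)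
  have hlt := Int.emod_lt_of_pos (2 * x + n) (by lia : 0 < 2 * n)
  have hdiv := Int.mul_ediv_add_emod (2 * x + n) (2 * n)
  rcases abs_cases (x - (2 * x + n) / (2 * n) * n) with h | h <;> nlinarith

/-- Rounding both coordinates of `a / b` to the nearest integer leaves a remainder of norm at most
`3 / 4` of the norm of `b`. -/
theorem exists_norm_sub_mul_lt (a : Eisenstein) {b : Eisenstein} (hb : b ≠ 0) :
    ∃ q, norm (a - b * q) < norm b := by
  have hpos := norm_pos hb
  obtain ⟨u, hu⟩ := exists_two_mul_abs_sub_mul_le (a * star b).re hpos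
  obtain ⟨v, hv⟩ := exists_two_mul_abs_sub_mul_le (a * star b).im hpos
  refine ⟨⟨u, v⟩, ?_⟩
  have hrem : (a - b * ⟨u, v⟩) * star b =
      ⟨(a * star b).re - u * norm b, (a * star b).im - v * norm b⟩ := by
    rw [sub_mul, mul_right_comm, ← algebraMap_norm_eq_mul_star]
    ext <;> simp [mul_comm]
  have hnorm := norm_eq_sq_add_mul_add_sq ((a - b * ⟨u, v⟩) * star b)
  rw [map_mul, QuadraticAlgebra.norm_star, hrem] at hnorm
  generalize (a * star b).re - u * norm b = x at hu hnorm
  generalize (a * star b).im - v * norm b = y at hv hnorm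
  have hx : x ^ 2 * 4 ≤ norm b ^ 2 := by nlinarith [sq_abs x, abs_nonneg x]
  have hy : y ^ 2 * 4 ≤ norm b ^ 2 := by nlinarith [sq_abs y, abs_nonneg y]
  nlinarith [sq_nonneg (x - y)]

noncomputable instance : EuclideanDomain Eisenstein where
  quotient a b := open Classical in
    if hb : b = 0 then 0 else (exists_norm_sub_mul_lt a hb).choose
  quotient_zero a := dif_pos rfl
  remainder a b := open Classical in
    a - b * if hb : b = 0 then 0 else (exists_norm_sub_mul_lt a hb).choose
  quotient_mul_add_remainder_eq a b := add_sub_cancel _ _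
  r := InvImage (· < ·) fun z ↦ (norm z).toNat
  r_wellFounded := InvImage.wf _ wellFounded_lt
  remainder_lt a b hb := by
    simp only [InvImage, dif_neg hb]
    exact (Int.toNat_lt_toNat (norm_pos hb)).2 (exists_norm_sub_mul_lt a hb).choose_spec
  mul_left_not_lt a b hb := by
    have := norm_nonneg a
    have := norm_pos hb
    simp only [InvImage, map_mul, not_lt]
    exact Int.toNat_le_toNat (by nlinarith)

variable {z w : Eisenstein} {p m : ℕ}

theorem natCast_dvd_iff : (p : Eisenstein) ∣ z ↔ (p : ℤ) ∣ z.re ∧ (p : ℤ) ∣ z.im :=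
  algebraMap_dvd_iff (r := (p : ℤ))

theorem natCast_dvd_star_iff : (p : Eisenstein) ∣ star z ↔ (p : Eisenstein) ∣ z := by
  simp only [natCast_dvd_iff, re_star, im_star, one_mul, dvd_neg]
  exact and_congr_left fun him ↦ dvd_add_left him

theorem mul_star_eq_natCast (hz : norm z = m) : z * star z = m := by
  rw [← algebraMap_norm_eq_mul_star, hz]
  rfl

theorem prime_of_norm_eq (hp : p.Prime) (hz : norm z = p) : Prime z := by
  have : IsLocalHom (norm : Eisenstein →* ℤ) := ⟨fun _ ↦ isUnit_iff_norm_isUnit.2⟩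
  refine (Irreducible.of_map (f := (norm : Eisenstein →* ℤ)) ?_).prime
  rw [hz]
  exact (Nat.prime_iff_prime_int.1 hp).irreducible

theorem natAbs_norm_eq_one_iff : (norm z).natAbs = 1 ↔ IsUnit z := by
  rw [isUnit_iff_norm_isUnit, Int.isUnit_iff_natAbs_eq]

theorem exists_norm_eq_or_prime (hp : p.Prime) :
    (∃ π : Eisenstein, norm π = p) ∨ Prime (p : Eisenstein) := by
  rw [or_iff_not_imp_left]
  intro hnorm
  refine Irreducible.prime ⟨fun hunit ↦ ?_, fun a b hab ↦ ?_⟩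
  · rw [← natAbs_norm_eq_one_iff, QuadraticAlgebra.norm_natCast, Int.natAbs_pow,
      Int.natAbs_natCast] at hunit
    exact hp.ne_one (by simpa using hunit)
  · by_contra! hunits
    rw [← natAbs_norm_eq_one_iff, ← natAbs_norm_eq_one_iff] at hunits
    have hmul : (norm a).natAbs * (norm b).natAbs = p ^ 2 := by
      rw [← Int.natAbs_mul, ← map_mul, ← hab, QuadraticAlgebra.norm_natCast, Int.natAbs_pow,
        Int.natAbs_natCast]
    have ha := ((Nat.Prime.mul_eq_prime_sq_iff hp hunits.1 hunits.2).1 hmul).1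
    exact hnorm ⟨a, by have := norm_nonneg a; lia⟩

theorem natCast_dvd_of_prime (hp : Prime (p : Eisenstein)) (hz : (p : ℤ) ∣ norm z) :
    (p : Eisenstein) ∣ z := by
  have hdvd : (p : Eisenstein) ∣ z * star z := by
    rw [← algebraMap_norm_eq_mul_star]
    exact map_dvd (algebraMap ℤ Eisenstein) hz
  exact (hp.dvd_or_dvd hdvd).elim id natCast_dvd_star_iff.1

theorem exists_dvd_sq_add_add_one (hp : p.Prime) (hp3 : p % 3 = 1) :
    ∃ k : ℤ, (p : ℤ) ∣ k ^ 2 + k + 1 := by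
  have := Fact.mk hp
  have := Fact.mk Nat.prime_three
  obtain ⟨u, hu⟩ := exists_prime_orderOf_dvd_card (G := (ZMod p)ˣ) 3 (by
    rw [ZMod.card_units]
    lia)
  have hprim : IsPrimitiveRoot (u : ZMod p) 3 :=
    IsPrimitiveRoot.coe_units_iff.2 (hu ▸ IsPrimitiveRoot.orderOf u)
  obtain ⟨k, hk⟩ := ZMod.intCast_surjective (u : ZMod p)
  refine ⟨k, (ZMod.intCast_zmod_eq_zero_iff_dvd _ p).1 ?_⟩
  have hsum := hprim.geom_sum_eq_zero (by norm_num)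
  rw [Finset.sum_range_succ, Finset.sum_range_succ, Finset.sum_range_one, ← hk] at hsum
  push_cast
  linear_combination hsum

theorem exists_norm_eq (hp : p.Prime) (hp3 : p % 3 = 1) : ∃ π : Eisenstein, norm π = p := by
  refine (exists_norm_eq_or_prime hp).resolve_right fun hprime ↦ ?_
  obtain ⟨k, hk⟩ := exists_dvd_sq_add_add_one hp hp3
  have hdvd : (p : Eisenstein) ∣ ⟨k, 1⟩ := natCast_dvd_of_prime hprime (by
    simpa [norm_eq_sq_add_mul_add_sq] using hk)
  exact (Nat.prime_iff_prime_int.1 hp).not_dvd_one (natCast_dvd_iff.1 hdvd).2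

theorem norm_cast_zmod_three_ne_two (z : Eisenstein) : ((norm z : ℤ) : ZMod 3) ≠ 2 := by
  have hforms : ∀ x y : ZMod 3, x ^ 2 + x * y + y ^ 2 ≠ 2 := by decide
  rw [norm_eq_sq_add_mul_add_sq]
  push_cast
  exact hforms _ _

/-- The usual normalisation of Eisenstein integers up to units: `z ≡ 1 (mod 3)`. -/
def IsPrimary (z : Eisenstein) : Prop := (3 : Eisenstein) ∣ z - 1

theorem isPrimary_iff : IsPrimary z ↔ 3 ∣ z.re - 1 ∧ 3 ∣ z.im := by
  rw [IsPrimary]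
  simpa using natCast_dvd_iff (p := 3) (z := z - 1)

theorem IsPrimary.mul_iff (hw : IsPrimary w) : IsPrimary (w * z) ↔ IsPrimary z := by
  have hsub : w * z - 1 = (w - 1) * z + (z - 1) := by ring
  rw [IsPrimary, hsub, dvd_add_right (hw.mul_right z), IsPrimary]

theorem IsPrimary.star (hz : IsPrimary z) : IsPrimary (star z) := by
  rw [isPrimary_iff] at *
  simp only [re_star, im_star]
  lia

theorem IsPrimary.eq_one (hz : IsPrimary z) (hnorm : norm z = 1) : z = 1 := by
  rw [isPrimary_iff] at hz
  have hfour := four_mul_norm z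
  have him : z.im = 0 := by
    obtain ⟨k, hk⟩ := hz.2
    have hk0 : k = 0 := by
      rw [hnorm, hk] at hfour
      rw [← sq_eq_zero_iff]
      nlinarith [sq_nonneg (2 * z.re + 3 * k), sq_nonneg k]
    rw [hk, hk0, mul_zero]
  have hre : z.re = 1 := by
    have hsq : z.re ^ 2 = 1 := by
      rw [him] at hfour
      lia
    rcases sq_eq_one_iff.1 hsq with h | h <;> lia
  exact QuadraticAlgebra.ext hre him

theorem exists_isUnit_isPrimary_mul (hz : ¬ 3 ∣ norm z) : ∃ u, IsUnit u ∧ IsPrimary (u * z) := by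
  have hsub : ¬ 3 ∣ z.re - z.im := fun ⟨k, hk⟩ ↦ hz ⟨z.re * z.im + 3 * k ^ 2, by
    rw [norm_eq_sq_add_mul_add_sq, eq_add_of_sub_eq hk]
    ring⟩
  obtain ⟨u, hu, hprim⟩ : ∃ u : Eisenstein, norm u = 1 ∧ IsPrimary (u * z) := by
    simp only [isPrimary_iff, re_mul, im_mul]
    obtain h | h | h | h | h | h :
      (3 ∣ z.re - 1 ∧ 3 ∣ z.im) ∨ (3 ∣ z.re + 1 ∧ 3 ∣ z.im) ∨ (3 ∣ z.re ∧ 3 ∣ z.im - 1) ∨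
      (3 ∣ z.re ∧ 3 ∣ z.im + 1) ∨ (3 ∣ z.re - 1 ∧ 3 ∣ z.im + 1) ∨
      (3 ∣ z.re + 1 ∧ 3 ∣ z.im - 1) := by lia
    · exact ⟨⟨1, 0⟩, by simp [norm_def], by lia⟩
    · exact ⟨⟨-1, 0⟩, by simp [norm_def], by lia⟩
    · exact ⟨⟨1, -1⟩, by simp [norm_def], by lia⟩
    · exact ⟨⟨-1, 1⟩, by simp [norm_def], by lia⟩
    · exact ⟨⟨0, 1⟩, by simp [norm_def], by lia⟩
    · exact ⟨⟨0, -1⟩, by simp [norm_def], by lia⟩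
  exact ⟨u, isUnit_iff_norm_isUnit.2 (by rw [hu]; exact isUnit_one), hprim⟩

theorem exists_isPrimary_norm_eq (hp : p.Prime) (hp3 : p % 3 = 1) :
    ∃ π, IsPrimary π ∧ norm π = p := by
  obtain ⟨π, hπ⟩ := exists_norm_eq hp hp3
  obtain ⟨u, hu, hprim⟩ := exists_isUnit_isPrimary_mul (z := π) (by lia)
  refine ⟨u * π, hprim, ?_⟩
  have := natAbs_norm_eq_one_iff.2 hu
  rw [map_mul, hπ, show norm u = 1 by have := norm_nonneg u; lia, one_mul]

theorem natCast_dvd_of_dvd_of_star_dvd (hp : p.Prime) {π : Eisenstein} (hπ : IsPrimary π)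
    (hnorm : norm π = p) (hdvd : π ∣ z) (hstar : star π ∣ z) : (p : Eisenstein) ∣ z := by
  have hmul := mul_star_eq_natCast hnorm
  obtain ⟨w, rfl⟩ := hdvd
  have hprime : Prime (star π) := prime_of_norm_eq hp ((QuadraticAlgebra.norm_star π).trans hnorm)
  refine (hprime.dvd_or_dvd hstar).elim (fun hassoc ↦ ?_) fun hw ↦ hmul ▸ mul_dvd_mul_left π hw
  obtain ⟨v, hv⟩ := hassoc
  have hv1 : v = 1 := by
    refine (hπ.star.mul_iff.1 (hv ▸ hπ)).eq_one ?_
    have := congrArg QuadraticAlgebra.norm hv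
    rw [map_mul, QuadraticAlgebra.norm_star, hnorm] at this
    exact (mul_eq_left₀ (mod_cast hp.ne_zero)).1 this.symm
  have him : π.im = 0 := by
    have := congrArg QuadraticAlgebra.im hv
    rw [hv1, mul_one, im_star] at this
    lia
  rw [norm_eq_sq_add_mul_add_sq, him] at hnorm
  exact absurd ⟨π.re, by linarith⟩ (Nat.prime_iff_prime_int.1 hp).not_isSquare

/-- The primary Eisenstein integers of norm `m`. -/
def primarySet (m : ℕ) : Set Eisenstein := {z | IsPrimary z ∧ norm z = m}

theorem primarySet_finite (m : ℕ) : (primarySet m).Finite := by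
  have hIcc := Set.finite_Icc (-(2 * m) : ℤ) (2 * m)
  refine (hIcc.image2 QuadraticAlgebra.mk hIcc).subset fun z hz ↦ ?_
  have hnorm : z.re ^ 2 + z.re * z.im + z.im ^ 2 = m := norm_eq_sq_add_mul_add_sq z ▸ hz.2
  have hre : z.re ^ 2 ≤ 2 * m := by nlinarith [sq_nonneg (z.re + z.im), sq_nonneg z.im]
  have him : z.im ^ 2 ≤ 2 * m := by nlinarith [sq_nonneg (z.re + z.im), sq_nonneg z.re]
  have := Int.natAbs_le_self_sq z.re
  have := Int.natAbs_le_self_sq z.im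
  exact ⟨z.re, ⟨by lia, by lia⟩, z.im, ⟨by lia, by lia⟩, rfl⟩

theorem primarySet_one : primarySet 1 = {1} := by
  ext z
  refine ⟨fun hz ↦ hz.1.eq_one hz.2, ?_⟩
  rintro rfl
  exact ⟨by simp [IsPrimary], by simp⟩

theorem primarySet_inter_dvd {k : ℕ} (hw : w ∈ primarySet k) (hk : k ≠ 0) :
    {z ∈ primarySet (k * m) | w ∣ z} = (w * ·) '' primarySet m := by
  ext z
  constructor
  · rintro ⟨⟨hz, hnorm⟩, v, rfl⟩
    refine ⟨v, ⟨hw.1.mul_iff.1 hz, ?_⟩, rfl⟩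
    rw [map_mul, hw.2, Nat.cast_mul] at hnorm
    exact mul_left_cancel₀ (mod_cast hk) hnorm
  · rintro ⟨v, hv, rfl⟩
    refine ⟨⟨hw.1.mul_iff.2 hv.1, ?_⟩, dvd_mul_right w v⟩
    rw [map_mul, hw.2, hv.2, Nat.cast_mul]

theorem ncard_primarySet_inter_dvd {k : ℕ} (hw : w ∈ primarySet k) (hk : k ≠ 0) :
    {z ∈ primarySet (k * m) | w ∣ z}.ncard = (primarySet m).ncard := by
  have hw0 : w ≠ 0 := by
    rintro rfl
    exact hk (by simpa using hw.2.symm)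
  rw [primarySet_inter_dvd hw hk, Set.ncard_image_of_injective _ (mul_right_injective₀ hw0)]

theorem intCast_quadraticChar_mul_mem_primarySet (hp : (p : ZMod 3) ≠ 0) :
    ((χ p * p : ℤ) : Eisenstein) ∈ primarySet (p ^ 2) := by
  refine ⟨isPrimary_iff.2 ⟨?_, ?_⟩, ?_⟩
  · have hmod : ∀ x : ZMod 3, x ≠ 0 → (χ x : ZMod 3) * x - 1 = 0 := by decide
    rw [← Nat.cast_ofNat, re_intCast, ← ZMod.intCast_zmod_eq_zero_iff_dvd]
    push_cast
    exact hmod p hp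
  · simp
  · have hsq := quadraticChar_sq_one hp
    rw [QuadraticAlgebra.norm_intCast, Int.cast_id, mul_pow, hsq, one_mul, Nat.cast_pow]

theorem ncard_primarySet_inter_natCast_dvd (hp : p.Prime) (hp3 : p ≠ 3) (m : ℕ) :
    {z ∈ primarySet (p * m) | (p : Eisenstein) ∣ z}.ncard =
      if p ∣ m then (primarySet (m / p)).ncard else 0 := by
  have hne : (p : ZMod 3) ≠ 0 := by
    rw [Ne, ZMod.natCast_eq_zero_iff, Nat.prime_dvd_prime_iff_eq Nat.prime_three hp]
    exact hp3.symm
  split_ifs with hpm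
  · obtain ⟨k, rfl⟩ := hpm
    have hassoc : Associated ((χ p * p : ℤ) : Eisenstein) p := by
      have hunit : IsUnit (χ p) := Int.isUnit_iff.2 (quadraticChar_dichotomy hne)
      push_cast
      exact associated_unit_mul_left _ _ (hunit.map (Int.castRingHom Eisenstein))
    rw [Nat.mul_div_cancel_left k hp.pos, ← mul_assoc, ← sq,
      ← ncard_primarySet_inter_dvd (intCast_quadraticChar_mul_mem_primarySet hne)
        (pow_ne_zero 2 hp.ne_zero)]
    simp only [hassoc.dvd_iff_dvd_left]
  · rw [Set.ncard_eq_zero ((primarySet_finite _).sep _), Set.eq_empty_iff_forall_notMem]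
    rintro _ ⟨⟨-, hnorm⟩, v, rfl⟩
    refine hpm (Int.natCast_dvd_natCast.1 ⟨norm v, ?_⟩)
    rw [map_mul, QuadraticAlgebra.norm_natCast, Nat.cast_mul, sq, mul_assoc] at hnorm
    exact (mul_left_cancel₀ (mod_cast hp.ne_zero) hnorm).symm

theorem primarySet_mul_of_mod_three_eq_two (hp : p.Prime) (hp3 : p % 3 = 2) (m : ℕ) :
    {z ∈ primarySet (p * m) | (p : Eisenstein) ∣ z} = primarySet (p * m) := by
  refine Set.sep_eq_self_iff_mem_true.2 fun z hz ↦ ?_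
  refine natCast_dvd_of_prime ((exists_norm_eq_or_prime hp).resolve_left ?_) ⟨m, mod_cast hz.2⟩
  rintro ⟨π, hπ⟩
  refine norm_cast_zmod_three_ne_two π ?_
  rw [hπ, Int.cast_natCast, ← ZMod.natCast_mod, hp3]
  rfl

theorem ncard_primarySet_mul_of_mod_three_eq_one (hp : p.Prime) (hp3 : p % 3 = 1) (m : ℕ) :
    (primarySet (p * m)).ncard + {z ∈ primarySet (p * m) | (p : Eisenstein) ∣ z}.ncard =
      2 * (primarySet m).ncard := by
  obtain ⟨π, hπ, hnorm⟩ := exists_isPrimary_norm_eq hp hp3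
  have hnorm_star : norm (star π) = p := (QuadraticAlgebra.norm_star π).trans hnorm
  have hmul := mul_star_eq_natCast hnorm
  have hunion : primarySet (p * m) =
      {z ∈ primarySet (p * m) | π ∣ z} ∪ {z ∈ primarySet (p * m) | star π ∣ z} := by
    rw [← Set.sep_or, eq_comm, Set.sep_eq_self_iff_mem_true]
    intro z hz
    have hdvd : π ∣ z * star z := by
      rw [← algebraMap_norm_eq_mul_star, hz.2, Nat.cast_mul, map_mul]
      exact ((dvd_mul_right π (star π)).trans hmul.dvd).mul_right _
    refine ((prime_of_norm_eq hp hnorm).dvd_or_dvd hdvd).imp_right fun h ↦ ?_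
    simpa [starRingEnd_apply] using map_dvd (starRingEnd Eisenstein) h
  have hinter : {z ∈ primarySet (p * m) | (p : Eisenstein) ∣ z} =
      {z ∈ primarySet (p * m) | π ∣ z} ∩ {z ∈ primarySet (p * m) | star π ∣ z} := by
    rw [← Set.sep_and]
    refine Set.ext fun z ↦ and_congr_right fun _ ↦ ⟨fun h ↦ ?_, fun h ↦ ?_⟩
    · rw [← hmul] at h
      exact ⟨dvd_of_mul_right_dvd h, dvd_of_mul_left_dvd h⟩
    · exact natCast_dvd_of_dvd_of_star_dvd hp hπ hnorm h.1 h.2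
  have hfin := primarySet_finite (p * m)
  have hcard := Set.ncard_union_add_ncard_inter {z ∈ primarySet (p * m) | π ∣ z}
    {z ∈ primarySet (p * m) | star π ∣ z} (hfin.sep _) (hfin.sep _)
  rwa [← hunion, ← hinter, ncard_primarySet_inter_dvd ⟨hπ, hnorm⟩ hp.ne_zero,
    ncard_primarySet_inter_dvd ⟨hπ.star, hnorm_star⟩ hp.ne_zero, ← two_mul] at hcard

end Eisenstein

section Recursion

/-- The recursion at the prime `p` satisfied by `n ↦ ∑ d ∈ n.divisors, c d` for a completely
multiplicative `c`. -/
def HeckeRecursion (c f : ℕ → ℤ) (p : ℕ) : Prop :=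
  ∀ m, f (p * m) + c p * (if p ∣ m then f (m / p) else 0) = (1 + c p) * f m

variable {c f g : ℕ → ℤ}

theorem eq_of_heckeRecursion (hone : f 1 = g 1) {n : ℕ} (hn : n ≠ 0)
    (hf : ∀ p, p.Prime → p ∣ n → HeckeRecursion c f p)
    (hg : ∀ p, p.Prime → p ∣ n → HeckeRecursion c g p) : f n = g n := by
  induction n using Nat.strong_induction_on with
  | h n ih =>
    obtain rfl | hn1 := eq_or_ne n 1
    · exact hone
    have hp := Nat.minFac_prime hn1
    obtain ⟨m, hm⟩ := Nat.minFac_dvd n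
    have hm0 : m ≠ 0 := by
      rintro rfl
      exact hn hm
    have heq : ∀ k, k ∣ m → f k = g k := fun k hk ↦ by
      have hkn : k ∣ n := hk.trans ⟨_, hm.trans (mul_comm _ _)⟩
      have hlt : k < n := (Nat.le_of_dvd (Nat.pos_of_ne_zero hm0) hk).trans_lt
        (hm ▸ lt_mul_of_one_lt_left (Nat.pos_of_ne_zero hm0) hp.one_lt)
      exact ih k hlt (ne_zero_of_dvd_ne_zero hm0 hk) (fun p hp hpk ↦ hf p hp (hpk.trans hkn))
        fun p hp hpk ↦ hg p hp (hpk.trans hkn)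
    have hfm := hf _ hp (Nat.minFac_dvd n) m
    have hgm := hg _ hp (Nat.minFac_dvd n) m
    have hquot : (if n.minFac ∣ m then f (m / n.minFac) else 0) =
        if n.minFac ∣ m then g (m / n.minFac) else 0 :=
      if_ctx_congr Iff.rfl (fun h ↦ heq _ (Nat.div_dvd_of_dvd h)) fun _ ↦ rfl
    rw [hquot, heq m dvd_rfl, ← hm] at hfm
    rw [← hm] at hgm
    exact add_right_cancel (hfm.trans hgm.symm)

variable {p m : ℕ}

theorem divisors_mul_eq_union (hp : p.Prime) (m : ℕ) :
    (p * m).divisors = m.divisors ∪ m.divisors.image (p * ·) := by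
  ext d
  simp [Nat.divisors_mul, hp.divisors, Finset.mem_mul]

theorem divisors_inter_image_mul (hp : 0 < p) (m : ℕ) :
    m.divisors ∩ m.divisors.image (p * ·) =
      if p ∣ m then (m / p).divisors.image (p * ·) else ∅ := by
  split_ifs with hpm
  · obtain ⟨k, rfl⟩ := hpm
    rw [Nat.mul_div_cancel_left k hp]
    ext d
    simp only [Finset.mem_inter, Finset.mem_image, Nat.mem_divisors]
    constructor
    · rintro ⟨⟨hdvd, hne⟩, e, -, rfl⟩
      exact ⟨e, ⟨Nat.dvd_of_mul_dvd_mul_left hp hdvd, right_ne_zero_of_mul hne⟩, rfl⟩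
    · rintro ⟨e, ⟨hdvd, hne⟩, rfl⟩
      have hne' := mul_ne_zero hp.ne' hne
      exact ⟨⟨mul_dvd_mul_left p hdvd, hne'⟩, e, ⟨hdvd.mul_left p, hne'⟩, rfl⟩
  · simp only [Finset.eq_empty_iff_forall_notMem, Finset.mem_inter, Finset.mem_image]
    rintro _ ⟨hd, e, -, rfl⟩
    exact hpm (dvd_of_mul_right_dvd (Nat.dvd_of_mem_divisors hd))

theorem heckeRecursion_sum_divisors (hc : ∀ a b, c (a * b) = c a * c b) (hp : p.Prime) :
    HeckeRecursion c (fun n ↦ ∑ d ∈ n.divisors, c d) p := by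
  intro m
  have hinj (s : Set ℕ) : s.InjOn (p * ·) := (mul_right_injective₀ hp.ne_zero).injOn
  have hsum := Finset.sum_union_inter (s₁ := m.divisors) (s₂ := m.divisors.image (p * ·)) (f := c)
  rw [← divisors_mul_eq_union hp, divisors_inter_image_mul hp.pos,
    Finset.sum_image (hinj _)] at hsum
  rw [add_mul, one_mul, Finset.mul_sum]
  simp only [hc] at hsum
  rw [← hsum]
  split_ifs
  · rw [Finset.sum_image (hinj _), Finset.mul_sum]
    simp only [hc]
  · simp

theorem heckeRecursion_ncard_primarySet (hp : p.Prime) (hp3 : p ≠ 3) :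
    HeckeRecursion (fun d ↦ χ d) (fun n ↦ (primarySet n).ncard) p := by
  intro m
  have hdvd := ncard_primarySet_inter_natCast_dvd hp hp3 m
  have hmod : p % 3 = 1 ∨ p % 3 = 2 := by
    have := (Nat.prime_dvd_prime_iff_eq Nat.prime_three hp).not.2 hp3.symm
    lia
  dsimp only
  rcases hmod with hp1 | hp2
  · have hχ : χ p = 1 := by
      rw [← ZMod.natCast_mod, hp1]
      decide
    have hcard := ncard_primarySet_mul_of_mod_three_eq_one hp hp1 m
    rw [hdvd] at hcard
    rw [hχ, one_mul, one_add_one_eq_two]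
    exact_mod_cast hcard
  · have hχ : χ p = -1 := by
      rw [← ZMod.natCast_mod, hp2]
      decide
    rw [primarySet_mul_of_mod_three_eq_two hp hp2] at hdvd
    rw [hχ, hdvd]
    push_cast
    ring

end Recursion

/-- The divisor sum of the nontrivial character modulo 3. -/
def charSum (n : ℕ) : ℤ := ∑ d ∈ n.divisors, χ d

theorem ncard_primarySet {n : ℕ} (hn : ¬ 3 ∣ n) : ((primarySet n).ncard : ℤ) = charSum n := by
  refine eq_of_heckeRecursion (c := fun d ↦ χ d) (f := fun n ↦ ((primarySet n).ncard : ℤ))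
    ?_ ?_ ?_ ?_
  · simp [primarySet_one, charSum]
  · rintro rfl
    exact hn (dvd_zero 3)
  · rintro p hp hpn
    refine heckeRecursion_ncard_primarySet hp ?_
    rintro rfl
    exact hn hpn
  · exact fun p hp _ ↦ heckeRecursion_sum_divisors (fun a b ↦ by rw [Nat.cast_mul, map_mul]) hp

section Liouville

/-- The quadruples of positive integers `((a, x), (b, y))` with `a * x + b * y = M`. -/
def quadruples (M : ℕ) : Finset ((ℕ × ℕ) × ℕ × ℕ) :=
  (antidiagonal M).biUnion fun k ↦ k.1.divisorsAntidiagonal ×ˢ k.2.divisorsAntidiagonal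

variable {M : ℕ}

theorem mem_quadruples {a x b y : ℕ} : ((a, x), (b, y)) ∈ quadruples M ↔
    0 < a ∧ 0 < x ∧ 0 < b ∧ 0 < y ∧ a * x + b * y = M := by
  simp only [quadruples, mem_biUnion, HasAntidiagonal.mem_antidiagonal, mem_product,
    Nat.mem_divisorsAntidiagonal, Prod.exists]
  constructor
  · rintro ⟨_, _, rfl, ⟨rfl, hax⟩, rfl, hby⟩
    rw [mul_ne_zero_iff] at hax hby
    lia
  · rintro ⟨ha, hx, hb, hy, rfl⟩
    exact ⟨_, _, rfl, ⟨rfl, by positivity⟩, rfl, by positivity⟩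

theorem sum_quadruples_mul {R : Type*} [NonUnitalNonAssocSemiring R] (f g : ℕ × ℕ → R) :
    ∑ q ∈ quadruples M, f q.1 * g q.2 = ∑ k ∈ antidiagonal M,
      (∑ d ∈ k.1.divisorsAntidiagonal, f d) * ∑ d ∈ k.2.divisorsAntidiagonal, g d := by
  rw [quadruples, sum_biUnion]
  · simp only [sum_product, sum_mul_sum]
  · intro k _ l _ hkl
    refine disjoint_left.2 fun q hk hl ↦ hkl ?_
    simp only [mem_product, Nat.mem_divisorsAntidiagonal] at hk hl
    exact Prod.ext (hk.1.1.symm.trans hl.1.1) (hk.2.1.symm.trans hl.2.1)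

theorem swap_mem_quadruples {q : (ℕ × ℕ) × ℕ × ℕ} : q.swap ∈ quadruples M ↔ q ∈ quadruples M := by
  obtain ⟨⟨a, x⟩, b, y⟩ := q
  simp only [Prod.swap_prod_mk, mem_quadruples]
  lia

theorem map_swap_mem_quadruples {q : (ℕ × ℕ) × ℕ × ℕ} :
    q.map Prod.swap Prod.swap ∈ quadruples M ↔ q ∈ quadruples M := by
  obtain ⟨⟨a, x⟩, b, y⟩ := q
  simp only [Prod.map_apply, Prod.swap_prod_mk, mem_quadruples, mul_comm x a, mul_comm y b]
  tauto

theorem sum_quadruples_swap {R : Type*} [AddCommMonoid R] (f : (ℕ × ℕ) × ℕ × ℕ → R)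
    (p : (ℕ × ℕ) × ℕ × ℕ → Prop) [DecidablePred p] :
    ∑ q ∈ quadruples M with p q.swap, f q.swap = ∑ q ∈ quadruples M with p q, f q := by
  refine sum_nbij' Prod.swap Prod.swap ?_ ?_ ?_ ?_ ?_ <;>
    simp +contextual [swap_mem_quadruples]

theorem sum_eq_sum_lt_add_sum_eq_add_sum_gt {ι α R : Type*} [LinearOrder α] [AddCommMonoid R]
    (s : Finset ι) (u v : ι → α) (f : ι → R) : ∑ i ∈ s, f i =
      ∑ i ∈ s with u i < v i, f i + ∑ i ∈ s with u i = v i, f i + ∑ i ∈ s with v i < u i, f i := by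
  simp only [sum_filter, ← sum_add_distrib]
  refine sum_congr rfl fun i _ ↦ ?_
  rcases lt_trichotomy (u i) (v i) with h | h | h
  · simp [h, h.ne, h.not_gt]
  · simp [h]
  · simp [h, h.ne', h.not_gt]

/-- The substitution `((a, x), (b, y)) ↦ ((a - b, x), (b, x + y))` behind Liouville's identities. -/
theorem sum_quadruples_shift (F : ℤ → ℤ → ℤ → ℤ → ℤ) :
    ∑ q ∈ quadruples M with q.2.1 < q.1.1, F (q.1.1 - q.2.1) q.1.2 q.2.1 (q.1.2 + q.2.2) =
      ∑ q ∈ quadruples M with q.1.2 < q.2.2, F q.1.1 q.1.2 q.2.1 q.2.2 := by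
  refine sum_nbij' (fun q ↦ ((q.1.1 - q.2.1, q.1.2), (q.2.1, q.1.2 + q.2.2)))
    (fun q ↦ ((q.1.1 + q.2.1, q.1.2), (q.2.1, q.2.2 - q.1.2))) ?_ ?_ ?_ ?_ ?_ <;>
    rintro ⟨⟨a, x⟩, b, y⟩ hq <;> simp only [mem_filter, mem_quadruples] at hq ⊢
  · obtain ⟨⟨-, hx, hb, hy, rfl⟩, hba⟩ := hq
    refine ⟨⟨by lia, hx, hb, by lia, ?_⟩, by lia⟩
    obtain ⟨c, rfl⟩ := Nat.exists_eq_add_of_lt hba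
    rw [show b + c + 1 - b = c + 1 by lia]
    ring
  · obtain ⟨⟨ha, hx, hb, -, rfl⟩, hxy⟩ := hq
    refine ⟨⟨by lia, hx, hb, by lia, ?_⟩, by lia⟩
    obtain ⟨c, rfl⟩ := Nat.exists_eq_add_of_lt hxy
    rw [show x + c + 1 - x = c + 1 by lia]
    ring
  · simp only [Prod.mk.injEq]
    lia
  · simp only [Prod.mk.injEq]
    lia
  · rw [Nat.cast_sub hq.2.le, Nat.cast_add]

variable {H : ℤ → ℤ → ℤ → ℤ → ℤ}

theorem sum_quadruples_shift_symm (F : ℤ → ℤ → ℤ → ℤ → ℤ) :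
    ∑ q ∈ quadruples M with q.1.2 < q.2.2, F (q.1.1 + q.2.1) q.1.2 q.2.1 (q.2.2 - q.1.2) =
      ∑ q ∈ quadruples M with q.2.1 < q.1.1, F q.1.1 q.1.2 q.2.1 q.2.2 := by
  rw [← sum_quadruples_shift fun a x b y ↦ F (a + b) x b (y - x)]
  simp only [sub_add_cancel, add_sub_cancel_left]

theorem sum_quadruples_gt_eq_sum_lt (hshift : ∀ a x b y, H a x (a + b) y = H a (x + y) b y) :
    ∑ q ∈ quadruples M with q.2.2 < q.1.2, H q.1.1 q.1.2 q.2.1 q.2.2 =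
      ∑ q ∈ quadruples M with q.1.1 < q.2.1, H q.1.1 q.1.2 q.2.1 q.2.2 := by
  calc
    _ = ∑ q ∈ quadruples M with q.1.2 < q.2.2, H q.2.1 q.2.2 q.1.1 q.1.2 :=
      sum_quadruples_swap (fun q ↦ H q.2.1 q.2.2 q.1.1 q.1.2) fun q ↦ q.1.2 < q.2.2
    _ = ∑ q ∈ quadruples M with q.2.1 < q.1.1, H q.2.1 q.2.2 q.1.1 q.1.2 := by
      rw [← sum_quadruples_shift fun a x b y ↦ H b y a x]
      refine sum_congr rfl fun q _ ↦ ?_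
      rw [add_comm, ← hshift, add_sub_cancel]
    _ = _ := sum_quadruples_swap (fun q ↦ H q.1.1 q.1.2 q.2.1 q.2.2) fun q ↦ q.1.1 < q.2.1

theorem sum_quadruples_eq_two_mul_sum_add {u : (ℕ × ℕ) × ℕ × ℕ → ℕ}
    {f : (ℕ × ℕ) × ℕ × ℕ → ℤ} (hf : ∀ q, f q.swap = f q) :
    ∑ q ∈ quadruples M, f q = 2 * ∑ q ∈ quadruples M with u q < u q.swap, f q +
      ∑ q ∈ quadruples M with u q = u q.swap, f q := by
  have hswap := sum_quadruples_swap (M := M) f fun q ↦ u q < u q.swap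
  simp only [Prod.swap_swap, hf] at hswap
  rw [sum_eq_sum_lt_add_sum_eq_add_sum_gt (quadruples M) u fun q ↦ u q.swap, hswap]
  ring

theorem liouville_identity (hshift : ∀ a x b y, H a x (a + b) y = H a (x + y) b y)
    (hsub : ∀ a x b y, H (a - b) x b (x + y) = H (b - a) y a (x + y))
    (hadd : ∀ a x b y, H (a + b) x b (y - x) = H (a + b) y a (x - y)) :
    ∑ q ∈ quadruples M, (H (q.1.1 - q.2.1) q.1.2 q.2.1 (q.1.2 + q.2.2) -
        H (q.1.1 + q.2.1) q.1.2 q.2.1 (q.2.2 - q.1.2)) =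
      ∑ q ∈ quadruples M with q.1.1 = q.2.1, (H 0 q.1.2 q.2.1 (q.1.2 + q.2.2) +
        2 * H q.1.1 q.1.2 q.2.1 q.2.2) -
      ∑ q ∈ quadruples M with q.1.2 = q.2.2, (H (q.1.1 + q.2.1) q.1.2 q.2.1 0 +
        2 * H q.1.1 q.1.2 q.2.1 q.2.2) := by
  have hU := sum_quadruples_eq_two_mul_sum_add (M := M) (u := fun q ↦ q.2.1)
    (f := fun q ↦ H (q.1.1 - q.2.1) q.1.2 q.2.1 (q.1.2 + q.2.2)) fun q ↦ by
      simp only [Prod.fst_swap, Prod.snd_swap]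
      rw [hsub, add_comm]
  have hV := sum_quadruples_eq_two_mul_sum_add (M := M) (u := fun q ↦ q.1.2)
    (f := fun q ↦ H (q.1.1 + q.2.1) q.1.2 q.2.1 (q.2.2 - q.1.2)) fun q ↦ by
      simp only [Prod.fst_swap, Prod.snd_swap]
      rw [hadd, add_comm]
  simp only [Prod.fst_swap, Prod.snd_swap] at hU hV
  rw [sum_quadruples_shift] at hU
  rw [sum_quadruples_shift_symm] at hV
  have hUdiag : ∑ q ∈ quadruples M with q.2.1 = q.1.1,
        H (q.1.1 - q.2.1) q.1.2 q.2.1 (q.1.2 + q.2.2) =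
      ∑ q ∈ quadruples M with q.1.1 = q.2.1, H 0 q.1.2 q.2.1 (q.1.2 + q.2.2) :=
    sum_congr (filter_congr fun _ _ ↦ eq_comm) fun q hq ↦ by
      rw [(mem_filter.1 hq).2, sub_self]
  have hVdiag : ∑ q ∈ quadruples M with q.1.2 = q.2.2,
        H (q.1.1 + q.2.1) q.1.2 q.2.1 (q.2.2 - q.1.2) =
      ∑ q ∈ quadruples M with q.1.2 = q.2.2, H (q.1.1 + q.2.1) q.1.2 q.2.1 0 :=
    sum_congr rfl fun q hq ↦ by rw [(mem_filter.1 hq).2, sub_self]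
  have hfst := sum_eq_sum_lt_add_sum_eq_add_sum_gt (quadruples M) (fun q ↦ q.1.1)
    (fun q ↦ q.2.1) fun q ↦ H q.1.1 q.1.2 q.2.1 q.2.2
  have hsnd := sum_eq_sum_lt_add_sum_eq_add_sum_gt (quadruples M) (fun q ↦ q.1.2)
    (fun q ↦ q.2.2) fun q ↦ H q.1.1 q.1.2 q.2.1 q.2.2
  rw [sum_quadruples_gt_eq_sum_lt hshift] at hsnd
  rw [sum_sub_distrib, sum_add_distrib, sum_add_distrib, ← mul_sum, ← mul_sum]
  linarith

theorem sum_quadruples_fst_eq {R : Type*} [AddCommMonoid R] (F : ℕ → ℕ → ℕ → R) :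
    ∑ q ∈ quadruples M with q.1.1 = q.2.1, F q.1.1 q.1.2 q.2.2 =
      ∑ d ∈ M.divisorsAntidiagonal, ∑ x ∈ Ioo 0 d.2, F d.1 x (d.2 - x) := by
  rw [sum_sigma']
  refine sum_nbij' (fun q ↦ ⟨(q.1.1, q.1.2 + q.2.2), q.1.2⟩)
    (fun s ↦ ((s.1.1, s.2), (s.1.1, s.1.2 - s.2))) ?_ ?_ ?_ ?_ ?_
  · rintro ⟨⟨a, x⟩, b, y⟩ hq
    obtain ⟨hmem, rfl : a = b⟩ := mem_filter.1 hq
    obtain ⟨ha, hx, -, hy, rfl⟩ := mem_quadruples.1 hmem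
    simp only [mem_sigma, Nat.mem_divisorsAntidiagonal, mem_Ioo]
    exact ⟨⟨mul_add a x y, by positivity⟩, hx, by lia⟩
  · rintro ⟨⟨a, e⟩, x⟩ hs
    simp only [mem_sigma, Nat.mem_divisorsAntidiagonal, mem_Ioo] at hs
    obtain ⟨⟨rfl, hne⟩, hx, hxe⟩ := hs
    have ha := Nat.pos_of_ne_zero (left_ne_zero_of_mul hne)
    simp only [mem_filter, mem_quadruples, and_true]
    exact ⟨ha, hx, ha, by lia, by rw [← mul_add, Nat.add_sub_cancel' hxe.le]⟩
  · rintro ⟨⟨a, x⟩, b, y⟩ hq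
    obtain ⟨-, rfl : a = b⟩ := mem_filter.1 hq
    simp
  · rintro ⟨⟨a, e⟩, x⟩ hs
    simp only [mem_sigma, mem_Ioo] at hs
    rw [Nat.add_sub_cancel' hs.2.2.le]
  · simp

theorem sum_quadruples_snd_eq {R : Type*} [AddCommMonoid R] (F : ℕ → ℕ → ℕ → R) :
    ∑ q ∈ quadruples M with q.1.2 = q.2.2, F q.1.2 q.1.1 q.2.1 =
      ∑ d ∈ M.divisorsAntidiagonal, ∑ a ∈ Ioo 0 d.2, F d.1 a (d.2 - a) := by
  rw [← sum_quadruples_fst_eq]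
  refine sum_nbij' (Prod.map Prod.swap Prod.swap) (Prod.map Prod.swap Prod.swap) ?_ ?_ ?_ ?_ ?_ <;>
    simp +contextual [map_swap_mem_quadruples]

end Liouville

section Convolution

theorem sum_divisorsAntidiagonal_quadraticChar (n : ℕ) :
    ∑ d ∈ n.divisorsAntidiagonal, χ d.1 = charSum n :=
  Nat.sum_divisorsAntidiagonal fun d _ ↦ χ d

theorem six_mul_sum_Ioo_quadraticChar_sq (e : ℕ) :
    6 * ∑ x ∈ Ioo 0 e, χ x ^ 2 = 4 * e - 3 * χ e ^ 2 - χ e := by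
  have hrange : ∑ x ∈ Ioo 0 e, χ x ^ 2 = ∑ x ∈ range e, χ x ^ 2 := by
    refine sum_subset (fun x hx ↦ mem_range.2 (mem_Ioo.1 hx).2) fun x hx hx' ↦ ?_
    obtain rfl : x = 0 := by
      rw [mem_range] at hx
      rw [mem_Ioo] at hx'
      lia
    simp
  have hstep : ∀ x : ZMod 3, 6 * χ x ^ 2 - 3 * χ x ^ 2 - χ x =
      4 - 3 * χ (x + 1) ^ 2 - χ (x + 1) := by decide
  rw [hrange]
  clear hrange
  induction e with
  | zero => simp
  | succ e ih =>
    rw [sum_range_succ, mul_add]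
    push_cast
    linarith [hstep e]

theorem three_mul_sum_charSum_mul_charSum {M : ℕ} (hM : ¬ 3 ∣ M) :
    3 * ∑ k ∈ antidiagonal M, charSum k.1 * charSum k.2 =
      ∑ d ∈ M.divisors, (d : ℤ) - charSum M := by
  have hpoint : ∀ a b : ZMod 3, χ a * χ b = 1 - χ (a - b) ^ 2 - (1 - χ (a + b) ^ 2) := by decide
  have heven : ∀ a b : ZMod 3, 1 - χ (a - b) ^ 2 = 1 - χ (b - a) ^ 2 := by decide
  have hliouville := liouville_identity (M := M) (H := fun a _ _ _ ↦ 1 - χ a ^ 2)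
    (fun _ _ _ _ ↦ rfl) (fun a _ b _ ↦ by push_cast; exact heven a b) (fun _ _ _ _ ↦ rfl)
  push_cast at hliouville
  simp only [← hpoint] at hliouville
  rw [sum_quadruples_fst_eq fun a _ _ ↦ 1 - χ 0 ^ 2 + 2 * (1 - χ a ^ 2),
    sum_quadruples_snd_eq fun _ a b ↦ 1 - χ (a + b) ^ 2 + 2 * (1 - χ a ^ 2),
    sum_quadruples_mul (fun d ↦ χ d.1) fun d ↦ χ d.1] at hliouville
  simp only [sum_divisorsAntidiagonal_quadraticChar] at hliouville
  rw [hliouville, ← sum_sub_distrib, mul_sum, charSum, ← sum_sub_distrib,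
    ← Nat.sum_divisorsAntidiagonal' fun _ d ↦ (d : ℤ) - χ d]
  refine sum_congr rfl fun d hd ↦ ?_
  obtain ⟨hd1, hd2⟩ : χ d.1 ^ 2 = 1 ∧ χ d.2 ^ 2 = 1 := by
    rw [← (Nat.mem_divisorsAntidiagonal.1 hd).1, Nat.prime_three.dvd_mul, not_or,
      ← ZMod.natCast_eq_zero_iff, ← ZMod.natCast_eq_zero_iff] at hM
    exact hM.imp quadraticChar_sq_one quadraticChar_sq_one
  have hcomp : ∑ a ∈ Ioo 0 d.2, (1 - χ (a + (d.2 - a : ℕ)) ^ 2 + 2 * (1 - χ a ^ 2)) =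
      ∑ a ∈ Ioo 0 d.2, (2 - 2 * χ a ^ 2) := sum_congr rfl fun a ha ↦ by
    rw [← Nat.cast_add, Nat.add_sub_cancel' (mem_Ioo.1 ha).2.le, hd2]
    ring
  have hpos : 1 ≤ d.2 := Nat.pos_of_mem_divisors (Nat.snd_mem_divisors_of_mem_antidiagonal hd)
  have hsix := six_mul_sum_Ioo_quadraticChar_sq d.2
  rw [hcomp, hd1, sum_sub_distrib, ← mul_sum, sum_const, sum_const, Nat.card_Ioo, Nat.sub_zero,
    MulChar.map_zero, nsmul_eq_mul, nsmul_eq_mul]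
  push_cast [hpos]
  linarith

theorem sum_divisorsAntidiagonal_quadraticChar_sq_mul (n : ℕ) :
    ∑ d ∈ n.divisorsAntidiagonal, χ d.2 ^ 2 * χ d.1 = χ n ^ 2 * charSum n := by
  have hcube : ∀ a b : ZMod 3, χ b ^ 2 * χ a = χ (a * b) ^ 2 * χ a := by decide
  rw [← sum_divisorsAntidiagonal_quadraticChar, mul_sum]
  refine sum_congr rfl fun d hd ↦ ?_
  rw [hcube, ← Nat.cast_mul, (Nat.mem_divisorsAntidiagonal.1 hd).1]

/-- The kernel which, weighted by its last argument, turns Liouville's identity into a formula for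
the convolution of a character sum with the sum of divisors. -/
def liouvilleKernel (a x b y : ZMod 3) : ℤ := (1 - χ a ^ 2) * (1 - χ y ^ 2) * χ b * χ x ^ 2

theorem liouvilleKernel_mul_sub_mul {a x b y : ℕ} (h : (a * x + b * y : ZMod 3) = 0) :
    liouvilleKernel (a - b) x b (x + y) * (x + y) - liouvilleKernel (a + b) x b (y - x) * (y - x) =
      χ x ^ 2 * χ a * y + χ y ^ 2 * χ b * x := by
  have hsub : ∀ a x b y : ZMod 3, a * x + b * y = 0 → liouvilleKernel (a - b) x b (x + y) -
      liouvilleKernel (a + b) x b (y - x) = χ x ^ 2 * χ a := by decide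
  have hadd : ∀ a x b y : ZMod 3, a * x + b * y = 0 → liouvilleKernel (a - b) x b (x + y) +
      liouvilleKernel (a + b) x b (y - x) = χ y ^ 2 * χ b := by decide
  rw [← hsub _ _ _ _ h, ← hadd _ _ _ _ h]
  ring

theorem sum_quadruples_liouvilleKernel (M : ℕ) :
    ∑ q ∈ quadruples M, (liouvilleKernel (q.1.1 - q.2.1) q.1.2 q.2.1 (q.1.2 + q.2.2) *
        (q.1.2 + q.2.2) - liouvilleKernel (q.1.1 + q.2.1) q.1.2 q.2.1 (q.2.2 - q.1.2) *
        (q.2.2 - q.1.2)) =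
      ∑ q ∈ quadruples M with q.1.1 = q.2.1,
        liouvilleKernel 0 q.1.2 q.1.1 (q.1.2 + q.2.2) * (q.1.2 + q.2.2) := by
  have hshift : ∀ a x b y, liouvilleKernel a x (a + b) y = liouvilleKernel a (x + y) b y := by
    decide
  have hsub : ∀ a x b y, liouvilleKernel (a - b) x b (x + y) =
      liouvilleKernel (b - a) y a (x + y) := by decide
  have hadd : ∀ a x b y, liouvilleKernel (a + b) x b (y - x) =
      -liouvilleKernel (a + b) y a (x - y) := by decide
  have hfst : ∀ a x y, liouvilleKernel a x a y = 0 := by decide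
  have hsnd : ∀ a x b, liouvilleKernel a x b x = 0 := by decide
  have hliouville := liouville_identity (M := M) (H := fun a x b y ↦ liouvilleKernel a x b y * y)
    (fun a x b y ↦ by push_cast; rw [hshift]) (fun a x b y ↦ by push_cast; rw [hsub])
    (fun a x b y ↦ by push_cast; rw [hadd]; ring)
  push_cast at hliouville
  rw [hliouville, sum_eq_zero (s := {q ∈ quadruples M | q.1.2 = q.2.2}), sub_zero]
  · refine sum_congr rfl fun q hq ↦ ?_
    rw [← (mem_filter.1 hq).2, hfst, zero_mul, mul_zero, add_zero]
  · intro q hq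
    rw [← (mem_filter.1 hq).2, hsnd, zero_mul, mul_zero, mul_zero, add_zero]

theorem two_mul_sum_quadruples_quadraticChar (N : ℕ) :
    2 * ∑ q ∈ quadruples (3 * N), χ q.1.2 ^ 2 * χ q.1.1 * q.2.2 =
      ∑ d ∈ (3 * N).divisorsAntidiagonal,
        (1 - χ d.2 ^ 2) * χ d.1 * d.2 * ∑ x ∈ Ioo 0 d.2, χ x ^ 2 := by
  have hswap := sum_quadruples_swap (M := 3 * N) (fun q ↦ χ q.1.2 ^ 2 * χ q.1.1 * q.2.2)
    fun _ ↦ True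
  simp only [filter_true, Prod.fst_swap, Prod.snd_swap] at hswap
  calc
    _ = ∑ q ∈ quadruples (3 * N),
        (χ q.1.2 ^ 2 * χ q.1.1 * q.2.2 + χ q.2.2 ^ 2 * χ q.2.1 * q.1.2) := by
      rw [sum_add_distrib, hswap, two_mul]
    _ = ∑ q ∈ quadruples (3 * N) with q.1.1 = q.2.1,
        liouvilleKernel 0 q.1.2 q.1.1 (q.1.2 + q.2.2) * (q.1.2 + q.2.2) := by
      rw [← sum_quadruples_liouvilleKernel]
      refine sum_congr rfl fun q hq ↦ (liouvilleKernel_mul_sub_mul ?_).symm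
      have hcast := congrArg (Nat.cast (R := ZMod 3)) (mem_quadruples.1 hq).2.2.2.2
      rw [Nat.cast_mul, ZMod.natCast_self 3, zero_mul] at hcast
      exact_mod_cast hcast
    _ = _ := by
      rw [sum_quadruples_fst_eq fun a x y ↦ liouvilleKernel 0 x a (x + y) * (x + y)]
      refine sum_congr rfl fun d _ ↦ ?_
      rw [mul_sum]
      refine sum_congr rfl fun x hx ↦ ?_
      rw [← Nat.cast_add, ← Nat.cast_add, Nat.add_sub_cancel' (mem_Ioo.1 hx).2.le, liouvilleKernel,
        MulChar.map_zero]
      ring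

theorem sum_divisorsAntidiagonal_mul_left {R : Type*} [AddCommMonoid R] {k : ℕ} (hk : k ≠ 0)
    (n : ℕ) {f : ℕ × ℕ → R} (hf : ∀ d, ¬ k ∣ d.2 → f d = 0) :
    ∑ d ∈ (k * n).divisorsAntidiagonal, f d =
      ∑ d ∈ n.divisorsAntidiagonal, f (d.1, k * d.2) := by
  symm
  refine sum_of_injOn (fun d ↦ (d.1, k * d.2)) ?_ ?_ ?_ fun _ _ ↦ rfl
  · rintro ⟨d, e⟩ _ ⟨d', e'⟩ _ h
    simpa [hk] using h
  · rintro ⟨d, e⟩ hd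
    simp only [mem_coe, Nat.mem_divisorsAntidiagonal] at hd ⊢
    rw [mul_left_comm, hd.1]
    exact ⟨rfl, mul_ne_zero hk hd.2⟩
  · rintro ⟨d, _⟩ hd hnot
    refine hf _ ?_
    rintro ⟨e, rfl⟩
    rw [Nat.mem_divisorsAntidiagonal, mul_left_comm, mul_right_inj' hk] at hd
    exact hnot ⟨(d, e), Nat.mem_divisorsAntidiagonal.2 ⟨hd.1, right_ne_zero_of_mul hd.2⟩, rfl⟩

theorem sum_charSum_mul_sum_divisors (N : ℕ) :
    ∑ k ∈ antidiagonal (3 * N), χ k.1 ^ 2 * charSum k.1 * ∑ d ∈ k.2.divisors, (d : ℤ) =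
      3 * ∑ d ∈ N.divisors, χ d * ((N / d : ℕ) : ℤ) ^ 2 := by
  have hmul := sum_quadruples_mul (M := 3 * N) (fun d ↦ χ d.2 ^ 2 * χ d.1) fun d ↦ (d.2 : ℤ)
  simp only [sum_divisorsAntidiagonal_quadraticChar_sq_mul,
    Nat.sum_divisorsAntidiagonal' fun _ d ↦ (d : ℤ)] at hmul
  have htwo := two_mul_sum_quadruples_quadraticChar N
  rw [sum_divisorsAntidiagonal_mul_left three_ne_zero, hmul] at htwo
  · have hterm : ∀ d : ℕ × ℕ, (1 - χ (3 * d.2 : ℕ) ^ 2) * χ d.1 * (3 * d.2 : ℕ) *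
        ∑ x ∈ Ioo 0 (3 * d.2), χ x ^ 2 = 6 * (χ d.1 * (d.2 : ℤ) ^ 2) := by
      intro d
      have hzero : ((3 * d.2 : ℕ) : ZMod 3) = 0 := (ZMod.natCast_eq_zero_iff _ 3).2 ⟨_, rfl⟩
      have hsix := six_mul_sum_Ioo_quadraticChar_sq (3 * d.2)
      rw [hzero, MulChar.map_zero, Nat.cast_mul] at hsix ⊢
      have hsum : ∑ x ∈ Ioo 0 (3 * d.2), χ x ^ 2 = 2 * d.2 := by
        push_cast at hsix
        linarith
      rw [hsum]
      push_cast
      ring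
    simp only [hterm, ← mul_sum,
      Nat.sum_divisorsAntidiagonal fun d e ↦ χ d * (e : ℤ) ^ 2] at htwo
    linarith
  · intro d hd
    rw [quadraticChar_sq_one (mt (ZMod.natCast_eq_zero_iff _ 3).1 hd), sub_self]
    simp only [zero_mul]

end Convolution

section Counting

variable {α β : Type*} (f : α → ℕ) (g : β → ℕ) (p : α → Prop) (q : β → Prop) (n : ℕ)

/-- Pairs of total weight `n`, sorted by how the weight is split between the two components. -/
def pairsEquivSigma : {x : α × β // f x.1 + g x.2 = n ∧ p x.1 ∧ q x.2} ≃
    Σ k : antidiagonal n, {a // f a = k.1.1 ∧ p a} × {b // g b = k.1.2 ∧ q b} where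
  toFun x := ⟨⟨(f x.1.1, g x.1.2), HasAntidiagonal.mem_antidiagonal.2 x.2.1⟩,
    ⟨x.1.1, rfl, x.2.2.1⟩, ⟨x.1.2, rfl, x.2.2.2⟩⟩
  invFun s := ⟨(s.2.1, s.2.2),
    by rw [s.2.1.2.1, s.2.2.2.1, HasAntidiagonal.mem_antidiagonal.1 s.1.2],
    s.2.1.2.2, s.2.2.2.2⟩
  left_inv _ := rfl
  right_inv := by
    rintro ⟨⟨⟨i, j⟩, hij⟩, ⟨a, ha, hpa⟩, ⟨b, hb, hqb⟩⟩
    obtain rfl : f a = i := ha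
    obtain rfl : g b = j := hb
    rfl

variable [∀ i, Finite {a // f a = i ∧ p a}] [∀ i, Finite {b // g b = i ∧ q b}]

theorem finite_pairs : Finite {x : α × β // f x.1 + g x.2 = n ∧ p x.1 ∧ q x.2} :=
  .of_equiv _ (pairsEquivSigma f g p q n).symm

theorem card_pairs : Nat.card {x : α × β // f x.1 + g x.2 = n ∧ p x.1 ∧ q x.2} =
    ∑ k ∈ antidiagonal n, Nat.card {a // f a = k.1 ∧ p a} * Nat.card {b // g b = k.2 ∧ q b} := by
  rw [Nat.card_congr (pairsEquivSigma f g p q n), Nat.card_sigma]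
  simp only [Nat.card_prod]
  exact sum_coe_sort (antidiagonal n) fun k ↦
    Nat.card {a // f a = k.1 ∧ p a} * Nat.card {b // g b = k.2 ∧ q b}

theorem finite_setOf_card_eq (n : ℕ) : {μ : YoungDiagram | μ.card = n}.Finite := by
  refine .of_finite_image (f := YoungDiagram.cells) ?_ fun μ _ ν _ ↦ YoungDiagram.ext
  refine (range n ×ˢ range n).powerset.finite_toSet.subset ?_
  rintro _ ⟨μ, rfl, rfl⟩
  refine mem_powerset.2 fun ⟨i, j⟩ hc ↦ ?_
  have hi : i < #(μ.col j) := μ.colLen_eq_card ▸ μ.mem_iff_lt_colLen.1 hc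
  have hj : j < #(μ.row i) := μ.rowLen_eq_card ▸ μ.mem_iff_lt_rowLen.1 hc
  exact mem_product.2 ⟨mem_range.2 (hi.trans_le (card_filter_le _ _)),
    mem_range.2 (hj.trans_le (card_filter_le _ _))⟩

instance finite_isThreeCore (n : ℕ) : Finite {μ : YoungDiagram // μ.card = n ∧ μ.IsThreeCore} :=
  ((finite_setOf_card_eq n).subset fun _ hμ ↦ hμ.1).to_subtype

theorem A3_eq_sum_a3_mul_a3 (n : ℕ) : A3 n = ∑ k ∈ antidiagonal n, a3 k.1 * a3 k.2 :=
  card_pairs YoungDiagram.card YoungDiagram.card _ _ n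

theorem B3_eq_sum_a3_mul_A3 (n : ℕ) : B3 n = ∑ k ∈ antidiagonal n, a3 k.1 * A3 k.2 := by
  have hfinite := finite_pairs YoungDiagram.card YoungDiagram.card
    YoungDiagram.IsThreeCore YoungDiagram.IsThreeCore
  simp only [B3, add_assoc]
  exact card_pairs YoungDiagram.card (fun x : YoungDiagram × YoungDiagram ↦ x.1.card + x.2.card)
    YoungDiagram.IsThreeCore (fun x ↦ x.1.IsThreeCore ∧ x.2.IsThreeCore) n

end Counting

section ThreeCores

theorem mk_mem_primarySet_iff {n : ℕ} {u v : ℤ} :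
    (⟨3 * u + 1, 3 * v⟩ : Eisenstein) ∈ primarySet (3 * n + 1) ↔
      3 * (u ^ 2 + u * v + v ^ 2) + 2 * u + v = n := by
  have hprimary : IsPrimary ⟨3 * u + 1, 3 * v⟩ :=
    isPrimary_iff.2 ⟨⟨u, add_sub_cancel_right _ _⟩, ⟨v, rfl⟩⟩
  rw [primarySet, Set.mem_ofPred_eq, and_iff_right hprimary, norm_eq_sq_add_mul_add_sq]
  push_cast
  constructor <;> intro h <;> linarith

theorem sum_fin_three_eq_two_mul_iff {n : ℕ} {c : Fin 3 → ℤ} (hc : ∑ r, c r = 0) :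
    ∑ r, ((3 : ℕ) * c r ^ 2 + 2 * r * c r) = 2 * (n : ℤ) ↔
      3 * (c 2 ^ 2 + c 2 * c 1 + c 1 ^ 2) + 2 * c 2 + c 1 = n := by
  rw [Fin.sum_univ_three] at hc ⊢
  rw [show c 0 = -c 1 - c 2 by linarith]
  simp only [Fin.val_zero, Fin.val_one, Fin.val_two]
  push_cast
  constructor <;> intro h <;> linarith

theorem a3_eq_ncard_primarySet (n : ℕ) : a3 n = (primarySet (3 * n + 1)).ncard := by
  rw [← Nat.card_coe_set_eq]
  refine (card_isCore_eq 3 n).trans (Nat.card_congr (.ofBijective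
    (fun c ↦ ⟨⟨3 * c.1 2 + 1, 3 * c.1 1⟩,
      mk_mem_primarySet_iff.2 ((sum_fin_three_eq_two_mul_iff c.2.1).1 c.2.2)⟩) ⟨?_, ?_⟩))
  · rintro ⟨c, hc, _⟩ ⟨d, hd, _⟩ h
    rw [Fin.sum_univ_three] at hc hd
    simp only [Subtype.mk.injEq, QuadraticAlgebra.mk.injEq] at h
    refine Subtype.ext (funext fun r ↦ ?_)
    fin_cases r <;> simp only [Fin.zero_eta, Fin.mk_one, Fin.reduceFinMk] <;> lia
  · rintro ⟨⟨x, y⟩, hz⟩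
    obtain ⟨⟨u, hu : x - 1 = 3 * u⟩, ⟨v, rfl : y = 3 * v⟩⟩ := isPrimary_iff.1 hz.1
    obtain rfl : x = 3 * u + 1 := by linarith
    have hsum : ∑ r, ![-v - u, v, u] r = 0 := by
      rw [Fin.sum_univ_three]
      change -v - u + v + u = 0
      ring
    exact ⟨⟨![-v - u, v, u], hsum, (sum_fin_three_eq_two_mul_iff hsum).2
      (mk_mem_primarySet_iff.1 hz)⟩, rfl⟩

theorem a3_eq_charSum (n : ℕ) : (a3 n : ℤ) = charSum (3 * n + 1) := by
  rw [a3_eq_ncard_primarySet, ncard_primarySet (by lia)]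

theorem charSum_eq_zero_of_mod_three_eq_two {n : ℕ} (hn : n % 3 = 2) : charSum n = 0 := by
  have hneg : ∀ a b : ZMod 3, a * b = 2 → χ a + χ b = 0 := by decide
  have htwo : 2 * charSum n = ∑ d ∈ n.divisorsAntidiagonal, (χ d.1 + χ d.2) := by
    rw [sum_add_distrib, sum_divisorsAntidiagonal_quadraticChar,
      Nat.sum_divisorsAntidiagonal' fun _ d ↦ χ d, ← charSum, two_mul]
  have hzero : ∑ d ∈ n.divisorsAntidiagonal, (χ d.1 + χ d.2) = 0 := by
    refine sum_eq_zero fun d hd ↦ hneg _ _ ?_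
    rw [← Nat.cast_mul, (Nat.mem_divisorsAntidiagonal.1 hd).1, ← ZMod.natCast_mod, hn,
      Nat.cast_two]
  lia

theorem sum_antidiagonal_mul_add {R : Type*} [AddCommMonoid R] {t r s N : ℕ} (hs : s < t)
    {f : ℕ × ℕ → R}
    (hf : ∀ k ∈ antidiagonal (t * N + (r + s)), k.1 % t ≠ r → f k = 0) :
    ∑ k ∈ antidiagonal (t * N + (r + s)), f k =
      ∑ k ∈ antidiagonal N, f (t * k.1 + r, t * k.2 + s) := by
  symm
  refine sum_of_injOn (fun k ↦ (t * k.1 + r, t * k.2 + s)) ?_ ?_ ?_ fun _ _ ↦ rfl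
  · rintro ⟨i, j⟩ _ ⟨i', j'⟩ _ h
    simpa [Nat.ne_zero_of_lt hs] using h
  · rintro ⟨i, j⟩ hk
    simp only [mem_coe, HasAntidiagonal.mem_antidiagonal] at hk ⊢
    rw [← hk]
    ring
  · rintro ⟨i, j⟩ hk hnot
    refine hf _ hk fun hi ↦ hnot ?_
    rw [HasAntidiagonal.mem_antidiagonal] at hk
    have hdiv := Nat.div_add_mod i t
    rw [hi] at hdiv
    have hle : i / t ≤ N := by
      by_contra! hlt
      have := Nat.mul_le_mul_left t (Nat.succ_le_of_lt hlt)
      rw [Nat.mul_succ] at this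
      lia
    refine ⟨(i / t, N - i / t), by simp [hle], Prod.ext hdiv ?_⟩
    have := Nat.mul_sub t N (i / t)
    have := Nat.mul_le_mul_left t hle
    simp only
    lia

theorem three_mul_A3 (n : ℕ) : 3 * (A3 n : ℤ) = ∑ d ∈ (3 * n + 2).divisors, (d : ℤ) := by
  have hsum := three_mul_sum_charSum_mul_charSum (M := 3 * n + 2) (by lia)
  rw [charSum_eq_zero_of_mod_three_eq_two (by lia : (3 * n + 2) % 3 = 2), sub_zero,
    sum_antidiagonal_mul_add (r := 1) (s := 1) (by norm_num)] at hsum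
  · simp only [← hsum, A3_eq_sum_a3_mul_a3, Nat.cast_sum, Nat.cast_mul, a3_eq_charSum]
  · rintro ⟨i, j⟩ hk hi
    rw [HasAntidiagonal.mem_antidiagonal] at hk
    rcases (by lia : i % 3 = 2 ∨ j % 3 = 2) with h | h
    · rw [charSum_eq_zero_of_mod_three_eq_two h, zero_mul]
    · rw [charSum_eq_zero_of_mod_three_eq_two h, mul_zero]

theorem B3_eq_sum_quadraticChar_mul_sq (n : ℕ) :
    (B3 n : ℤ) = ∑ d ∈ (n + 1).divisors, χ d * (((n + 1) / d : ℕ) : ℤ) ^ 2 := by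
  have hsum := sum_charSum_mul_sum_divisors (n + 1)
  rw [show 3 * (n + 1) = 3 * n + (1 + 2) by ring, sum_antidiagonal_mul_add (by norm_num)] at hsum
  · have hterm : ∀ k : ℕ × ℕ, χ (3 * k.1 + 1 : ℕ) ^ 2 * charSum (3 * k.1 + 1) *
        ∑ d ∈ (3 * k.2 + 2).divisors, (d : ℤ) = 3 * (a3 k.1 * A3 k.2) := by
      intro k
      have hone : ((3 * k.1 + 1 : ℕ) : ZMod 3) = 1 := by
        rw [← ZMod.natCast_mod, Nat.mul_add_mod, Nat.cast_one]
      rw [hone, map_one, ← a3_eq_charSum, ← three_mul_A3]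
      ring
    simp only [hterm, ← mul_sum] at hsum
    rw [B3_eq_sum_a3_mul_A3, Nat.cast_sum]
    simp only [Nat.cast_mul]
    linarith
  · intro k _ hk
    rcases (by lia : k.1 % 3 = 0 ∨ k.1 % 3 = 2) with h | h
    · rw [← ZMod.natCast_mod, h, Nat.cast_zero, MulChar.map_zero]
      simp
    · simp [charSum_eq_zero_of_mod_three_eq_two h]

theorem quadraticChar_natCast_eq_sub (n : ℕ) :
    χ n = (if n % 3 = 1 then 1 else 0) - if n % 3 = 2 then 1 else 0 := by
  rw [← ZMod.natCast_mod]
  have := Nat.mod_lt n three_pos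
  interval_cases n % 3 <;> decide

end ThreeCores

end CoreTriples

/-- B₃(n) = ∑_{d ∣ n+1, d ≡ 1 (3)} ((n+1)/d)² − ∑_{d ∣ n+1, d ≡ 2 (3)} ((n+1)/d)². -/
theorem B3_explicit_sum (n : ℕ) :
    (B3 n : ℤ) =
      (∑ d ∈ (n + 1).divisors.filter (fun d => d % 3 = 1), (((n + 1) / d : ℕ) : ℤ) ^ 2) -
      (∑ d ∈ (n + 1).divisors.filter (fun d => d % 3 = 2), (((n + 1) / d : ℕ) : ℤ) ^ 2) := by
  rw [CoreTriples.B3_eq_sum_quadraticChar_mul_sq, Finset.sum_filter, Finset.sum_filter,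
    ← Finset.sum_sub_distrib]
  simp only [CoreTriples.quadraticChar_natCast_eq_sub, sub_mul, ite_mul, one_mul, zero_mul]
end

section
/- Let n ≥ 0 be an integer and write n+1 = 3^α · ∏_{i} p_i^{α_i} · ∏_{j} q_j^{β_j} as its prime factorization, where the p_i are the distinct primes ≡ 1 (mod 3) dividing n+1 with exponents α_i ≥ 1, and the q_j are the distinct primes ≡ 2 (mod 3) dividing n+1 with exponents β_j ≥ 1, and α ≥ 0. Then B_3(n)·∏_i (p_i² − 1)·∏_j (q_j² + 1) = 3^{2α}·∏_i (p_i^{2(α_i+1)} − 1)·∏_j (q_j^{2β_j+2} + (−1)^{β_j}). -/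
/-!
The first-column hook lengths of a partition, placed on an abacus with three runners, show that the
3-cores of size `n` correspond to integer points of a quadratic form, and completing the form turns
them into the Eisenstein integers of norm `3 n + 1` that are congruent to `1` modulo `3`. Unique
factorization in the Eisenstein integers then gives `a₃(n) = ∑_{d ∣ 3n+1} χ(d)`, where `χ` is the
nontrivial character modulo `3`. Hence, with `q = t³`, the generating function `t ∑ a₃(n) qⁿ` is the
Lambert series `L = ∑_{n ∈ ℤ} r / (1 - r³)`, `r = t^(3n+1)`.

In the triple product `L³` partial fractions make the contributions of the off-diagonal terms
telescope away, which leaves `L³ = ∑_{n ∈ ℤ} (r³ + r⁶) / (1 - r³)³`. Expanding the right side gives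
`∑_N (∑_{d ∣ N} χ(d) (N / d)²) q^N`, so that `B₃(n) = ∑_{d ∣ n+1} χ(d) ((n + 1) / d)²`, a
multiplicative function of `n + 1`.
-/

namespace ThreeCores

section BetaSet

/-- The `i`-th first-column hook length of `μ`, shifted so that the empty rows of index
`i ≥ μ.colLen 0` contribute `-i - 1`. -/
def betaNumber (μ : YoungDiagram) (i : ℕ) : ℤ := μ.rowLen i - i - 1

/-- The beta-set (Maya diagram) of `μ`: the boundary of `μ`, read as a bi-infinite word of vertical
and horizontal unit steps indexed by `ℤ`, has its vertical steps exactly at these positions. -/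
def betaSet (μ : YoungDiagram) : Set ℤ := Set.range (betaNumber μ)

/-- `μ` is a `t`-core: none of its hook lengths is divisible by `t`. -/
def IsCore (t : ℕ) (μ : YoungDiagram) : Prop :=
  ∀ c ∈ μ.cells, ¬ t ∣ μ.hookLength c.1 c.2

variable {μ : YoungDiagram} {t m : ℕ} {v : ℤ}

lemma betaNumber_strictAnti (μ : YoungDiagram) : StrictAnti (betaNumber μ) := by
  intro i j hij
  have := μ.rowLen_anti i j hij.le
  simp only [betaNumber]
  lia

lemma betaSet_injective : Function.Injective betaSet := by
  intro μ ν h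
  have range_eq : Set.range (OrderDual.toDual ∘ betaNumber μ) =
      Set.range (OrderDual.toDual ∘ betaNumber ν) := by
    rw [Set.range_comp, Set.range_comp]
    exact congrArg _ h
  have key := (StrictMono.range_inj (betaNumber_strictAnti μ).dual_right
    (betaNumber_strictAnti ν).dual_right).1 range_eq
  ext ⟨i, j⟩
  have hi : betaNumber μ i = betaNumber ν i := congrFun key i
  simp only [betaNumber] at hi
  rw [YoungDiagram.mem_cells, YoungDiagram.mem_cells, YoungDiagram.mem_iff_lt_rowLen,
    YoungDiagram.mem_iff_lt_rowLen]
  lia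

lemma rowLen_eq_zero_of_colLen_zero_le {i : ℕ} (h : μ.colLen 0 ≤ i) : μ.rowLen i = 0 := by
  by_contra hne
  have hmem : (i, 0) ∈ μ := YoungDiagram.mem_iff_lt_rowLen.2 (Nat.pos_of_ne_zero hne)
  exact h.not_gt (YoungDiagram.mem_iff_lt_colLen.1 hmem)

lemma lt_rowLen_iff_lt_colLen {i j : ℕ} : j < μ.rowLen i ↔ i < μ.colLen j :=
  YoungDiagram.mem_iff_lt_rowLen.symm.trans YoungDiagram.mem_iff_lt_colLen

lemma sub_colLen_notMem_betaSet (μ : YoungDiagram) (j : ℕ) : (j - μ.colLen j : ℤ) ∉ betaSet μ := by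
  rintro ⟨i, hi⟩
  have := lt_rowLen_iff_lt_colLen (μ := μ) (i := i) (j := j)
  simp only [betaNumber] at hi
  lia

lemma exists_eq_sub_colLen_of_notMem_betaSet (hv : v ∉ betaSet μ) :
    ∃ j : ℕ, v = j - μ.colLen j := by
  classical
  have hex : ∃ i, betaNumber μ i < v := by
    refine ⟨μ.colLen 0 + v.natAbs, ?_⟩
    have := rowLen_eq_zero_of_colLen_zero_le (μ := μ) (Nat.le_add_right _ v.natAbs)
    simp only [betaNumber]
    lia
  set i := Nat.find hex
  have above : betaNumber μ i < v := Nat.find_spec hex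
  have below (k : ℕ) (hk : k < i) : v < betaNumber μ k :=
    lt_of_le_of_ne (not_lt.1 (Nat.find_min hex hk)) fun h => hv ⟨k, h.symm⟩
  simp only [betaNumber] at above below
  refine ⟨(v + i).toNat, ?_⟩
  have hle : μ.colLen (v + i).toNat ≤ i := by
    rw [← not_lt, ← lt_rowLen_iff_lt_colLen]
    lia
  have hge : i ≤ μ.colLen (v + i).toNat := by
    rcases Nat.eq_zero_or_pos i with h0 | hpos
    · lia
    · have hlt := below (i - 1) (by lia)
      have := (lt_rowLen_iff_lt_colLen (μ := μ) (i := i - 1) (j := (v + i).toNat)).1 (by lia)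
      lia
  lia

lemma sub_colLen_lt_betaNumber_iff {i j : ℕ} :
    (j - μ.colLen j : ℤ) < betaNumber μ i ↔ (i, j) ∈ μ.cells := by
  have := lt_rowLen_iff_lt_colLen (μ := μ) (i := i) (j := j)
  rw [YoungDiagram.mem_cells, YoungDiagram.mem_iff_lt_rowLen]
  simp only [betaNumber]
  lia

lemma hookLength_eq_betaNumber_sub {i j : ℕ} (h : (i, j) ∈ μ.cells) :
    (μ.hookLength i j : ℤ) = betaNumber μ i - (j - μ.colLen j) := by
  have := sub_colLen_lt_betaNumber_iff.2 h
  simp only [betaNumber, YoungDiagram.hookLength] at *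
  lia

lemma isCore_iff_forall_sub_mem_betaSet :
    IsCore t μ ↔ ∀ v ∈ betaSet μ, v - t ∈ betaSet μ := by
  constructor
  · rintro hμ _ ⟨i, rfl⟩
    by_contra hgap
    obtain ⟨j, hj⟩ := exists_eq_sub_colLen_of_notMem_betaSet hgap
    rcases Nat.eq_zero_or_pos t with rfl | ht
    · exact hgap ⟨i, by simp⟩
    · have hmem : (i, j) ∈ μ.cells := sub_colLen_lt_betaNumber_iff.1 (by lia)
      have hhook : μ.hookLength i j = t := by
        have := hookLength_eq_betaNumber_sub hmem
        lia
      exact hμ (i, j) hmem (dvd_of_eq hhook.symm)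
  · rintro hμ ⟨i, j⟩ hmem ⟨k, hk⟩
    have slide (k : ℕ) : betaNumber μ i - t * k ∈ betaSet μ := by
      induction k with
      | zero => exact ⟨i, by simp⟩
      | succ k ih => convert hμ _ ih using 1; push_cast; ring
    have hhook := hookLength_eq_betaNumber_sub hmem
    rw [show μ.hookLength i j = t * k from hk] at hhook
    push_cast at hhook
    have hgap := sub_colLen_notMem_betaSet μ j
    rw [← sub_eq_of_eq_add' (eq_add_of_sub_eq hhook.symm)] at hgap
    exact hgap (slide k)

lemma mem_betaSet_of_lt_neg (hm : μ.colLen 0 ≤ m) (hv : v < -m) : v ∈ betaSet μ := by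
  refine ⟨(-v - 1).toNat, ?_⟩
  have := rowLen_eq_zero_of_colLen_zero_le (μ := μ) (i := (-v - 1).toNat) (by lia)
  simp only [betaNumber]
  lia

lemma mem_image_betaNumber_range_iff (hm : μ.colLen 0 ≤ m) :
    v ∈ (Finset.range m).image (betaNumber μ) ↔ -(m : ℤ) ≤ v ∧ v ∈ betaSet μ := by
  simp only [Finset.mem_image, Finset.mem_range, betaSet, Set.mem_range]
  constructor
  · rintro ⟨i, hi, rfl⟩
    refine ⟨?_, i, rfl⟩
    simp only [betaNumber]
    lia
  · rintro ⟨hv, i, rfl⟩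
    refine ⟨i, ?_, rfl⟩
    by_contra hi
    have := rowLen_eq_zero_of_colLen_zero_le (μ := μ) (i := i) (by lia)
    simp only [betaNumber] at hv
    lia

lemma card_eq_sum_rowLen (hm : μ.colLen 0 ≤ m) : μ.card = ∑ i ∈ Finset.range m, μ.rowLen i := by
  rw [YoungDiagram.card, Finset.card_eq_sum_card_fiberwise (f := Prod.fst) (t := Finset.range m)]
  · exact Finset.sum_congr rfl fun i _ => (YoungDiagram.rowLen_eq_card μ).symm
  · rintro ⟨i, j⟩ hij
    have hi := YoungDiagram.mem_iff_lt_colLen.1 ((YoungDiagram.mem_cells _).1 hij)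
    exact Finset.mem_range.2 ((hi.trans_le (μ.colLen_anti 0 j (Nat.zero_le j))).trans_le hm)

variable {W : Finset ℤ}

lemma card_window_betaSet (hm : μ.colLen 0 ≤ m)
    (hW : ∀ v, v ∈ W ↔ -(m : ℤ) ≤ v ∧ v ∈ betaSet μ) : W.card = m := by
  have hWeq : W = (Finset.range m).image (betaNumber μ) := by
    ext v
    rw [hW, mem_image_betaNumber_range_iff hm]
  rw [hWeq, Finset.card_image_of_injective _ (betaNumber_strictAnti μ).injective, Finset.card_range]

lemma card_eq_sum_window_betaSet (hm : μ.colLen 0 ≤ m)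
    (hW : ∀ v, v ∈ W ↔ -(m : ℤ) ≤ v ∧ v ∈ betaSet μ) :
    (μ.card : ℤ) = ∑ v ∈ W, v - ∑ v ∈ Finset.Ico (-(m : ℤ)) 0, v := by
  have hWeq : W = (Finset.range m).image (betaNumber μ) := by
    ext v
    rw [hW, mem_image_betaNumber_range_iff hm]
  have hneg : ∑ v ∈ Finset.Ico (-(m : ℤ)) 0, v = ∑ i ∈ Finset.range m, (-(i : ℤ) - 1) :=
    Finset.sum_nbij' (fun v => (-v - 1).toNat) (fun i => -(i : ℤ) - 1) (by grind) (by grind)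
      (by grind) (by grind) (by grind)
  rw [hWeq, Finset.sum_image (betaNumber_strictAnti μ).injective.injOn, hneg,
    ← Finset.sum_sub_distrib, card_eq_sum_rowLen hm]
  push_cast
  exact Finset.sum_congr rfl fun i _ => by simp only [betaNumber]; ring

lemma exists_youngDiagram_rowLen_eq {m : ℕ} {r : ℕ → ℕ} (hr : Antitone r)
    (hm : ∀ i, m ≤ i → r i = 0) : ∃ μ : YoungDiagram, ∀ i, μ.rowLen i = r i := by
  let μ : YoungDiagram :=
    { cells := (Finset.range m ×ˢ Finset.range (r 0)).filter fun c => c.2 < r c.1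
      isLowerSet := by
        rintro ⟨i, j⟩ ⟨i', j'⟩ ⟨hi, hj⟩ hmem
        have := hr hi
        simp only [Finset.coe_filter, Finset.mem_product, Finset.mem_range, Set.mem_ofPred_eq] at *
        lia }
  have mem_iff (i j : ℕ) : (i, j) ∈ μ ↔ j < r i := by
    rw [← YoungDiagram.mem_cells]
    simp only [μ, Finset.mem_filter, Finset.mem_product, Finset.mem_range]
    have := hr (Nat.zero_le i)
    have := hm i
    lia
  refine ⟨μ, fun i => eq_of_forall_lt_iff fun j => ?_⟩
  rw [← mem_iff, YoungDiagram.mem_iff_lt_rowLen]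

lemma exists_strictAnti_range_eq {S : Set ℤ} (hW : ∀ v, v ∈ W ↔ -(m : ℤ) ≤ v ∧ v ∈ S)
    (hS : ∀ v < -(m : ℤ), v ∈ S) (hcard : W.card = m) :
    ∃ s : ℕ → ℤ, StrictAnti s ∧ Set.range s = S ∧ ∀ i, m ≤ i → s i = -i - 1 := by
  let e := W.orderEmbOfFin hcard
  obtain ⟨s, s_eq, s_large⟩ : ∃ s : ℕ → ℤ, (∀ i (h : i < m), s i = e (Fin.rev ⟨i, h⟩)) ∧
      ∀ i, m ≤ i → s i = -i - 1 :=
    ⟨fun i => if h : i < m then e (Fin.rev ⟨i, h⟩) else -i - 1,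
      fun _ h => dif_pos h, fun _ h => dif_neg h.not_gt⟩
  have s_mem (i : ℕ) (h : i < m) : -(m : ℤ) ≤ s i ∧ s i ∈ S :=
    (hW _).1 (s_eq i h ▸ W.orderEmbOfFin_mem hcard _)
  refine ⟨s, strictAnti_nat_of_succ_lt fun i => ?_, Set.Subset.antisymm ?_ fun v hv => ?_, s_large⟩
  · rcases lt_or_ge (i + 1) m with h | h
    · rw [s_eq _ h, s_eq _ (Nat.lt_of_succ_lt h)]
      exact e.strictMono (Fin.rev_lt_rev.2 (Nat.lt_succ_self i))
    · grind
  · rintro _ ⟨i, rfl⟩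
    rcases lt_or_ge i m with h | h
    · exact (s_mem i h).2
    · exact hS _ (by grind)
  · rcases lt_or_ge v (-m) with h | h
    · exact ⟨(-v - 1).toNat, by rw [s_large _ (by lia)]; lia⟩
    · obtain ⟨k, rfl⟩ : v ∈ Set.range e := by
        rw [Finset.range_orderEmbOfFin]
        exact (hW v).2 ⟨h, hv⟩
      exact ⟨k.rev, by rw [s_eq _ k.rev.isLt, Fin.eta, Fin.rev_rev]⟩

lemma exists_betaSet_eq {S : Set ℤ} (hW : ∀ v, v ∈ W ↔ -(m : ℤ) ≤ v ∧ v ∈ S)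
    (hS : ∀ v < -(m : ℤ), v ∈ S) (hcard : W.card = m) : ∃ μ : YoungDiagram, betaSet μ = S := by
  obtain ⟨s, s_anti, s_range, s_large⟩ := exists_strictAnti_range_eq hW hS hcard
  have add_anti : Antitone fun i => s i + i := antitone_nat_of_succ_le fun i => by
    have := s_anti (Nat.lt_succ_self i)
    push_cast
    lia
  obtain ⟨μ, hμ⟩ := exists_youngDiagram_rowLen_eq (r := fun i => (s i + i + 1).toNat) (m := m)
    (fun i j hij => Int.toNat_le_toNat (by have := add_anti hij; simp only at this; lia))
    (fun i hi => by have := s_large i hi; lia)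
  refine ⟨μ, s_range ▸ congrArg Set.range (funext fun i => ?_)⟩
  have hlow := add_anti (Nat.le_add_left i m)
  have := s_large (m + i) (Nat.le_add_right m i)
  simp only [betaNumber, hμ] at *
  lia

end BetaSet

section Abacus

lemma exists_forall_neg_le {ι : Type*} [Finite ι] (A : ι → ℤ) (c : ℕ) :
    ∃ M : ℕ, c ≤ M ∧ ∀ r, -(M : ℤ) ≤ A r := by
  have := Fintype.ofFinite ι
  refine ⟨c + ∑ r, (A r).natAbs, Nat.le_add_right _ _, fun r => ?_⟩
  have := Finset.single_le_sum (f := fun r => (A r).natAbs) (fun _ _ => Nat.zero_le _)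
    (Finset.mem_univ r)
  lia

/-- The beads on a `t`-runner abacus that is flush: on runner `r` (the residue class of `r` modulo
`t`) precisely the positions `u * t + r` with `u < A r` are occupied. -/
def abacusSet {t : ℕ} [NeZero t] (A : Fin t → ℤ) : Set ℤ :=
  {v | (Int.divModEquiv t v).1 < A (Int.divModEquiv t v).2}

variable {t : ℕ} [NeZero t] {A : Fin t → ℤ} {M : ℕ}

lemma mul_add_mem_abacusSet_iff {u : ℤ} {r : Fin t} : u * t + r ∈ abacusSet A ↔ u < A r := by
  have h : Int.divModEquiv t (u * t + r) = (u, r) := (Int.divModEquiv t).apply_symm_apply (u, r)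
  rw [abacusSet, Set.mem_ofPred_eq, h]

lemma exists_mul_add_eq (t : ℕ) [NeZero t] (v : ℤ) : ∃ (u : ℤ) (r : Fin t), u * t + r = v :=
  ⟨_, _, (Int.divModEquiv t).symm_apply_apply v⟩

lemma mul_add_injective (t : ℕ) [NeZero t] :
    Function.Injective fun x : (_ : Fin t) × ℤ => x.2 * t + (x.1 : ℤ) := by
  rintro ⟨r, u⟩ ⟨r', u'⟩ h
  have := (Int.divModEquiv t).symm.injective (a₁ := (u, r)) (a₂ := (u', r')) h
  simp_all

lemma abacusSet_injective : Function.Injective (abacusSet (t := t)) := fun A B h =>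
  funext fun r => eq_of_forall_lt_iff fun u => by
    rw [← mul_add_mem_abacusSet_iff, h, mul_add_mem_abacusSet_iff]

lemma sub_mem_abacusSet {v : ℤ} (hv : v ∈ abacusSet A) : v - t ∈ abacusSet A := by
  obtain ⟨u, r, rfl⟩ := exists_mul_add_eq t v
  rw [mul_add_mem_abacusSet_iff] at hv
  rw [show u * t + r - t = (u - 1) * t + (r : ℤ) by ring, mul_add_mem_abacusSet_iff]
  lia

/-- The part of `abacusSet A` lying in `[-M t, ∞)`. -/
noncomputable def abacusWindow (A : Fin t → ℤ) (M : ℕ) : Finset ℤ :=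
  (Finset.univ.sigma fun r => Finset.Ico (-(M : ℤ)) (A r)).map ⟨_, mul_add_injective t⟩

lemma neg_mul_le_mul_add_iff {u : ℤ} {r : Fin t} :
    -((M * t : ℕ) : ℤ) ≤ u * t + r ↔ -(M : ℤ) ≤ u := by
  have : (0 : ℤ) < t := mod_cast Nat.pos_of_neZero t
  have hr : ((r : ℕ) : ℤ) < t := mod_cast r.isLt
  push_cast
  constructor <;> intro h
  · by_contra! hlt
    nlinarith
  · nlinarith

lemma mem_abacusWindow_iff {v : ℤ} :
    v ∈ abacusWindow A M ↔ -((M * t : ℕ) : ℤ) ≤ v ∧ v ∈ abacusSet A := by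
  obtain ⟨u, r, rfl⟩ := exists_mul_add_eq t v
  rw [mul_add_mem_abacusSet_iff, neg_mul_le_mul_add_iff, abacusWindow,
    show u * t + (r : ℤ) = (⟨_, mul_add_injective t⟩ : _ ↪ ℤ) ⟨r, u⟩ from rfl, Finset.mem_map']
  simp

lemma mem_abacusSet_of_lt_neg_mul {v : ℤ} (hM : ∀ r, -(M : ℤ) ≤ A r)
    (hv : v < -((M * t : ℕ) : ℤ)) : v ∈ abacusSet A := by
  obtain ⟨u, r, rfl⟩ := exists_mul_add_eq t v
  rw [← not_le, neg_mul_le_mul_add_iff] at hv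
  exact mul_add_mem_abacusSet_iff.2 (lt_of_not_ge fun h => hv ((hM r).trans h))

lemma card_abacusWindow (hM : ∀ r, -(M : ℤ) ≤ A r) :
    ((abacusWindow A M).card : ℤ) = ∑ r, A r + (M * t : ℕ) := by
  rw [abacusWindow, Finset.card_map, Finset.card_sigma]
  push_cast
  rw [Finset.sum_congr rfl fun r _ => by
    rw [Int.card_Ico_of_le _ _ (hM r), sub_neg_eq_add], Finset.sum_add_distrib]
  simp [mul_comm]

lemma two_mul_sum_Ico {c d : ℤ} (h : c ≤ d) :
    2 * ∑ u ∈ Finset.Ico c d, u = d * (d - 1) - c * (c - 1) := by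
  induction d, h using Int.leInduction with
  | base => simp
  | succ d hd ih =>
    rw [← Order.succ_eq_add_one, ← Finset.insert_Ico_right_eq_Ico_succ hd,
      Finset.sum_insert (by simp), mul_add, ih, Order.succ_eq_add_one]
    ring

lemma two_mul_sum_abacusWindow (hM : ∀ r, -(M : ℤ) ≤ A r) :
    2 * ∑ v ∈ abacusWindow A M, v =
      ∑ r : Fin t, (t * (A r * (A r - 1) - M * (M + 1)) + 2 * r * (A r + M)) := by
  rw [abacusWindow, Finset.sum_map, Finset.sum_sigma, Finset.mul_sum]
  refine Finset.sum_congr rfl fun r _ => ?_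
  have hsum := two_mul_sum_Ico (hM r)
  have hcard := Int.card_Ico_of_le _ _ (hM r)
  simp only [Function.Embedding.coeFn_mk, Finset.sum_add_distrib, ← Finset.sum_mul,
    Finset.sum_const, nsmul_eq_mul, hcard]
  linear_combination (t : ℤ) * hsum

lemma abacusWindow_zero : abacusWindow (0 : Fin t → ℤ) M = Finset.Ico (-((M * t : ℕ) : ℤ)) 0 := by
  ext v
  obtain ⟨u, r, rfl⟩ := exists_mul_add_eq t v
  rw [mem_abacusWindow_iff, Finset.mem_Ico, mul_add_mem_abacusSet_iff, Pi.zero_apply]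
  have : (0 : ℤ) < t := mod_cast Nat.pos_of_neZero t
  have hr : ((r : ℕ) : ℤ) < t := mod_cast r.isLt
  refine and_congr_right fun _ => ⟨fun h => by nlinarith, fun h => ?_⟩
  by_contra! hge
  nlinarith

lemma exists_forall_iff_lt {P : ℤ → Prop} (hpred : ∀ u, P u → P (u - 1))
    (hbdd : ∃ b, ∀ u, P u → u ≤ b) (hne : ∃ u, P u) : ∃ a, ∀ u, P u ↔ u < a := by
  obtain ⟨b, hb, hmax⟩ := Int.exists_greatest_of_bdd hbdd hne
  have hdown (k : ℕ) : P (b - k) := by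
    induction k with
    | zero => simpa using hb
    | succ k ih => convert hpred _ ih using 1; push_cast; ring
  refine ⟨b + 1, fun u => ⟨fun hu => Int.lt_add_one_of_le (hmax u hu), fun hu => ?_⟩⟩
  convert hdown (b - u).toNat using 1
  lia

lemma exists_betaSet_eq_abacusSet {μ : YoungDiagram} (hμ : IsCore t μ) :
    ∃ A : Fin t → ℤ, betaSet μ = abacusSet A := by
  rw [isCore_iff_forall_sub_mem_betaSet] at hμ
  have ht : (1 : ℤ) ≤ t := mod_cast Nat.pos_of_neZero t
  have hrunner (r : Fin t) : ∃ a : ℤ, ∀ u : ℤ, u * t + r ∈ betaSet μ ↔ u < a := by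
    refine exists_forall_iff_lt (fun u hu => ?_) ⟨μ.rowLen 0, ?_⟩ ⟨-(μ.colLen 0 + 1 : ℤ), ?_⟩
    · convert hμ _ hu using 1
      ring
    · rintro u ⟨i, hi⟩
      have := (betaNumber_strictAnti μ).antitone (Nat.zero_le i)
      by_contra! hu
      simp only [betaNumber] at *
      nlinarith
    · have : ((r : ℕ) : ℤ) < t := mod_cast r.isLt
      exact mem_betaSet_of_lt_neg le_rfl (by nlinarith)
  choose A hA using hrunner
  refine ⟨A, Set.ext fun v => ?_⟩
  obtain ⟨u, r, rfl⟩ := exists_mul_add_eq t v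
  rw [hA, mul_add_mem_abacusSet_iff]

variable {μ : YoungDiagram}

lemma sum_eq_zero_of_betaSet_eq (h : betaSet μ = abacusSet A) : ∑ r, A r = 0 := by
  obtain ⟨M, hcM, hM⟩ := exists_forall_neg_le A (μ.colLen 0)
  have hm : μ.colLen 0 ≤ M * t := hcM.trans (Nat.le_mul_of_pos_right M (Nat.pos_of_neZero t))
  have hcard := card_window_betaSet hm (W := abacusWindow A M) fun v => h ▸ mem_abacusWindow_iff
  have := card_abacusWindow hM
  lia

lemma two_mul_card_of_betaSet_eq (h : betaSet μ = abacusSet A) :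
    2 * (μ.card : ℤ) = ∑ r : Fin t, (t * (A r * (A r - 1)) + 2 * r * A r) := by
  obtain ⟨M, hcM, hM⟩ := exists_forall_neg_le A (μ.colLen 0)
  have hm : μ.colLen 0 ≤ M * t := hcM.trans (Nat.le_mul_of_pos_right M (Nat.pos_of_neZero t))
  rw [card_eq_sum_window_betaSet hm (W := abacusWindow A M) fun v => h ▸ mem_abacusWindow_iff,
    ← abacusWindow_zero, mul_sub, two_mul_sum_abacusWindow hM,
    two_mul_sum_abacusWindow fun _ => by simp, ← Finset.sum_sub_distrib]
  refine Finset.sum_congr rfl fun r _ => ?_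
  rw [Pi.zero_apply]
  ring

lemma exists_betaSet_eq_abacusSet_of_sum_eq_zero (hA : ∑ r, A r = 0) :
    ∃ μ : YoungDiagram, betaSet μ = abacusSet A := by
  obtain ⟨M, -, hM⟩ := exists_forall_neg_le A 0
  refine exists_betaSet_eq (fun v => mem_abacusWindow_iff)
    (fun v => mem_abacusSet_of_lt_neg_mul hM) ?_
  have := card_abacusWindow hM
  lia

lemma isCore_of_betaSet_eq (h : betaSet μ = abacusSet A) : IsCore t μ :=
  isCore_iff_forall_sub_mem_betaSet.2 fun v hv => by rw [h] at hv ⊢; exact sub_mem_abacusSet hv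

theorem exists_coreEquiv (t : ℕ) [NeZero t] :
    ∃ e : {A : Fin t → ℤ // ∑ r, A r = 0} ≃ {μ : YoungDiagram // IsCore t μ},
      ∀ A, betaSet (e A) = abacusSet (A : Fin t → ℤ) := by
  choose μ hμ using fun A : {A : Fin t → ℤ // ∑ r, A r = 0} =>
    exists_betaSet_eq_abacusSet_of_sum_eq_zero A.2
  refine ⟨Equiv.ofBijective (fun A => ⟨μ A, isCore_of_betaSet_eq (hμ A)⟩)
    ⟨fun A B hAB => ?_, ?_⟩, hμ⟩
  · have hset : abacusSet (A : Fin t → ℤ) = abacusSet (B : Fin t → ℤ) := by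
      have hval : μ A = μ B := congrArg Subtype.val hAB
      rw [← hμ, ← hμ, hval]
    exact Subtype.ext (abacusSet_injective hset)
  · rintro ⟨ν, hν⟩
    obtain ⟨A, hA⟩ := exists_betaSet_eq_abacusSet hν
    exact ⟨⟨A, sum_eq_zero_of_betaSet_eq hA⟩,
      Subtype.ext (betaSet_injective ((hμ _).trans hA.symm))⟩

end Abacus

section TwistedSigma

open ArithmeticFunction

variable {n p : ℕ}

/-- The nontrivial Dirichlet character modulo `3`. -/
def chiThree : ArithmeticFunction ℤ := toArithmeticFunction fun n => quadraticChar (ZMod 3) n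

/-- The divisor sum `∑ d ∣ n, χ(d) (n / d) ^ k`, where `χ` is the character `chiThree`. -/
def twistedSigma (k : ℕ) : ArithmeticFunction ℤ := chiThree * (pow k : ArithmeticFunction ℤ)

lemma chiThree_apply (n : ℕ) : chiThree n = quadraticChar (ZMod 3) n := by
  rcases eq_or_ne n 0 with rfl | hn <;> simp [chiThree, toArithmeticFunction, *]

lemma chiThree_of_mod_eq_zero (h : n % 3 = 0) : chiThree n = 0 := by
  rw [chiThree_apply, ← ZMod.natCast_mod, h]
  simp

lemma chiThree_of_mod_eq_one (h : n % 3 = 1) : chiThree n = 1 := by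
  rw [chiThree_apply, ← ZMod.natCast_mod, h]
  decide

lemma chiThree_of_mod_eq_two (h : n % 3 = 2) : chiThree n = -1 := by
  rw [chiThree_apply, ← ZMod.natCast_mod, h]
  decide

lemma isMultiplicative_twistedSigma (k : ℕ) : (twistedSigma k).IsMultiplicative :=
  (DirichletCharacter.isMultiplicative_toArithmeticFunction (quadraticChar (ZMod 3))).mul
    isMultiplicative_pow.natCast

lemma twistedSigma_prime_pow (hp : p.Prime) (k m : ℕ) :
    twistedSigma k (p ^ m) =
      ∑ i ∈ Finset.range (m + 1), chiThree p ^ i * ((p : ℤ) ^ k) ^ (m - i) := by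
  rw [twistedSigma, mul_apply,
    Nat.sum_divisorsAntidiagonal fun d e => chiThree d * (pow k : ArithmeticFunction ℤ) e,
    Nat.sum_divisors_prime_pow hp]
  refine Finset.sum_congr rfl fun i hi => ?_
  have hi := Nat.lt_succ_iff.1 (Finset.mem_range.1 hi)
  rw [Nat.pow_div hi hp.pos, chiThree_apply, chiThree_apply, Nat.cast_pow, map_pow, natCoe_apply,
    pow_apply, if_neg]
  · push_cast
    ring
  · simp [hp.ne_zero]

lemma twistedSigma_prime_pow_mul (hp : p.Prime) (k m : ℕ) :
    twistedSigma k (p ^ m) * ((p : ℤ) ^ k - chiThree p) =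
      ((p : ℤ) ^ k) ^ (m + 1) - chiThree p ^ (m + 1) := by
  have h := geom_sum₂_mul (chiThree p) ((p : ℤ) ^ k) (m + 1)
  rw [twistedSigma_prime_pow hp]
  simp only [Nat.add_sub_cancel] at h
  linear_combination -h

end TwistedSigma

/-- The Eisenstein integers `ℤ[ω]`, where `ω ^ 2 + ω + 1 = 0`. -/
abbrev Eisenstein : Type := QuadraticAlgebra ℤ (-1) (-1)

namespace Eisenstein

open QuadraticAlgebra

variable {x y z : Eisenstein} {m n p : ℕ}

lemma norm_eq (x : Eisenstein) : x.norm = x.re ^ 2 - x.re * x.im + x.im ^ 2 := by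
  rw [norm_def]
  ring

lemma norm_nonneg (x : Eisenstein) : 0 ≤ x.norm := by
  rw [norm_eq]
  nlinarith [sq_nonneg (2 * x.re - x.im), sq_nonneg x.im]

lemma norm_eq_zero_iff : x.norm = 0 ↔ x = 0 := by
  refine ⟨fun h => ?_, fun h => by rw [h, QuadraticAlgebra.norm_zero]⟩
  rw [norm_eq] at h
  have him : x.im = 0 := by nlinarith [sq_nonneg (2 * x.re - x.im)]
  have hre : x.re = 0 := by simpa [him] using h
  exact QuadraticAlgebra.ext hre him

lemma norm_pos (hx : x ≠ 0) : 0 < x.norm :=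
  (norm_nonneg x).lt_of_ne' (norm_eq_zero_iff.not.2 hx)

lemma isUnit_iff_norm_eq_one : IsUnit x ↔ x.norm = 1 := by
  rw [isUnit_iff_norm_isUnit, Int.isUnit_iff]
  have := norm_nonneg x
  lia

lemma intCast_norm_eq_mul_star (x : Eisenstein) : (x.norm : Eisenstein) = x * star x :=
  algebraMap_norm_eq_mul_star x

lemma two_mul_abs_bmod_le (k : ℤ) {m : ℕ} (hm : 0 < m) : 2 * |k.bmod m| ≤ m := by
  have hge := Int.le_bmod (x := k) hm
  have hle := Int.bmod_le (x := k) hm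
  rcases abs_cases (k.bmod m) with h | h <;> omega

/-- The quotient `x / y = x * star y / norm y`, with both coordinates rounded to a nearest
integer. -/
def roundedQuotient (x y : Eisenstein) : Eisenstein :=
  ⟨(x * star y).re.bdiv y.norm.natAbs, (x * star y).im.bdiv y.norm.natAbs⟩

lemma sub_mul_roundedQuotient_mul_star (x y : Eisenstein) :
    (x - y * roundedQuotient x y) * star y =
      ⟨(x * star y).re.bmod y.norm.natAbs, (x * star y).im.bmod y.norm.natAbs⟩ := by
  rw [sub_mul, mul_right_comm, ← intCast_norm_eq_mul_star, roundedQuotient]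
  generalize x * star y = w
  have hN : (y.norm.natAbs : ℤ) = y.norm := Int.natAbs_of_nonneg (norm_nonneg y)
  have hre := Int.bmod_add_bdiv w.re y.norm.natAbs
  have him := Int.bmod_add_bdiv w.im y.norm.natAbs
  rw [hN] at hre him
  ext
  · simp only [re_sub, re_mul, re_intCast, im_intCast]
    linear_combination -hre
  · simp only [im_sub, im_mul, re_intCast, im_intCast]
    linear_combination -him

lemma norm_sub_mul_roundedQuotient_lt (x : Eisenstein) (hy : y ≠ 0) :
    (x - y * roundedQuotient x y).norm < y.norm := by
  have hN : (y.norm.natAbs : ℤ) = y.norm := Int.natAbs_of_nonneg (norm_nonneg y)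
  have hpos := Int.natAbs_pos.2 (norm_pos hy).ne'
  have hnorm := congrArg QuadraticAlgebra.norm (sub_mul_roundedQuotient_mul_star x y)
  rw [map_mul, QuadraticAlgebra.norm_star] at hnorm
  have hre := two_mul_abs_bmod_le (x * star y).re hpos
  have him := two_mul_abs_bmod_le (x * star y).im hpos
  generalize (x * star y).re.bmod y.norm.natAbs = r at *
  generalize (x * star y).im.bmod y.norm.natAbs = s at *
  rw [norm_eq ⟨r, s⟩] at hnorm
  rw [hN] at hre him
  have hbound : 4 * (r ^ 2 - r * s + s ^ 2) ≤ 3 * y.norm ^ 2 := by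
    have := abs_nonneg r
    have := abs_nonneg s
    nlinarith [sq_abs r, sq_abs s, neg_abs_le (r * s), abs_mul r s]
  nlinarith [norm_pos hy]

lemma norm_le_norm_mul (x : Eisenstein) (hy : y ≠ 0) : x.norm ≤ (x * y).norm := by
  rw [map_mul]
  exact le_mul_of_one_le_right (norm_nonneg x) (norm_pos hy)

instance : EuclideanDomain Eisenstein :=
  { (inferInstance : CommRing Eisenstein), (inferInstance : Nontrivial Eisenstein) with
    quotient := roundedQuotient
    quotient_zero x := by simp [roundedQuotient, Int.bdiv]; rfl
    remainder x y := x - y * roundedQuotient x y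
    quotient_mul_add_remainder_eq x y := add_sub_cancel _ _
    r := Function.onFun (· < ·) fun x : Eisenstein => x.norm.natAbs
    r_wellFounded := (measure fun x : Eisenstein => x.norm.natAbs).wf
    remainder_lt x y hy :=
      Int.natAbs_lt_natAbs_of_nonneg_of_lt (norm_nonneg _) (norm_sub_mul_roundedQuotient_lt x hy)
    mul_left_not_lt x y hy := not_lt_of_ge <| by
      have := norm_le_norm_mul x hy
      have := norm_nonneg x
      lia }

lemma irreducible_of_norm_eq_prime (hp : p.Prime) (hx : x.norm = p) : Irreducible x := by
  refine ⟨fun h => hp.ne_one ?_, fun a b hab => ?_⟩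
  · exact_mod_cast hx.symm.trans (isUnit_iff_norm_eq_one.1 h)
  · have hmul : (p : ℤ) = a.norm * b.norm := by rw [← map_mul, ← hab, hx]
    rw [isUnit_iff_norm_isUnit, isUnit_iff_norm_isUnit]
    exact (Nat.prime_iff_prime_int.1 hp).irreducible.isUnit_or_isUnit hmul

/-- `x ≡ 1` modulo `3`. Every Eisenstein integer of norm prime to `3` has exactly one such
associate. -/
def IsPrimary (x : Eisenstein) : Prop := 3 ∣ x - 1

lemma isPrimary_iff : x.IsPrimary ↔ 3 ∣ x.re - 1 ∧ 3 ∣ x.im := by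
  constructor
  · rintro ⟨y, hy⟩
    have hre := congrArg QuadraticAlgebra.re hy
    have him := congrArg QuadraticAlgebra.im hy
    exact ⟨⟨y.re, by simpa using hre⟩, ⟨y.im, by simpa using him⟩⟩
  · rintro ⟨⟨a, ha⟩, ⟨b, hb⟩⟩
    exact ⟨⟨a, b⟩, by ext <;> simp [ha, hb]⟩

namespace IsPrimary

lemma one : IsPrimary 1 := by simp [IsPrimary]

lemma mul (hx : x.IsPrimary) (hy : y.IsPrimary) : (x * y).IsPrimary := by
  rw [IsPrimary, show x * y - 1 = (x - 1) * y + (y - 1) by ring]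
  exact dvd_add (hx.mul_right y) hy

lemma of_mul (hx : x.IsPrimary) (hxy : (x * y).IsPrimary) : y.IsPrimary := by
  rw [IsPrimary, show y - 1 = x * y - 1 - (x - 1) * y by ring]
  exact dvd_sub hxy (hx.mul_right y)

lemma pow (hx : x.IsPrimary) (k : ℕ) : (x ^ k).IsPrimary := by
  induction k with
  | zero => exact pow_zero x ▸ one
  | succ k ih => exact pow_succ x k ▸ ih.mul hx

lemma star (hx : x.IsPrimary) : (star x).IsPrimary := by
  rw [isPrimary_iff] at *
  simp
  lia

lemma norm_emod_three (hx : x.IsPrimary) : x.norm % 3 = 1 := by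
  obtain ⟨⟨a, ha⟩, ⟨b, hb⟩⟩ := isPrimary_iff.1 hx
  rw [norm_eq, eq_add_of_sub_eq ha, hb]
  ring_nf
  lia

lemma ne_zero (hx : x.IsPrimary) : x ≠ 0 := by
  rintro rfl
  simpa using hx.norm_emod_three

lemma eq_one_of_norm_eq_one (hx : x.IsPrimary) (h : x.norm = 1) : x = 1 := by
  obtain ⟨hre, him⟩ := isPrimary_iff.1 hx
  rw [norm_eq] at h
  have : x.im ^ 2 ≤ 1 := by nlinarith [sq_nonneg (2 * x.re - x.im)]
  have him0 : x.im = 0 := by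
    have := abs_le.1 (sq_le_one_iff_abs_le_one x.im |>.1 this)
    lia
  rw [him0] at h
  have : (x.re - 1) * (x.re + 1) = 0 := by linarith
  rcases mul_eq_zero.1 this with h1 | h1
  · ext <;> simp <;> lia
  · lia

lemma eq_of_dvd_of_norm_eq (hx : x.IsPrimary) (hy : y.IsPrimary) (hdvd : x ∣ y)
    (hnorm : x.norm = y.norm) : x = y := by
  obtain ⟨u, rfl⟩ := hdvd
  have hu : u.norm = 1 :=
    mul_left_cancel₀ (norm_pos hx.ne_zero).ne' (by rw [← map_mul, ← hnorm, mul_one])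
  rw [(hx.of_mul hy).eq_one_of_norm_eq_one hu, mul_one]

end IsPrimary

lemma exists_isUnit_mul_isPrimary (hx : ¬ 3 ∣ x.norm) : ∃ u, IsUnit u ∧ (u * x).IsPrimary := by
  have hsum : (x.re + x.im) % 3 ≠ 0 := fun h => hx <| by
    obtain ⟨k, hk⟩ := Int.dvd_of_emod_eq_zero h
    refine ⟨3 * k ^ 2 - x.re * x.im, ?_⟩
    rw [norm_eq]
    linear_combination (x.re + x.im + 3 * k) * hk
  suffices ∃ u : Eisenstein, u.norm = 1 ∧ (u * x).IsPrimary by simpa only [isUnit_iff_norm_eq_one]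
  simp only [isPrimary_iff, re_mul, im_mul, norm_eq]
  obtain h | h | h | h | h | h :
      x.re % 3 = 1 ∧ x.im % 3 = 0 ∨ x.re % 3 = 2 ∧ x.im % 3 = 0 ∨ x.re % 3 = 0 ∧ x.im % 3 = 1 ∨
      x.re % 3 = 0 ∧ x.im % 3 = 2 ∨ x.re % 3 = 1 ∧ x.im % 3 = 1 ∨ x.re % 3 = 2 ∧ x.im % 3 = 2 := by
    lia
  · exact ⟨⟨1, 0⟩, by norm_num; lia⟩
  · exact ⟨⟨-1, 0⟩, by norm_num; lia⟩
  · exact ⟨⟨-1, -1⟩, by norm_num; lia⟩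
  · exact ⟨⟨1, 1⟩, by norm_num; lia⟩
  · exact ⟨⟨0, -1⟩, by norm_num; lia⟩
  · exact ⟨⟨0, 1⟩, by norm_num; lia⟩

lemma norm_emod_three_eq_one (hx : ¬ 3 ∣ x.norm) : x.norm % 3 = 1 := by
  obtain ⟨u, hu, hprimary⟩ := exists_isUnit_mul_isPrimary hx
  have h := hprimary.norm_emod_three
  rwa [map_mul, isUnit_iff_norm_eq_one.1 hu, one_mul] at h

/-- The primary Eisenstein integers of norm `m`. -/
def primaryOfNorm (m : ℕ) : Set Eisenstein := {x | x.IsPrimary ∧ x.norm = m}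

lemma star_mem_primaryOfNorm (hx : x ∈ primaryOfNorm m) : star x ∈ primaryOfNorm m :=
  ⟨hx.1.star, (QuadraticAlgebra.norm_star x).trans hx.2⟩

lemma mul_mem_primaryOfNorm (hx : x ∈ primaryOfNorm m) (hy : y ∈ primaryOfNorm n) :
    x * y ∈ primaryOfNorm (m * n) :=
  ⟨hx.1.mul hy.1, by rw [map_mul, hx.2, hy.2, Nat.cast_mul]⟩

lemma pow_mem_primaryOfNorm (hx : x ∈ primaryOfNorm m) (k : ℕ) :
    x ^ k ∈ primaryOfNorm (m ^ k) :=
  ⟨hx.1.pow k, by rw [map_pow, hx.2, Nat.cast_pow]⟩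

lemma mem_primaryOfNorm_of_mul (hm : m ≠ 0) (hx : x ∈ primaryOfNorm m)
    (hxy : x * y ∈ primaryOfNorm (m * n)) : y ∈ primaryOfNorm n := by
  refine ⟨hx.1.of_mul hxy.1, mul_left_cancel₀ (Nat.cast_ne_zero.2 hm : (m : ℤ) ≠ 0) ?_⟩
  rw [← hx.2, ← map_mul, hxy.2, hx.2, Nat.cast_mul]

lemma isCoprime_of_norm_coprime (hmn : m.Coprime n) (hx : x.norm = m) (hy : y.norm = n) :
    IsCoprime x y := by
  have h : IsCoprime (m : Eisenstein) (n : Eisenstein) := mod_cast hmn.cast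
  refine (h.of_isCoprime_of_dvd_left ?_).of_isCoprime_of_dvd_right ?_
  · exact ⟨star x, by rw [← intCast_norm_eq_mul_star, hx, Int.cast_natCast]⟩
  · exact ⟨star y, by rw [← intCast_norm_eq_mul_star, hy, Int.cast_natCast]⟩

lemma mul_injOn_primaryOfNorm (hmn : m.Coprime n) :
    Set.InjOn (fun w : Eisenstein × Eisenstein => w.1 * w.2)
      (primaryOfNorm m ×ˢ primaryOfNorm n) := by
  rintro ⟨x, y⟩ ⟨⟨hx, hxm⟩, -⟩ ⟨x', y'⟩ ⟨⟨hx', hxm'⟩, ⟨-, hyn'⟩⟩ heq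
  have hdvd : x ∣ x' :=
    (isCoprime_of_norm_coprime hmn hxm hyn').dvd_of_dvd_mul_right (Dvd.intro y heq)
  obtain rfl := hx.eq_of_dvd_of_norm_eq hx' hdvd (hxm.trans hxm'.symm)
  exact Prod.ext rfl (mul_left_cancel₀ hx.ne_zero heq)

lemma exists_mul_eq_of_norm_eq_mul (hmn : m.Coprime n) (hz : z.norm = (m * n : ℕ)) :
    ∃ x y : Eisenstein, x * y = z ∧ x.norm = m ∧ y.norm = n := by
  have hdvd : z ∣ (m : Eisenstein) * n :=
    ⟨star z, by rw [← intCast_norm_eq_mul_star, hz, Int.cast_natCast, Nat.cast_mul]⟩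
  obtain ⟨x, y, hxm, hyn, rfl⟩ := exists_dvd_and_dvd_of_dvd_mul hdvd
  obtain ⟨a, ha⟩ := Int.eq_ofNat_of_zero_le (norm_nonneg x)
  obtain ⟨b, hb⟩ := Int.eq_ofNat_of_zero_le (norm_nonneg y)
  have ham : a ∣ m ^ 2 := by
    have := map_dvd QuadraticAlgebra.norm hxm
    rw [QuadraticAlgebra.norm_natCast, ha] at this
    exact_mod_cast this
  have hbn : b ∣ n ^ 2 := by
    have := map_dvd QuadraticAlgebra.norm hyn
    rw [QuadraticAlgebra.norm_natCast, hb] at this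
    exact_mod_cast this
  have hab : a * b = m * n := by
    rw [map_mul, ha, hb] at hz
    exact_mod_cast hz
  have han : a.Coprime n := (hmn.pow_left 2).coprime_dvd_left ham
  have hmb : m.Coprime b := (hmn.pow_right 2).coprime_dvd_right hbn
  refine ⟨x, y, rfl, ha.trans ?_, hb.trans ?_⟩
  · exact_mod_cast Nat.dvd_antisymm (han.dvd_of_dvd_mul_right (Dvd.intro b hab))
      (hmb.dvd_of_dvd_mul_right (Dvd.intro n hab.symm))
  · exact_mod_cast Nat.dvd_antisymm (hmb.symm.dvd_of_dvd_mul_left (Dvd.intro_left a hab))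
      (han.symm.dvd_of_dvd_mul_left (Dvd.intro_left m hab.symm))

lemma primaryOfNorm_mul_eq_image (hmn : m.Coprime n) : primaryOfNorm (m * n) =
    (fun w : Eisenstein × Eisenstein => w.1 * w.2) '' (primaryOfNorm m ×ˢ primaryOfNorm n) := by
  refine Set.Subset.antisymm (fun z ⟨hz, hzn⟩ => ?_) ?_
  · obtain ⟨x, y, rfl, hx, hy⟩ := exists_mul_eq_of_norm_eq_mul hmn hzn
    have hx3 : ¬ 3 ∣ x.norm := fun h => by
      have := hz.norm_emod_three
      rw [map_mul, Int.emod_eq_zero_of_dvd (h.mul_right _)] at this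
      lia
    obtain ⟨_, ⟨u, rfl⟩, hux⟩ := exists_isUnit_mul_isPrimary hx3
    have hprod : u * x * (↑u⁻¹ * y) = x * y := by
      rw [mul_mul_mul_comm, Units.mul_inv, one_mul]
    refine ⟨(u * x, ↑u⁻¹ * y), ⟨⟨hux, ?_⟩, ⟨hux.of_mul (hprod ▸ hz), ?_⟩⟩, hprod⟩
    · rw [map_mul, isUnit_iff_norm_eq_one.1 u.isUnit, one_mul, hx]
    · rw [map_mul, isUnit_iff_norm_eq_one.1 u⁻¹.isUnit, one_mul, hy]
  · rintro _ ⟨w, ⟨hx, hy⟩, rfl⟩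
    exact mul_mem_primaryOfNorm hx hy

lemma card_primaryOfNorm_mul (hmn : m.Coprime n) :
    Nat.card (primaryOfNorm (m * n)) =
      Nat.card (primaryOfNorm m) * Nat.card (primaryOfNorm n) := by
  rw [primaryOfNorm_mul_eq_image hmn, Nat.card_image_of_injOn (mul_injOn_primaryOfNorm hmn),
    Nat.card_congr (Equiv.Set.prod _ _), Nat.card_prod]

lemma primaryOfNorm_one : primaryOfNorm 1 = {1} := by
  ext x
  refine ⟨fun ⟨hx, h⟩ => hx.eq_one_of_norm_eq_one (by simpa using h), ?_⟩
  rintro rfl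
  exact ⟨.one, by simp⟩

lemma primaryOfNorm_eq_empty (hm : m % 3 ≠ 1) : primaryOfNorm m = ∅ :=
  Set.eq_empty_of_forall_notMem fun x ⟨hx, hnorm⟩ => hm <| by
    have := hx.norm_emod_three
    lia

lemma star_dvd_of_dvd_star (h : x ∣ star y) : star x ∣ y := by
  simpa only [starRingEnd_apply, star_star] using map_dvd (starRingEnd Eisenstein) h

lemma irreducible_natCast_or_exists_norm_eq (hp : p.Prime) :
    Irreducible (p : Eisenstein) ∨ ∃ x : Eisenstein, x.norm = p := by
  refine or_iff_not_imp_right.2 fun hno => ⟨fun h => hp.ne_one ?_, fun a b hab => ?_⟩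
  · have := isUnit_iff_norm_eq_one.1 h
    rw [QuadraticAlgebra.norm_natCast] at this
    exact (Nat.pow_eq_one.1 (mod_cast this)).resolve_right two_ne_zero
  · have hmul : a.norm * b.norm = (p : ℤ) ^ 2 := by
      rw [← map_mul, ← hab, QuadraticAlgebra.norm_natCast]
    rw [isUnit_iff_norm_eq_one, isUnit_iff_norm_eq_one]
    obtain ⟨c, hc⟩ := Int.eq_ofNat_of_zero_le (norm_nonneg a)
    obtain ⟨d, hd⟩ := Int.eq_ofNat_of_zero_le (norm_nonneg b)
    by_contra! h
    rw [hc, hd] at hmul h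
    have hcp : c = p :=
      ((hp.mul_eq_prime_sq_iff (mod_cast h.1) (mod_cast h.2)).1 (mod_cast hmul)).1
    exact hno ⟨a, hcp ▸ hc⟩

lemma irreducible_natCast (hp : p.Prime) (hp3 : p % 3 = 2) : Irreducible (p : Eisenstein) :=
  (irreducible_natCast_or_exists_norm_eq hp).resolve_right fun ⟨x, hx⟩ => by
    have := norm_emod_three_eq_one (x := x)
    lia

lemma primaryOfNorm_prime_pow_add_two (hp : p.Prime) (hp3 : p % 3 = 2) (k : ℕ) :
    primaryOfNorm (p ^ (k + 2)) = (fun x : Eisenstein => -p * x) '' primaryOfNorm (p ^ k) := by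
  have hneg : (-p : Eisenstein) ∈ primaryOfNorm (p ^ 2) :=
    ⟨isPrimary_iff.2 (by simp; lia), by
      rw [QuadraticAlgebra.norm_neg, QuadraticAlgebra.norm_natCast, Nat.cast_pow]⟩
  rw [add_comm k, pow_add]
  refine Set.Subset.antisymm (fun z hz => ?_) ?_
  · have hdvd : (p : Eisenstein) ∣ z * star z := by
      rw [← intCast_norm_eq_mul_star, hz.2, pow_two, mul_assoc]
      push_cast
      exact dvd_mul_right _ _
    have hpz : (p : Eisenstein) ∣ z :=
      ((irreducible_natCast hp hp3).prime.dvd_or_dvd hdvd).elim id fun h => by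
        simpa using star_dvd_of_dvd_star h
    obtain ⟨w, rfl⟩ := neg_dvd.2 hpz
    exact ⟨w, mem_primaryOfNorm_of_mul (pow_ne_zero 2 hp.ne_zero) hneg hz, rfl⟩
  · rintro _ ⟨x, hx, rfl⟩
    exact mul_mem_primaryOfNorm hneg hx

lemma card_primaryOfNorm_prime_pow_of_mod_three_eq_two (hp : p.Prime) (hp3 : p % 3 = 2) (k : ℕ) :
    (Nat.card (primaryOfNorm (p ^ k)) : ℤ) = ∑ i ∈ Finset.range (k + 1), (-1) ^ i := by
  induction k using Nat.twoStepInduction with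
  | zero => simp [primaryOfNorm_one]
  | one => simp [primaryOfNorm_eq_empty (m := p) (by lia), Finset.sum_range_succ]
  | more k ih _ =>
    rw [primaryOfNorm_prime_pow_add_two hp hp3, Nat.card_image_of_injective, ih,
      Finset.sum_range_succ _ (k + 2), Finset.sum_range_succ _ (k + 1)]
    · ring
    · exact mul_right_injective₀ (neg_ne_zero.2 (Nat.cast_ne_zero.2 hp.ne_zero))

lemma exists_dvd_sq_add_self_add_one (hp : p.Prime) (hp3 : p % 3 = 1) :
    ∃ a : ℤ, (p : ℤ) ∣ a ^ 2 + a + 1 := by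
  have : Fact p.Prime := ⟨hp⟩
  have : Fact (Nat.Prime 3) := ⟨Nat.prime_three⟩
  obtain ⟨g, hg⟩ := exists_prime_orderOf_dvd_card (G := (ZMod p)ˣ) 3 (by
    rw [ZMod.card_units]
    lia)
  have hpow : ((g : ZMod p) - 1) * ((g : ZMod p) ^ 2 + g + 1) = 0 := by
    have hg3 : (g : ZMod p) ^ 3 = 1 := by
      rw [← Units.val_pow_eq_pow_val, ← hg, pow_orderOf_eq_one, Units.val_one]
    linear_combination hg3
  have hne : (g : ZMod p) - 1 ≠ 0 := fun h => by
    rw [Units.val_eq_one.1 (sub_eq_zero.1 h), orderOf_one] at hg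
    lia
  obtain ⟨a, ha⟩ := ZMod.intCast_surjective (g : ZMod p)
  refine ⟨a, (ZMod.intCast_zmod_eq_zero_iff_dvd _ p).1 ?_⟩
  push_cast
  rw [ha]
  exact (mul_eq_zero.1 hpow).resolve_left hne

lemma natCast_dvd_im (h : (n : Eisenstein) ∣ x) : (n : ℤ) ∣ x.im := by
  obtain ⟨y, rfl⟩ := h
  exact ⟨y.im, by simp⟩

lemma primaryOfNorm_prime_nonempty (hp : p.Prime) (hp3 : p % 3 = 1) :
    (primaryOfNorm p).Nonempty := by
  obtain ⟨a, c, hc⟩ := exists_dvd_sq_add_self_add_one hp hp3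
  have hdvd : (p : Eisenstein) ∣ (⟨a, -1⟩ : Eisenstein) * star ⟨a, -1⟩ := by
    rw [← intCast_norm_eq_mul_star, norm_eq]
    exact ⟨c, by rw [← Int.cast_natCast, ← Int.cast_mul, ← hc]; ring_nf⟩
  have hreducible : ¬ Irreducible (p : Eisenstein) := fun h => by
    have : (p : Eisenstein) ∣ ⟨a, -1⟩ :=
      (h.prime.dvd_or_dvd hdvd).elim id fun h => by simpa using star_dvd_of_dvd_star h
    have := Int.natCast_dvd.1 (natCast_dvd_im this)
    exact hp.one_lt.ne' (by simpa using this)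
  obtain ⟨x, hx⟩ := (irreducible_natCast_or_exists_norm_eq hp).resolve_left hreducible
  obtain ⟨u, hu, hux⟩ := exists_isUnit_mul_isPrimary (x := x) (by lia)
  exact ⟨u * x, hux, by rw [map_mul, isUnit_iff_norm_eq_one.1 hu, one_mul, hx]⟩

section Split

variable {π : Eisenstein}

lemma prime_of_mem_primaryOfNorm (hp : p.Prime) (hπ : π ∈ primaryOfNorm p) : Prime π :=
  (irreducible_of_norm_eq_prime hp hπ.2).prime

lemma not_dvd_star (hp : p.Prime) (hπ : π ∈ primaryOfNorm p) : ¬ π ∣ star π := fun h => by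
  have heq := hπ.1.eq_of_dvd_of_norm_eq hπ.1.star h (QuadraticAlgebra.norm_star π).symm
  have him : π.im = 0 := by
    have := congrArg QuadraticAlgebra.im heq
    simp only [im_star] at this
    lia
  have hsq : (p : ℤ) = π.re * π.re := by
    rw [← hπ.2, norm_eq, him]
    ring
  exact (Nat.prime_iff_prime_int.1 hp).irreducible.not_isSquare ⟨π.re, hsq⟩

lemma exists_pow_mul_star_pow_eq (hp : p.Prime) (hπ : π ∈ primaryOfNorm p) {k : ℕ}
    (hz : z ∈ primaryOfNorm (p ^ k)) : ∃ i j, i + j = k ∧ π ^ i * star π ^ j = z := by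
  induction k generalizing z with
  | zero =>
    rw [pow_zero, primaryOfNorm_one] at hz
    exact ⟨0, 0, rfl, by simpa using Eq.symm hz⟩
  | succ k ih =>
    have hdvd : π ∣ z * star z := by
      rw [← intCast_norm_eq_mul_star, hz.2, pow_succ', Nat.cast_mul, ← hπ.2, Int.cast_mul,
        intCast_norm_eq_mul_star, mul_assoc]
      exact dvd_mul_right _ _
    rw [pow_succ'] at hz
    rcases (prime_of_mem_primaryOfNorm hp hπ).dvd_or_dvd hdvd with h | h
    · obtain ⟨w, rfl⟩ := h
      obtain ⟨i, j, hij, rfl⟩ := ih (mem_primaryOfNorm_of_mul hp.ne_zero hπ hz)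
      exact ⟨i + 1, j, by lia, by ring⟩
    · obtain ⟨w, rfl⟩ := star_dvd_of_dvd_star h
      obtain ⟨i, j, hij, rfl⟩ :=
        ih (mem_primaryOfNorm_of_mul hp.ne_zero (star_mem_primaryOfNorm hπ) hz)
      exact ⟨i, j + 1, by lia, by ring⟩

lemma primaryOfNorm_prime_pow_eq_image (hp : p.Prime) (hπ : π ∈ primaryOfNorm p) (k : ℕ) :
    primaryOfNorm (p ^ k) =
      (fun i => π ^ i * star π ^ (k - i)) '' (Finset.range (k + 1) : Set ℕ) := by
  ext z
  constructor
  · intro hz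
    obtain ⟨i, j, rfl, rfl⟩ := exists_pow_mul_star_pow_eq hp hπ hz
    exact ⟨i, by simp, by simp⟩
  · rintro ⟨i, hi, rfl⟩
    have := mul_mem_primaryOfNorm (pow_mem_primaryOfNorm hπ i)
      (pow_mem_primaryOfNorm (star_mem_primaryOfNorm hπ) (k - i))
    rwa [← pow_add, Nat.add_sub_cancel' (by simpa [Nat.lt_succ_iff] using hi)] at this

lemma pow_mul_star_pow_injective (hp : p.Prime) (hπ : π ∈ primaryOfNorm p) (k : ℕ) :
    Function.Injective fun i => π ^ i * star π ^ (k - i) := by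
  have hprime := prime_of_mem_primaryOfNorm hp hπ
  have hmult (i : ℕ) : emultiplicity π (π ^ i * star π ^ (k - i)) = i := by
    rw [emultiplicity_mul hprime, emultiplicity_pow_self hprime.ne_zero hprime.not_isUnit,
      emultiplicity_eq_zero.2 fun h => not_dvd_star hp hπ (hprime.dvd_of_dvd_pow h), add_zero]
  exact fun i j h => ENat.natCast_inj.1 ((hmult i).symm.trans ((congrArg _ h).trans (hmult j)))

end Split

lemma card_primaryOfNorm_prime_pow_of_mod_three_eq_one (hp : p.Prime) (hp3 : p % 3 = 1) (k : ℕ) :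
    Nat.card (primaryOfNorm (p ^ k)) = k + 1 := by
  obtain ⟨π, hπ⟩ := primaryOfNorm_prime_nonempty hp hp3
  rw [primaryOfNorm_prime_pow_eq_image hp hπ,
    Nat.card_image_of_injective (pow_mul_star_pow_injective hp hπ k)]
  simp

theorem card_primaryOfNorm (hm : ¬ 3 ∣ m) :
    (Nat.card (primaryOfNorm m) : ℤ) = twistedSigma 0 m := by
  induction m using Nat.recOnPrimeCoprime with
  | zero => exact absurd (dvd_zero 3) hm
  | prime_pow p k hp =>
    rcases k.eq_zero_or_pos with rfl | hk
    · simp [primaryOfNorm_one, (isMultiplicative_twistedSigma 0).map_one]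
    have hp3 : p % 3 ≠ 0 := fun h => hm (dvd_pow (Nat.dvd_of_mod_eq_zero h) hk.ne')
    rw [twistedSigma_prime_pow hp]
    obtain h | h : p % 3 = 1 ∨ p % 3 = 2 := by lia
    · simp [card_primaryOfNorm_prime_pow_of_mod_three_eq_one hp h, chiThree_of_mod_eq_one h]
    · rw [card_primaryOfNorm_prime_pow_of_mod_three_eq_two hp h, chiThree_of_mod_eq_two h]
      simp only [pow_zero, one_pow, mul_one]
  | coprime a b _ _ hab iha ihb =>
    rw [card_primaryOfNorm_mul hab, Nat.cast_mul, iha fun h => hm (h.mul_right b),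
      ihb fun h => hm (h.mul_left a), (isMultiplicative_twistedSigma 0).map_mul_of_coprime hab]

end Eisenstein

section CoreCount

open QuadraticAlgebra

/-- The charges of the three runners of an abacus of a `3`-core, encoded as the primary Eisenstein
integer `1 + 3 (-A 0 + A 1 ω)`. -/
def chargeEquiv : {A : Fin 3 → ℤ // ∑ r, A r = 0} ≃ {x : Eisenstein // x.IsPrimary} where
  toFun A := ⟨⟨1 - 3 * A.1 0, 3 * A.1 1⟩, Eisenstein.isPrimary_iff.2 ⟨by simp, by simp⟩⟩
  invFun x := ⟨![(1 - x.1.re) / 3, x.1.im / 3, -((1 - x.1.re) / 3) - x.1.im / 3],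
    by simp [Fin.sum_univ_three]⟩
  left_inv A := by
    have h := A.2
    rw [Fin.sum_univ_three] at h
    ext r
    fin_cases r <;> simp; lia
  right_inv x := by
    obtain ⟨hre, him⟩ := Eisenstein.isPrimary_iff.1 x.2
    ext <;> simp <;> lia

lemma norm_chargeEquiv {μ : YoungDiagram} (A : {A : Fin 3 → ℤ // ∑ r, A r = 0})
    (h : betaSet μ = abacusSet A.1) : (chargeEquiv A).1.norm = 3 * μ.card + 1 := by
  have hcard := two_mul_card_of_betaSet_eq h
  have hsum := A.2
  simp only [Fin.sum_univ_three] at hcard hsum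
  have h2 : A.1 2 = -A.1 0 - A.1 1 := by lia
  simp only [h2, Fin.val_zero, Fin.val_one, Fin.val_two] at hcard
  rw [Eisenstein.norm_eq]
  simp only [chargeEquiv, Equiv.coe_fn_mk]
  push_cast at hcard
  linarith

/-- Granville and Ono's formula for the number of `3`-cores. -/
theorem a3_eq_twistedSigma (n : ℕ) : (a3 n : ℤ) = twistedSigma 0 (3 * n + 1) := by
  obtain ⟨e, he⟩ := exists_coreEquiv 3
  have hsize (A) : (e A).1.card = n ↔ (chargeEquiv A).1.norm = (3 * n + 1 : ℕ) := by
    rw [norm_chargeEquiv A (he A)]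
    lia
  rw [← Eisenstein.card_primaryOfNorm (by lia)]
  congr 1
  refine Nat.card_congr ?_
  calc {μ : YoungDiagram // μ.card = n ∧ μ.IsThreeCore}
    _ ≃ {μ : YoungDiagram // μ.IsThreeCore ∧ μ.card = n} :=
      Equiv.subtypeEquivRight fun _ => and_comm
    _ ≃ {μ : {μ // IsCore 3 μ} // μ.1.card = n} :=
      (Equiv.subtypeSubtypeEquivSubtypeInter (IsCore 3) (YoungDiagram.card · = n)).symm
    _ ≃ {x : {x : Eisenstein // x.IsPrimary} // x.1.norm = (3 * n + 1 : ℕ)} :=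
      (e.symm.trans chargeEquiv).subtypeEquiv fun μ => by
        simpa using hsize (e.symm μ)
    _ ≃ Eisenstein.primaryOfNorm (3 * n + 1) :=
      Equiv.subtypeSubtypeEquivSubtypeInter _ fun x : Eisenstein => x.norm = (3 * n + 1 : ℕ)

end CoreCount

section DirichletConvolution

open ArithmeticFunction

lemma hasSum_arithmeticFunction_mul {f g : ArithmeticFunction ℤ} {h : ℕ → ℝ}
    (hs : Summable fun x : ℕ × ℕ => (f x.1 : ℝ) * (g x.2 * h (x.1 * x.2))) :
    HasSum (fun N => ((f * g) N : ℝ) * h N) (∑' d, ∑' m, (f d : ℝ) * (g m * h (d * m))) := by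
  rw [← hs.tsum_prod]
  refine (hs.hasSum.tsum_fiberwise fun x => x.1 * x.2).congr_fun fun N => ?_
  rw [tsum_subtype ((fun x : ℕ × ℕ => x.1 * x.2) ⁻¹' {N})
    fun x : ℕ × ℕ => (f x.1 : ℝ) * (g x.2 * h (x.1 * x.2)),
    tsum_eq_sum (s := N.divisorsAntidiagonal), mul_apply]
  · push_cast
    rw [Finset.sum_mul]
    refine Finset.sum_congr rfl fun x hx => ?_
    have hx : x.1 * x.2 = N := (Nat.mem_divisorsAntidiagonal.1 hx).1
    simp [hx, mul_assoc]
  · intro x hx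
    rw [Set.indicator_apply_eq_zero]
    rintro rfl
    obtain h0 | h0 : x.1 = 0 ∨ x.2 = 0 := by simpa [or_iff_not_imp_left] using hx
    all_goals simp [h0]

lemma abs_chiThree_le_one (n : ℕ) : |(chiThree n : ℝ)| ≤ 1 := by
  obtain h | h | h : n % 3 = 0 ∨ n % 3 = 1 ∨ n % 3 = 2 := by lia
  · simp [chiThree_of_mod_eq_zero h]
  · simp [chiThree_of_mod_eq_one h]
  · simp [chiThree_of_mod_eq_two h]

variable {t : ℝ} {h : ℕ → ℝ}

lemma summable_chiThree_mul_pow_mul (ht0 : 0 < t) (ht1 : t < 1) (k : ℕ) (hh : ∀ N, |h N| ≤ t ^ N) :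
    Summable fun x : ℕ × ℕ =>
      (chiThree x.1 : ℝ) * (((pow k : ArithmeticFunction ℤ) x.2 : ℝ) * h (x.1 * x.2)) := by
  have hgeom : Summable fun n : ℕ => t ^ n := summable_geometric_of_lt_one ht0.le ht1
  have hpow : Summable fun n : ℕ => (n : ℝ) ^ k * t ^ n :=
    summable_pow_mul_geometric_of_norm_lt_one k (by rwa [Real.norm_of_nonneg ht0.le])
  refine ((summable_mul_of_summable_norm hgeom.norm hpow.norm).mul_left t⁻¹).of_norm_bounded ?_
  rintro ⟨d, m⟩
  rcases d.eq_zero_or_pos with rfl | hd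
  · simp only [ArithmeticFunction.map_zero, Int.cast_zero, zero_mul, norm_zero]
    positivity
  rcases m.eq_zero_or_pos with rfl | hm
  · simp only [ArithmeticFunction.map_zero, Int.cast_zero, mul_zero, zero_mul, norm_zero]
    positivity
  have hexp : t ^ (d * m) ≤ t⁻¹ * (t ^ d * t ^ m) := by
    rw [← pow_add, ← div_eq_inv_mul, le_div_iff₀ ht0, ← pow_succ]
    exact pow_le_pow_of_le_one ht0.le ht1.le (by nlinarith)
  have hpk : ((pow k : ArithmeticFunction ℤ) m : ℝ) = (m : ℝ) ^ k := by
    simp [pow_apply, hm.ne']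
  rw [Real.norm_eq_abs, abs_mul, abs_mul, hpk, abs_of_nonneg (by positivity : 0 ≤ (m : ℝ) ^ k)]
  calc |(chiThree d : ℝ)| * ((m : ℝ) ^ k * |h (d * m)|)
    _ ≤ 1 * ((m : ℝ) ^ k * (t⁻¹ * (t ^ d * t ^ m))) := by
      gcongr
      exacts [abs_chiThree_le_one d, (hh _).trans hexp]
    _ = t⁻¹ * (t ^ d * ((m : ℝ) ^ k * t ^ m)) := by ring

theorem hasSum_twistedSigma_mul (ht0 : 0 < t) (ht1 : t < 1) (k : ℕ) (hh : ∀ N, |h N| ≤ t ^ N) :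
    HasSum (fun N => (twistedSigma k N : ℝ) * h N)
      (∑' d, (chiThree d : ℝ) *
        ∑' m, ((pow k : ArithmeticFunction ℤ) m : ℝ) * h (d * m)) := by
  simpa only [twistedSigma, tsum_mul_left] using
    hasSum_arithmeticFunction_mul (summable_chiThree_mul_pow_mul ht0 ht1 k hh)

end DirichletConvolution

section Lambert

/-- The fraction `r ^ j / (1 - r ^ 3) ^ i`, whose sum over `r = t ^ (3 * n + 1)`, `n : ℤ`, is a
Lambert series. -/
noncomputable def lambert (j i : ℕ) (r : ℝ) : ℝ := r ^ j / (1 - r ^ 3) ^ i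

lemma lambert_inv {r : ℝ} (hr : r ≠ 0) {i j k : ℕ} (h : j + k = 3 * i) :
    lambert j i r⁻¹ = (-1) ^ i * lambert k i r := by
  have hden : 1 - r⁻¹ ^ 3 = (-1) * (1 - r ^ 3) / r ^ 3 := by
    field_simp
    ring
  have hnum : r⁻¹ ^ j * (r ^ 3) ^ i = r ^ k := by
    rw [← pow_mul, ← h, pow_add, inv_pow, inv_mul_cancel_left₀ (pow_ne_zero j hr)]
  have hsign : ((-1 : ℝ) ^ i)⁻¹ = (-1) ^ i := by rw [← inv_pow, inv_neg_one]
  rw [lambert, lambert, hden, div_pow, mul_pow, div_div_eq_mul_div, hnum, div_mul_eq_div_div,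
    div_eq_mul_inv (r ^ k), hsign, mul_comm (r ^ k), mul_div_assoc]

variable {t : ℝ} {i j : ℕ}

lemma abs_lambert_pow_le (ht0 : 0 < t) (ht1 : t < 1) {d : ℕ} (hd : d ≠ 0) :
    |lambert j i (t ^ d)| ≤ (t ^ j) ^ d / (1 - t) ^ i := by
  have hle : (t ^ d) ^ 3 ≤ t := by
    rw [← pow_mul]
    exact pow_le_of_le_one ht0.le ht1.le (by lia)
  have : 0 < 1 - t := sub_pos.2 ht1
  rw [lambert, ← pow_mul, mul_comm d, pow_mul,
    abs_of_nonneg (div_nonneg (by positivity) (pow_nonneg (by linarith) _))]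
  gcongr

lemma zpow_three_mul_neg_succ_add_one (t : ℝ) (n : ℕ) :
    t ^ (3 * -((n : ℤ) + 1) + 1) = (t ^ (3 * n + 2))⁻¹ := by
  rw [show 3 * -((n : ℤ) + 1) + 1 = -((3 * n + 2 : ℕ) : ℤ) by push_cast; ring, zpow_neg,
    zpow_natCast]

lemma summable_lambert (ht0 : 0 < t) (ht1 : t < 1) (hj : 0 < j) (hji : j < 3 * i) :
    Summable fun n : ℤ => lambert j i (t ^ (3 * n + 1)) := by
  have hgeom {k : ℕ} (hk : 0 < k) {f : ℕ → ℕ} (hf : f.Injective) :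
      Summable fun n => (t ^ k) ^ f n / (1 - t) ^ i :=
    ((summable_geometric_of_lt_one (by positivity)
      (pow_lt_one₀ ht0.le ht1 hk.ne')).comp_injective hf).div_const _
  refine Summable.of_nat_of_neg_add_one ?_ ?_
  · refine (hgeom hj (f := fun n => 3 * n + 1) fun a b h => by lia).of_norm_bounded fun n => ?_
    exact mod_cast abs_lambert_pow_le ht0 ht1 (Nat.succ_ne_zero (3 * n))
  · refine (hgeom (Nat.sub_pos_of_lt hji) (f := fun n => 3 * n + 2)
      fun a b h => by lia).of_norm_bounded fun n => ?_
    rw [zpow_three_mul_neg_succ_add_one, lambert_inv (by positivity) (Nat.add_sub_of_le hji.le),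
      norm_mul, norm_pow, norm_neg, norm_one, one_pow, one_mul]
    exact abs_lambert_pow_le ht0 ht1 (Nat.succ_ne_zero _)

lemma tsum_zpow_three_mul_add_one (F : ℝ → ℝ) (t : ℝ) :
    ∑' n : ℤ, F (t ^ (3 * n + 1)) =
      ∑' d : ℕ, if d % 3 = 1 then F (t ^ d) else if d % 3 = 2 then F (t ^ d)⁻¹ else 0 := by
  have hinj : Function.Injective fun n : ℤ => (3 * n + 1).natAbs := fun a b h => by
    simp only at h
    lia
  rw [← hinj.tsum_eq]
  · refine tsum_congr fun n => ?_
    obtain ⟨k, rfl | rfl⟩ : ∃ k : ℕ, n = k ∨ n = -((k : ℤ) + 1) := by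
      rcases le_or_gt 0 n with h | h
      · exact ⟨n.toNat, Or.inl (by lia)⟩
      · exact ⟨(-n - 1).toNat, Or.inr (by lia)⟩
    · rw [show (3 * (k : ℤ) + 1).natAbs = 3 * k + 1 by lia, if_pos (by lia)]
      exact mod_cast rfl
    · rw [show (3 * -((k : ℤ) + 1) + 1).natAbs = 3 * k + 2 by lia, if_neg (by lia),
        if_pos (by lia), zpow_three_mul_neg_succ_add_one]
  · intro d hd
    obtain h | h | h : d % 3 = 0 ∨ d % 3 = 1 ∨ d % 3 = 2 := by lia
    · simp [h] at hd
    · exact ⟨(d / 3 : ℕ), by lia⟩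
    · exact ⟨-((d / 3 : ℕ) + 1 : ℤ), by lia⟩

lemma hasSum_ite_mod_eq_pow {u : ℝ} (hu : |u| < 1) {c N : ℕ} (hc : c < N) :
    HasSum (fun m : ℕ => if m % N = c then u ^ m else 0) (u ^ c / (1 - u ^ N)) := by
  have hinj : Function.Injective fun k : ℕ => N * k + c := fun a b h =>
    Nat.eq_of_mul_eq_mul_left (Nat.zero_lt_of_lt hc) (Nat.add_right_cancel h)
  rw [← hinj.hasSum_iff]
  · have huN : |u ^ N| < 1 := by
      rw [abs_pow]
      exact pow_lt_one₀ (abs_nonneg u) hu (Nat.ne_zero_of_lt hc)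
    refine ((hasSum_geometric_of_abs_lt_one huN).mul_left (u ^ c)).congr_fun fun k => ?_
    simp [Nat.mod_eq_of_lt hc, pow_add, pow_mul, mul_comm]
  · refine fun m hm => if_neg fun h => hm ⟨m / N, ?_⟩
    simpa [h] using Nat.div_add_mod m N

lemma hasSum_sq_mul_geometric {r : ℝ} (hr : |r| < 1) :
    HasSum (fun m : ℕ => (m : ℝ) ^ 2 * r ^ m) (r * (1 + r) / (1 - r) ^ 3) := by
  have hne : 1 - r ≠ 0 := sub_ne_zero.2 fun h => by simp [← h] at hr
  have hchoose (k : ℕ) := hasSum_choose_mul_geometric_of_norm_lt_one (r := r) k hr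
  have hsum := (((hchoose 2).mul_left 2).sub ((hchoose 1).mul_left 3)).add (hchoose 0)
  have hval : r * (1 + r) / (1 - r) ^ 3 =
      2 * (1 / (1 - r) ^ (2 + 1)) - 3 * (1 / (1 - r) ^ (1 + 1)) + 1 / (1 - r) ^ (0 + 1) := by
    field_simp
    ring
  rw [hval]
  refine hsum.congr_fun fun m => ?_
  rw [Nat.cast_choose_two, Nat.choose_one_right, Nat.choose_zero_right]
  push_cast
  ring

lemma abs_pow_lt_one (ht0 : 0 < t) (ht1 : t < 1) {d : ℕ} (hd : d ≠ 0) : |t ^ d| < 1 := by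
  rw [abs_of_pos (by positivity)]
  exact pow_lt_one₀ ht0.le ht1 hd

lemma chiThree_mul_tsum_ite_mod_three (ht0 : 0 < t) (ht1 : t < 1) {c : ℕ} (hc0 : 0 < c)
    (hc3 : c < 3) (d : ℕ) :
    (chiThree d : ℝ) * ∑' m, ((ArithmeticFunction.pow 0 : ArithmeticFunction ℤ) m : ℝ) *
        (if d * m % 3 = c then t ^ (d * m) else 0) =
      if d % 3 = 1 then lambert c 1 (t ^ d) else
        if d % 3 = 2 then lambert c 1 (t ^ d)⁻¹ else 0 := by
  have hterm {e : ℕ} (he : ∀ m, d * m % 3 = c ↔ m % 3 = e) (m : ℕ) :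
      ((ArithmeticFunction.pow 0 : ArithmeticFunction ℤ) m : ℝ) *
        (if d * m % 3 = c then t ^ (d * m) else 0) = if m % 3 = e then (t ^ d) ^ m else 0 := by
    rcases eq_or_ne m 0 with rfl | hm
    · rw [ArithmeticFunction.map_zero, Int.cast_zero, zero_mul, if_neg]
      rw [← he, mul_zero]
      lia
    · simp [he, hm, pow_mul, ArithmeticFunction.pow_apply]
  obtain h | h | h : d % 3 = 0 ∨ d % 3 = 1 ∨ d % 3 = 2 := by lia
  · simp [chiThree_of_mod_eq_zero h, h]
  · have hu := abs_pow_lt_one ht0 ht1 (d := d) (by lia)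
    rw [tsum_congr (hterm (e := c) fun m => by rw [Nat.mul_mod, h]; lia),
      (hasSum_ite_mod_eq_pow hu hc3).tsum_eq, chiThree_of_mod_eq_one h, if_pos h, lambert]
    simp
  · have hu := abs_pow_lt_one ht0 ht1 (d := d) (by lia)
    rw [tsum_congr (hterm (e := 3 - c) fun m => by rw [Nat.mul_mod, h]; lia),
      (hasSum_ite_mod_eq_pow hu (by lia)).tsum_eq, chiThree_of_mod_eq_two h, if_neg (by lia),
      if_pos h, lambert_inv (by positivity) (k := 3 - c) (by lia), lambert]
    simp

theorem hasSum_twistedSigma_zero_ite_mod_three (ht0 : 0 < t) (ht1 : t < 1) {c : ℕ} (hc0 : 0 < c)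
    (hc3 : c < 3) :
    HasSum (fun N => (twistedSigma 0 N : ℝ) * if N % 3 = c then t ^ N else 0)
      (∑' n : ℤ, lambert c 1 (t ^ (3 * n + 1))) := by
  rw [tsum_zpow_three_mul_add_one]
  simp_rw [← chiThree_mul_tsum_ite_mod_three ht0 ht1 hc0 hc3]
  refine hasSum_twistedSigma_mul ht0 ht1 0 fun N => ?_
  split_ifs
  · rw [abs_of_pos (by positivity)]
  · rw [abs_zero]
    positivity

lemma chiThree_mul_tsum_sq (ht0 : 0 < t) (ht1 : t < 1) (d : ℕ) :
    (chiThree d : ℝ) * ∑' m, ((ArithmeticFunction.pow 2 : ArithmeticFunction ℤ) m : ℝ) *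
        (t ^ 3) ^ (d * m) =
      if d % 3 = 1 then lambert 3 3 (t ^ d) + lambert 6 3 (t ^ d) else
        if d % 3 = 2 then lambert 3 3 (t ^ d)⁻¹ + lambert 6 3 (t ^ d)⁻¹ else 0 := by
  obtain h | hd : d % 3 = 0 ∨ d % 3 ≠ 0 := eq_or_ne _ _
  · simp [chiThree_of_mod_eq_zero h, h]
  have hsum : ∑' m, ((ArithmeticFunction.pow 2 : ArithmeticFunction ℤ) m : ℝ) * (t ^ 3) ^ (d * m) =
      lambert 3 3 (t ^ d) + lambert 6 3 (t ^ d) := by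
    have hu : |(t ^ d) ^ 3| < 1 := by
      rw [← pow_mul]
      exact abs_pow_lt_one ht0 ht1 (by lia)
    rw [lambert, lambert, ← add_div, show (t ^ d) ^ 3 + (t ^ d) ^ 6 =
      (t ^ d) ^ 3 * (1 + (t ^ d) ^ 3) by ring, ← (hasSum_sq_mul_geometric hu).tsum_eq]
    refine tsum_congr fun m => ?_
    rw [pow_mul, pow_right_comm t 3 d]
    simp [ArithmeticFunction.pow_apply]
  obtain h | h : d % 3 = 1 ∨ d % 3 = 2 := by lia
  · rw [hsum, chiThree_of_mod_eq_one h, if_pos h, Int.cast_one, one_mul]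
  · rw [hsum, chiThree_of_mod_eq_two h, if_neg (by lia), if_pos h,
      lambert_inv (by positivity) (show 3 + 6 = 3 * 3 from rfl),
      lambert_inv (by positivity) (show 6 + 3 = 3 * 3 from rfl)]
    push_cast
    ring

theorem hasSum_twistedSigma_two (ht0 : 0 < t) (ht1 : t < 1) :
    HasSum (fun N => (twistedSigma 2 N : ℝ) * (t ^ 3) ^ N)
      (∑' n : ℤ, (lambert 3 3 (t ^ (3 * n + 1)) + lambert 6 3 (t ^ (3 * n + 1)))) := by
  rw [tsum_zpow_three_mul_add_one fun r => lambert 3 3 r + lambert 6 3 r]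
  simp_rw [← chiThree_mul_tsum_sq ht0 ht1]
  exact hasSum_twistedSigma_mul (by positivity) (pow_lt_one₀ ht0.le ht1 three_ne_zero) 2
    fun N => (abs_of_pos (by positivity)).le

lemma twistedSigma_zero_of_mod_three_eq_two {N : ℕ} (hN : N % 3 = 2) : twistedSigma 0 N = 0 := by
  have hpow {x : ℕ × ℕ} (hx : x ∈ N.divisorsAntidiagonal) :
      (ArithmeticFunction.pow 0 : ArithmeticFunction ℤ) x.2 = 1 := by
    simp [ArithmeticFunction.pow_apply, (Nat.ne_zero_of_mem_divisorsAntidiagonal hx).2]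
  have hsum : twistedSigma 0 N = ∑ x ∈ N.divisorsAntidiagonal, chiThree x.1 := by
    rw [twistedSigma, ArithmeticFunction.mul_apply]
    exact Finset.sum_congr rfl fun x hx => by rw [hpow hx, mul_one]
  have hswap : ∑ x ∈ N.divisorsAntidiagonal, chiThree x.1 =
      ∑ x ∈ N.divisorsAntidiagonal, -chiThree x.1 := by
    nth_rw 1 [← Nat.map_swap_divisorsAntidiagonal]
    rw [Finset.sum_map]
    refine Finset.sum_congr rfl fun x hx => ?_
    have hx : x.1 * x.2 % 3 = 2 := by rw [(Nat.mem_divisorsAntidiagonal.1 hx).1, hN]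
    obtain ⟨h1, h2⟩ | ⟨h1, h2⟩ : x.1 % 3 = 1 ∧ x.2 % 3 = 2 ∨ x.1 % 3 = 2 ∧ x.2 % 3 = 1 := by
      rw [Nat.mul_mod] at hx
      have : x.1 % 3 < 3 := Nat.mod_lt _ three_pos
      have : x.2 % 3 < 3 := Nat.mod_lt _ three_pos
      interval_cases x.1 % 3 <;> interval_cases x.2 % 3 <;> simp_all
    all_goals simp [chiThree_of_mod_eq_one, chiThree_of_mod_eq_two, h1, h2]
  rw [Finset.sum_neg_distrib] at hswap
  lia

lemma tsum_lambert_two_one (ht0 : 0 < t) (ht1 : t < 1) :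
    ∑' n : ℤ, lambert 2 1 (t ^ (3 * n + 1)) = 0 := by
  rw [← (hasSum_twistedSigma_zero_ite_mod_three ht0 ht1 two_pos (by lia)).tsum_eq]
  refine (tsum_congr fun N => ?_).trans tsum_zero
  split_ifs with h
  · rw [twistedSigma_zero_of_mod_three_eq_two h, Int.cast_zero, zero_mul]
  · exact mul_zero _

lemma lambert_mul_lambert_self (j i j' i' : ℕ) (r : ℝ) :
    lambert j i r * lambert j' i' r = lambert (j + j') (i + i') r := by
  rw [lambert, lambert, lambert, div_mul_div_comm, ← pow_add, ← pow_add]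

lemma lambert_mul_lambert {r y : ℝ} (hr : 1 - r ^ 3 ≠ 0) (hry : 1 - (r * y) ^ 3 ≠ 0)
    (hy : 1 - y ^ 3 ≠ 0) :
    lambert 1 1 r * lambert 1 1 (r * y) =
      y / (1 - y ^ 3) * lambert 2 1 r - y ^ 2 / (1 - y ^ 3) * lambert 2 1 (r * y) := by
  rw [mul_pow] at hry
  simp only [lambert, mul_pow]
  field_simp
  ring

lemma lambert_mul_lambert_add {r y : ℝ} (hr : 1 - r ^ 3 ≠ 0) (hry : 1 - (r * y) ^ 3 ≠ 0)
    (hy : 1 - y ^ 3 ≠ 0) :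
    lambert 1 1 r * lambert 2 2 (r * y) + lambert 4 2 r * lambert 2 1 (r * y) =
      y ^ 2 / (1 - y ^ 3) * lambert 3 2 r - y ^ 2 / (1 - y ^ 3) * lambert 3 2 (r * y) := by
  rw [mul_pow] at hry
  simp only [lambert, mul_pow]
  field_simp
  ring

lemma tsum_prod_eq_tsum_diag {G : Type*} [AddCommGroup G] {v : G × G → ℝ} (hv : Summable v)
    (h : ∀ k ≠ 0, ∑' n, v (n, n + k) = 0) : ∑' x, v x = ∑' n, v (n, n) := by
  let shear : G × G ≃ G × G :=
    (Equiv.prodComm G G).trans (Equiv.prodShear (Equiv.refl G) Equiv.addLeft)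
  have hshear (k n : G) : shear (k, n) = (n, n + k) := rfl
  have hv' : Summable fun x => v (shear x) := shear.summable_iff.2 hv
  rw [← shear.tsum_eq v, hv'.tsum_prod, tsum_eq_single 0]
  · simp [hshear]
  · simpa only [hshear] using h

lemma one_sub_zpow_pow_three_ne_zero (ht0 : 0 < t) (ht1 : t < 1) {k : ℤ} (hk : k ≠ 0) :
    1 - (t ^ k) ^ 3 ≠ 0 := by
  rw [sub_ne_zero, ne_comm, Ne, pow_eq_one_iff_of_nonneg (by positivity) three_ne_zero]
  exact fun h => hk ((zpow_eq_one_iff_right₀ ht0.le ht1.ne).1 h)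

lemma zpow_three_mul_add_add_one (ht0 : 0 < t) (n k : ℤ) :
    t ^ (3 * (n + k) + 1) = t ^ (3 * n + 1) * t ^ (3 * k) := by
  rw [← zpow_add₀ ht0.ne']
  ring_nf

lemma tsum_mul_sub_mul_shift {F : ℝ → ℝ} (hF : Summable fun n : ℤ => F (t ^ (3 * n + 1)))
    (ht0 : 0 < t) (a b : ℝ) (k : ℤ) :
    ∑' n : ℤ, (a * F (t ^ (3 * n + 1)) - b * F (t ^ (3 * n + 1) * t ^ (3 * k))) =
      (a - b) * ∑' n : ℤ, F (t ^ (3 * n + 1)) := by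
  simp only [← zpow_three_mul_add_add_one ht0]
  have hshift : Summable fun n : ℤ => F (t ^ (3 * (n + k) + 1)) :=
    hF.comp_injective (add_left_injective k)
  have hval : ∑' n : ℤ, F (t ^ (3 * (n + k) + 1)) = ∑' n : ℤ, F (t ^ (3 * n + 1)) :=
    (Equiv.addRight k).tsum_eq fun n : ℤ => F (t ^ (3 * n + 1))
  rw [(hF.mul_left a).tsum_sub (hshift.mul_left b), tsum_mul_left, tsum_mul_left, hval, sub_mul]

theorem tsum_lambert_sq (ht0 : 0 < t) (ht1 : t < 1) :
    (∑' n : ℤ, lambert 1 1 (t ^ (3 * n + 1))) ^ 2 = ∑' n : ℤ, lambert 2 2 (t ^ (3 * n + 1)) := by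
  have h11 := (summable_lambert (j := 1) (i := 1) ht0 ht1 (by lia) (by lia)).norm
  rw [sq, tsum_mul_tsum_of_summable_norm h11 h11,
    tsum_prod_eq_tsum_diag (summable_mul_of_summable_norm h11 h11)]
  · simp only [lambert_mul_lambert_self, Nat.reduceAdd]
  · intro k hk
    simp only [zpow_three_mul_add_add_one ht0]
    have hsplit (n : ℤ) := lambert_mul_lambert (r := t ^ (3 * n + 1)) (y := t ^ (3 * k))
      (one_sub_zpow_pow_three_ne_zero ht0 ht1 (by lia))
      (zpow_three_mul_add_add_one ht0 n k ▸ one_sub_zpow_pow_three_ne_zero ht0 ht1 (by lia))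
      (one_sub_zpow_pow_three_ne_zero ht0 ht1 (by lia))
    rw [tsum_congr hsplit,
      tsum_mul_sub_mul_shift (summable_lambert ht0 ht1 (by lia) (by lia)) ht0,
      tsum_lambert_two_one ht0 ht1, mul_zero]

theorem tsum_lambert_cube (ht0 : 0 < t) (ht1 : t < 1) :
    (∑' n : ℤ, lambert 1 1 (t ^ (3 * n + 1))) ^ 3 =
      ∑' n : ℤ, (lambert 3 3 (t ^ (3 * n + 1)) + lambert 6 3 (t ^ (3 * n + 1))) := by
  have hs {i j : ℕ} (hj : 0 < j) (hji : j < 3 * i) := (summable_lambert ht0 ht1 hj hji).norm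
  have h11 := hs (i := 1) (j := 1) (by lia) (by lia)
  have h22 := hs (i := 2) (j := 2) (by lia) (by lia)
  have h42 := hs (i := 2) (j := 4) (by lia) (by lia)
  have h21 := hs (i := 1) (j := 2) (by lia) (by lia)
  have hprod := summable_mul_of_summable_norm h11 h22
  have hprod' := summable_mul_of_summable_norm h42 h21
  -- The second product sums to zero; adding it makes the off-diagonal terms telescope.
  have hcube : (∑' n : ℤ, lambert 1 1 (t ^ (3 * n + 1))) ^ 3 = ∑' x : ℤ × ℤ,
      (lambert 1 1 (t ^ (3 * x.1 + 1)) * lambert 2 2 (t ^ (3 * x.2 + 1)) +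
        lambert 4 2 (t ^ (3 * x.1 + 1)) * lambert 2 1 (t ^ (3 * x.2 + 1))) := by
    rw [hprod.tsum_add hprod', ← tsum_mul_tsum_of_summable_norm h11 h22,
      ← tsum_mul_tsum_of_summable_norm h42 h21, tsum_lambert_two_one ht0 ht1,
      ← tsum_lambert_sq ht0 ht1]
    ring
  rw [hcube, tsum_prod_eq_tsum_diag (hprod.add hprod')]
  · simp only [lambert_mul_lambert_self, Nat.reduceAdd]
  · intro k hk
    simp only [zpow_three_mul_add_add_one ht0]
    have hsplit (n : ℤ) := lambert_mul_lambert_add (r := t ^ (3 * n + 1)) (y := t ^ (3 * k))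
      (one_sub_zpow_pow_three_ne_zero ht0 ht1 (by lia))
      (zpow_three_mul_add_add_one ht0 n k ▸ one_sub_zpow_pow_three_ne_zero ht0 ht1 (by lia))
      (one_sub_zpow_pow_three_ne_zero ht0 ht1 (by lia))
    rw [tsum_congr hsplit,
      tsum_mul_sub_mul_shift (summable_lambert ht0 ht1 (by lia) (by lia)) ht0, sub_self, zero_mul]

end Lambert

section Counting

open Finset.HasAntidiagonal (antidiagonal mem_antidiagonal)

lemma cells_subset_range_product_range (μ : YoungDiagram) :
    μ.cells ⊆ Finset.range μ.card ×ˢ Finset.range μ.card := by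
  rintro ⟨i, j⟩ hij
  have hcol : μ.colLen j ≤ μ.card := μ.colLen_eq_card ▸ Finset.card_filter_le _ _
  have hrow : μ.rowLen i ≤ μ.card := μ.rowLen_eq_card ▸ Finset.card_filter_le _ _
  rw [YoungDiagram.mem_cells] at hij
  simpa using ⟨(YoungDiagram.mem_iff_lt_colLen.1 hij).trans_le hcol,
    (YoungDiagram.mem_iff_lt_rowLen.1 hij).trans_le hrow⟩

lemma finite_card_eq (n : ℕ) : {μ : YoungDiagram | μ.card = n}.Finite := by
  refine Set.Finite.of_injOn (f := YoungDiagram.cells)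
    (t := ((Finset.range n ×ˢ Finset.range n).powerset : Set (Finset (ℕ × ℕ)))) ?_
    (fun μ _ ν _ h => YoungDiagram.ext h) (Finset.finite_toSet _)
  rintro μ rfl
  exact Finset.mem_coe.2 (Finset.mem_powerset.2 (cells_subset_range_product_range μ))

/-- The size of a 3-core, as a weight on the subtype of 3-cores: `a3` and `B3` count the fibres of
this weight and of its threefold sum. -/
def coreSize (c : {μ : YoungDiagram // μ.IsThreeCore}) : ℕ := c.1.card

lemma a3_eq_card_coreSize (n : ℕ) : a3 n = Nat.card {c // coreSize c = n} :=
  Nat.card_congr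
    { toFun μ := ⟨⟨μ.1, μ.2.2⟩, μ.2.1⟩
      invFun c := ⟨c.1.1, c.2, c.1.2⟩ }

instance (n : ℕ) : Finite {c // coreSize c = n} :=
  have := (finite_card_eq n).to_subtype
  Finite.of_injective (fun c => (⟨c.1.1, c.2⟩ : {μ : YoungDiagram | μ.card = n}))
    fun _ _ h => Subtype.ext (Subtype.ext (Subtype.mk.inj h))

lemma B3_eq_card_coreSize (n : ℕ) :
    B3 n = Nat.card {x : _ × _ × _ // coreSize x.1 + (coreSize x.2.1 + coreSize x.2.2) = n} :=
  Nat.card_congr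
    { toFun p := ⟨(⟨p.1.1, p.2.2.1⟩, ⟨p.1.2.1, p.2.2.2.1⟩, ⟨p.1.2.2, p.2.2.2.2⟩),
        (add_assoc _ _ _).symm.trans p.2.1⟩
      invFun x := ⟨(x.1.1.1, x.1.2.1.1, x.1.2.2.1),
        (add_assoc _ _ _).trans x.2, x.1.1.2, x.1.2.1.2, x.1.2.2.2⟩ }

/-- A pair of total weight `n`, split according to the weights of its two components. -/
def prodAddEquiv {α β : Type*} (f : α → ℕ) (g : β → ℕ) (n : ℕ) :
    {x : α × β // f x.1 + g x.2 = n} ≃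
      (k : antidiagonal n) × {a // f a = k.1.1} × {b // g b = k.1.2} where
  toFun x := ⟨⟨(f x.1.1, g x.1.2), mem_antidiagonal.2 x.2⟩, ⟨x.1.1, rfl⟩, ⟨x.1.2, rfl⟩⟩
  invFun y := ⟨(y.2.1.1, y.2.2.1), by
    rw [y.2.1.2, y.2.2.2, mem_antidiagonal.1 y.1.2]⟩
  right_inv := by
    rintro ⟨⟨⟨i, j⟩, _⟩, ⟨a, ha⟩, ⟨b, hb⟩⟩
    obtain rfl : f a = i := ha
    obtain rfl : g b = j := hb
    rfl

lemma card_prod_add_eq {α β : Type*} (f : α → ℕ) (g : β → ℕ) [∀ n, Finite {a // f a = n}]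
    [∀ n, Finite {b // g b = n}] (n : ℕ) :
    Nat.card {x : α × β // f x.1 + g x.2 = n} =
      ∑ k ∈ antidiagonal n,
        Nat.card {a // f a = k.1} * Nat.card {b // g b = k.2} := by
  rw [Nat.card_congr (prodAddEquiv f g n), Nat.card_sigma]
  simp only [Nat.card_prod]
  exact Finset.sum_coe_sort _ fun k : ℕ × ℕ => Nat.card {a // f a = k.1} * Nat.card {b // g b = k.2}

instance finite_prod_add_eq {α β : Type*} (f : α → ℕ) (g : β → ℕ) [∀ n, Finite {a // f a = n}]
    [∀ n, Finite {b // g b = n}] (n : ℕ) : Finite {x : α × β // f x.1 + g x.2 = n} :=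
  Finite.of_equiv _ (prodAddEquiv f g n).symm

theorem B3_eq_sum_antidiagonal (n : ℕ) :
    B3 n = ∑ i ∈ antidiagonal n, a3 i.1 *
      ∑ j ∈ antidiagonal i.2, a3 j.1 * a3 j.2 := by
  simp only [a3_eq_card_coreSize, ← card_prod_add_eq, B3_eq_card_coreSize]

end Counting

section GeneratingFunctions

open Filter Topology
open Finset.HasAntidiagonal (antidiagonal mem_antidiagonal)

lemma eq_zero_of_hasSum_mul_pow_zero {d : ℕ → ℝ}
    (hd : ∀ q : ℝ, 0 < q → q < 1 → HasSum (fun n => d n * q ^ n) 0) : d = 0 := by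
  let p := FormalMultilinearSeries.ofScalars ℝ d
  have hradius : 0 < p.radius := by
    refine (ENNReal.coe_pos.2 (by norm_num : (0 : NNReal) < 1 / 2)).trans_le
      (p.le_radius_of_summable ?_)
    refine (hd (1 / 2) (by norm_num) (by norm_num)).summable.norm.congr fun n => ?_
    simp [p]
  have hp := (p.hasFPowerSeriesOnBall hradius).hasFPowerSeriesAt
  have hright : ∀ᶠ q in 𝓝[>] (0 : ℝ), p.sum q = 0 := by
    filter_upwards [Ioo_mem_nhdsGT one_pos] with q hq
    rw [← (hd q hq.1 hq.2).tsum_eq]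
    exact tsum_congr fun n => by simp [p, mul_comm]
  have hfreq : ∃ᶠ q in 𝓝[≠] (0 : ℝ), p.sum q = 0 :=
    hright.frequently.filter_mono (nhdsWithin_mono 0 fun _ h => ne_of_gt h)
  exact (FormalMultilinearSeries.ofScalars_series_eq_zero ..).1
    (hp.eq_zero_of_eventually (hp.analyticAt.frequently_zero_iff_eventually_zero.1 hfreq))

lemma hasSum_sum_antidiagonal_mul_pow {u v : ℕ → ℝ} {q U V : ℝ}
    (hu : HasSum (fun n => u n * q ^ n) U) (hv : HasSum (fun n => v n * q ^ n) V) :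
    HasSum (fun n => (∑ k ∈ antidiagonal n, u k.1 * v k.2) * q ^ n) (U * V) := by
  have hterm (n : ℕ) : ∑ k ∈ antidiagonal n, u k.1 * q ^ k.1 * (v k.2 * q ^ k.2) =
      (∑ k ∈ antidiagonal n, u k.1 * v k.2) * q ^ n := by
    rw [Finset.sum_mul]
    refine Finset.sum_congr rfl fun k hk => ?_
    rw [← mem_antidiagonal.1 hk, pow_add, mul_mul_mul_comm]
  have hsum := summable_norm_sum_mul_antidiagonal_of_summable_norm hu.summable.norm hv.summable.norm
  rw [← hu.tsum_eq, ← hv.tsum_eq,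
    tsum_mul_tsum_eq_tsum_sum_antidiagonal_of_summable_norm hu.summable.norm hv.summable.norm]
  simpa only [hterm] using hsum.of_norm.hasSum

variable {t : ℝ}

theorem hasSum_a3_mul_pow (ht0 : 0 < t) (ht1 : t < 1) :
    HasSum (fun n => (a3 n : ℝ) * (t ^ 3) ^ n) (t⁻¹ * ∑' n : ℤ, lambert 1 1 (t ^ (3 * n + 1))) := by
  have hinj : Function.Injective fun n : ℕ => 3 * n + 1 := fun m n h => by simpa using h
  have hsupp : ∀ N ∉ Set.range fun n : ℕ => 3 * n + 1,
      ((twistedSigma 0 N : ℝ) * if N % 3 = 1 then t ^ N else 0) = 0 := fun N hN => by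
    rw [if_neg fun h => hN ⟨N / 3, by dsimp only; lia⟩, mul_zero]
  have h := (hinj.hasSum_iff hsupp).2
    (hasSum_twistedSigma_zero_ite_mod_three ht0 ht1 one_pos (by norm_num))
  refine (h.mul_left t⁻¹).congr_fun fun n => ?_
  have ha3 : (a3 n : ℝ) = twistedSigma 0 (3 * n + 1) := mod_cast a3_eq_twistedSigma n
  have hmod : (3 * n + 1) % 3 = 1 := by lia
  rw [Function.comp_apply, if_pos hmod, ha3, ← pow_mul, pow_succ]
  field_simp

theorem hasSum_B3_mul_pow (ht0 : 0 < t) (ht1 : t < 1) :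
    HasSum (fun n => (B3 n : ℝ) * (t ^ 3) ^ n)
      ((t ^ 3)⁻¹ * ∑' n : ℤ, (lambert 3 3 (t ^ (3 * n + 1)) + lambert 6 3 (t ^ (3 * n + 1)))) := by
  have ha3 := hasSum_a3_mul_pow ht0 ht1
  have h := hasSum_sum_antidiagonal_mul_pow ha3 (hasSum_sum_antidiagonal_mul_pow ha3 ha3)
  simp only [B3_eq_sum_antidiagonal]
  push_cast
  convert h using 1
  rw [← tsum_lambert_cube ht0 ht1]
  ring

theorem hasSum_twistedSigma_two_succ (ht0 : 0 < t) (ht1 : t < 1) :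
    HasSum (fun n => (twistedSigma 2 (n + 1) : ℝ) * (t ^ 3) ^ n)
      ((t ^ 3)⁻¹ * ∑' n : ℤ, (lambert 3 3 (t ^ (3 * n + 1)) + lambert 6 3 (t ^ (3 * n + 1)))) := by
  have h := (hasSum_nat_add_iff' 1).2 (hasSum_twistedSigma_two ht0 ht1)
  simp only [Finset.sum_range_one, ArithmeticFunction.map_zero, Int.cast_zero, zero_mul,
    sub_zero] at h
  refine (h.mul_left (t ^ 3)⁻¹).congr_fun fun n => ?_
  rw [pow_succ (t ^ 3)]
  field_simp

theorem B3_eq_twistedSigma (n : ℕ) : (B3 n : ℤ) = twistedSigma 2 (n + 1) := by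
  have hroot {q : ℝ} (hq0 : 0 < q) (hq1 : q < 1) : ∃ t : ℝ, 0 < t ∧ t < 1 ∧ t ^ 3 = q :=
    ⟨q ^ (1 / 3 : ℝ), by positivity, Real.rpow_lt_one hq0.le hq1 (by norm_num), by
      rw [← Real.rpow_mul_natCast hq0.le]; norm_num⟩
  have h : (fun n => (B3 n : ℝ)) = fun n => (twistedSigma 2 (n + 1) : ℝ) := by
    refine sub_eq_zero.1 (eq_zero_of_hasSum_mul_pow_zero fun q hq0 hq1 => ?_)
    obtain ⟨t, ht0, ht1, rfl⟩ := hroot hq0 hq1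
    simpa [sub_mul] using (hasSum_B3_mul_pow ht0 ht1).sub (hasSum_twistedSigma_two_succ ht0 ht1)
  exact_mod_cast congrFun h n

end GeneratingFunctions

section PrimeFactorization

open ArithmeticFunction

variable {ι κ : Type*} [Fintype ι] [Fintype κ] {p e : ι → ℕ} {q f : κ → ℕ} {r : ℕ}

lemma twistedSigma_three_pow (k m : ℕ) : twistedSigma k (3 ^ m) = 3 ^ (k * m) := by
  have h := twistedSigma_prime_pow_mul Nat.prime_three k m
  rw [chiThree_of_mod_eq_zero (Nat.mod_self 3), sub_zero, zero_pow m.succ_ne_zero, sub_zero,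
    pow_succ, ← pow_mul] at h
  exact mul_right_cancel₀ (by positivity) h

lemma twistedSigma_two_prime_pow_of_mod_eq_one (hr : r.Prime) (hr3 : r % 3 = 1) (m : ℕ) :
    twistedSigma 2 (r ^ m) * ((r : ℤ) ^ 2 - 1) = (r : ℤ) ^ (2 * (m + 1)) - 1 := by
  simpa [chiThree_of_mod_eq_one hr3, pow_mul] using twistedSigma_prime_pow_mul hr 2 m

lemma twistedSigma_two_prime_pow_of_mod_eq_two (hr : r.Prime) (hr3 : r % 3 = 2) (m : ℕ) :
    twistedSigma 2 (r ^ m) * ((r : ℤ) ^ 2 + 1) = (r : ℤ) ^ (2 * m + 2) + (-1) ^ m := by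
  have h := twistedSigma_prime_pow_mul hr 2 m
  rw [chiThree_of_mod_eq_two hr3] at h
  linear_combination h

lemma map_prod_prime_pow {g : ArithmeticFunction ℤ} (hg : g.IsMultiplicative)
    (hp : ∀ i, (p i).Prime) (hinj : p.Injective) :
    g (∏ i, p i ^ e i) = ∏ i, g (p i ^ e i) :=
  hg.map_prod _ _ fun i _ j _ hij =>
    Nat.coprime_pow_primes _ _ (hp i) (hp j) (hinj.ne hij)

lemma coprime_pow_prod_prime_pow (hr : r.Prime) (hq : ∀ j, (q j).Prime) (hne : ∀ j, r ≠ q j)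
    (m : ℕ) : (r ^ m).Coprime (∏ j, q j ^ f j) :=
  Nat.Coprime.prod_right fun j _ => Nat.coprime_pow_primes _ _ hr (hq j) (hne j)

lemma twistedSigma_three_pow_mul_prod_mul_prod (k a : ℕ)
    (hp : ∀ i, (p i).Prime) (hp3 : ∀ i, p i % 3 = 1) (hpinj : p.Injective)
    (hq : ∀ j, (q j).Prime) (hq3 : ∀ j, q j % 3 = 2) (hqinj : q.Injective) :
    twistedSigma k (3 ^ a * (∏ i, p i ^ e i) * ∏ j, q j ^ f j) =
      3 ^ (k * a) * (∏ i, twistedSigma k (p i ^ e i)) * ∏ j, twistedSigma k (q j ^ f j) := by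
  have hmul := isMultiplicative_twistedSigma k
  have h3p : (3 ^ a).Coprime (∏ i, p i ^ e i) :=
    coprime_pow_prod_prime_pow Nat.prime_three hp (fun i h => by grind) a
  have h3q : (3 ^ a).Coprime (∏ j, q j ^ f j) :=
    coprime_pow_prod_prime_pow Nat.prime_three hq (fun j h => by grind) a
  have hpq : (∏ i, p i ^ e i).Coprime (∏ j, q j ^ f j) := Nat.Coprime.prod_left fun i _ =>
    coprime_pow_prod_prime_pow (hp i) hq (fun j h => by grind) (e i)
  rw [hmul.map_mul_of_coprime (h3q.mul_left hpq), hmul.map_mul_of_coprime h3p,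
    twistedSigma_three_pow, map_prod_prime_pow hmul hp hpinj, map_prod_prime_pow hmul hq hqinj]

end PrimeFactorization

end ThreeCores

open ThreeCores

/-- If n+1 = 3^a · ∏ pᵢ^{aᵢ} · ∏ qⱼ^{bⱼ} is the prime factorization of n+1 with
pᵢ ≡ 1 (mod 3) and qⱼ ≡ 2 (mod 3), then
B₃(n)·∏(pᵢ²−1)·∏(qⱼ²+1) = 3^{2a}·∏(pᵢ^{2(aᵢ+1)}−1)·∏(qⱼ^{2bⱼ+2}+(−1)^{bⱼ}). -/
theorem B3_explicit (n a s t : ℕ) (p : Fin s → ℕ) (pa : Fin s → ℕ)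
    (q : Fin t → ℕ) (qb : Fin t → ℕ)
    (hp : ∀ i, (p i).Prime) (hp3 : ∀ i, p i % 3 = 1) (hpinj : Function.Injective p)
    (hpa : ∀ i, 1 ≤ pa i)
    (hq : ∀ j, (q j).Prime) (hq3 : ∀ j, q j % 3 = 2) (hqinj : Function.Injective q)
    (hqb : ∀ j, 1 ≤ qb j)
    (hfac : n + 1 = 3 ^ a * (∏ i, p i ^ pa i) * ∏ j, q j ^ qb j) :
    (B3 n : ℤ) * (∏ i, ((p i : ℤ) ^ 2 - 1)) * (∏ j, ((q j : ℤ) ^ 2 + 1)) =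
      3 ^ (2 * a) * (∏ i, ((p i : ℤ) ^ (2 * (pa i + 1)) - 1)) *
        ∏ j, ((q j : ℤ) ^ (2 * qb j + 2) + (-1) ^ qb j) := by
  have hpfac : ∏ i, ((p i : ℤ) ^ (2 * (pa i + 1)) - 1) =
      (∏ i, twistedSigma 2 (p i ^ pa i)) * ∏ i, ((p i : ℤ) ^ 2 - 1) := by
    rw [← Finset.prod_mul_distrib]
    exact Finset.prod_congr rfl fun i _ =>
      (twistedSigma_two_prime_pow_of_mod_eq_one (hp i) (hp3 i) (pa i)).symm
  have hqfac : ∏ j, ((q j : ℤ) ^ (2 * qb j + 2) + (-1) ^ qb j) =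
      (∏ j, twistedSigma 2 (q j ^ qb j)) * ∏ j, ((q j : ℤ) ^ 2 + 1) := by
    rw [← Finset.prod_mul_distrib]
    exact Finset.prod_congr rfl fun j _ =>
      (twistedSigma_two_prime_pow_of_mod_eq_two (hq j) (hq3 j) (qb j)).symm
  rw [B3_eq_twistedSigma, hfac,
    twistedSigma_three_pow_mul_prod_mul_prod 2 a hp hp3 hpinj hq hq3 hqinj, hpfac, hqfac]
  ring
end
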